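/- Generalized Margulis Lemma for packed GCB-spaces (Corollary 2.7): Given real numbers P0, r0 > 0 there exists ε0 > 0, depending only on P0 and r0, such that for every GCB-space (X,σ) which is P0-packed at scale r0, every discrete group Γ of isometries of X, and every x ∈ X, one has nilrad(Γ,x) ≥ ε0; that is, for every r < ε0 the subgroup Γ_r(x) generated by {g ∈ Γ : d(x, g x) ≤ r} is virtually nilpotent. -/

import Mathlib

open Metric Filter

/-- Four-points condition for `δ`-hyperbolicity. -/
def IsDeltaHyperbolic (X : Type*) [MetricSpace X] (δ : ℝ) : Prop :=
  ∀ x y z w : X,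
    dist x y + dist z w ≤ max (dist x z + dist y w) (dist x w + dist y z) + 2 * δ

/-- `X` is `P₀`-packed at scale `r₀`: any subset of a closed ball of radius `3r₀` whose
points are pairwise at distance `> 2r₀` has cardinality at most `P₀`. -/
def IsPacked (X : Type*) [MetricSpace X] (P₀ r₀ : ℝ) : Prop :=
  ∀ x : X, ∀ S : Finset X, (↑S ⊆ closedBall x (3 * r₀)) →
    (∀ a ∈ S, ∀ b ∈ S, a ≠ b → 2 * r₀ < dist a b) → (S.card : ℝ) ≤ P₀

/-- A geodesically complete, convex, consistent, reversible geodesic bicombing on `X`.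
Together with completeness of `X` this is the notion of GCB-space. -/
structure IsGCB {X : Type*} [MetricSpace X] (σ : X → X → ℝ → X) : Prop where
  source : ∀ x y : X, σ x y 0 = x
  target : ∀ x y : X, σ x y 1 = y
  geodesic : ∀ x y : X, ∀ t ∈ Set.Icc (0:ℝ) 1, ∀ t' ∈ Set.Icc (0:ℝ) 1,
    dist (σ x y t) (σ x y t') = |t - t'| * dist x y
  convex : ∀ x y x' y' : X,
    ConvexOn ℝ (Set.Icc (0:ℝ) 1) fun t => dist (σ x y t) (σ x' y' t)
  consistent : ∀ x y : X, ∀ s t l : ℝ, 0 ≤ s → s ≤ t → t ≤ 1 → l ∈ Set.Icc (0:ℝ) 1 →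
    σ (σ x y s) (σ x y t) l = σ x y ((1 - l) * s + l * t)
  reversible : ∀ x y : X, ∀ t ∈ Set.Icc (0:ℝ) 1, σ x y t = σ y x (1 - t)
  geodComplete : ∀ x y : X, ∃ γ : ℝ → X, Isometry γ ∧
    (∀ s t : ℝ, s ≤ t → ∀ l ∈ Set.Icc (0:ℝ) 1, σ (γ s) (γ t) l = γ (s + l * (t - s))) ∧
    (∀ t ∈ Set.Icc (0:ℝ) 1, σ x y t = γ (t * dist x y))

/-- `g` is a `σ`-isometry: a surjective isometry preserving the bicombing `σ`. -/
def IsSigmaIsometry {X : Type*} [MetricSpace X] (σ : X → X → ℝ → X) (g : X ≃ᵢ X) : Prop :=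
  ∀ x y : X, ∀ t ∈ Set.Icc (0:ℝ) 1, g (σ x y t) = σ (g x) (g y) t

/-- A group of isometries is discrete if for every `x` and `R` only finitely many of its
elements displace `x` at most `R`. -/
def IsDiscreteSubgroup {X : Type*} [MetricSpace X] (Γ : Subgroup (X ≃ᵢ X)) : Prop :=
  ∀ x : X, ∀ R : ℝ, {g : X ≃ᵢ X | g ∈ Γ ∧ dist x (g x) ≤ R}.Finite

/-- A group is virtually nilpotent if it has a nilpotent subgroup of finite index. -/
def IsVirtuallyNilpotent (G : Type*) [Group G] : Prop :=
  ∃ H : Subgroup G, H.FiniteIndex ∧ Group.IsNilpotent H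

/-- `Γ` is non-elementary: it contains two elements generating a subgroup that is not
virtually nilpotent. -/
def IsNonElementary {X : Type*} [MetricSpace X] (Γ : Subgroup (X ≃ᵢ X)) : Prop :=
  ∃ a b : X ≃ᵢ X, a ∈ Γ ∧ b ∈ Γ ∧
    ¬ IsVirtuallyNilpotent ↥(Subgroup.closure ({a, b} : Set (X ≃ᵢ X)))

/-- An isometry is non-elliptic if its orbits are unbounded. -/
def IsNonElliptic {X : Type*} [MetricSpace X] (g : X ≃ᵢ X) : Prop :=
  ∀ x : X, ¬ Bornology.IsBounded (Set.range fun n : ℤ => (g ^ n) x)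

/-- The `r`-almost stabilizer `Γ_r(x)`, generated by the elements of `Γ` displacing `x`
at most `r`. -/
def almostStabilizer {X : Type*} [MetricSpace X] (Γ : Subgroup (X ≃ᵢ X)) (r : ℝ) (x : X) :
    Subgroup (X ≃ᵢ X) :=
  Subgroup.closure {g : X ≃ᵢ X | g ∈ Γ ∧ dist x (g x) ≤ r}

/-- The nilpotence radius of `Γ` at `x`. -/
noncomputable def nilrad {X : Type*} [MetricSpace X] (Γ : Subgroup (X ≃ᵢ X)) (x : X) : ℝ :=
  sSup {r : ℝ | 0 ≤ r ∧ IsVirtuallyNilpotent ↥(almostStabilizer Γ r x)}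

/-- The Margulis domain `M_ε(g)`. -/
def margulisDomain {X : Type*} [MetricSpace X] (g : X ≃ᵢ X) (ε : ℝ) : Set X :=
  {x : X | dist x (g x) ≤ ε}

/-- The generalized Margulis domain `ℳ_ε(g) = ⋃_{i ≠ 0} M_ε(gⁱ)`. -/
def genMargulisDomain {X : Type*} [MetricSpace X] (g : X ≃ᵢ X) (ε : ℝ) : Set X :=
  ⋃ i ∈ {i : ℤ | i ≠ 0}, margulisDomain (g ^ i) ε

/-- `f` parameterizes a geodesic segment from `x` to `y` on `[0, dist x y]`. -/
def IsGeodesicFrom {X : Type*} [MetricSpace X] (f : ℝ → X) (x y : X) : Prop :=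
  f 0 = x ∧ f (dist x y) = y ∧
    ∀ s ∈ Set.Icc 0 (dist x y), ∀ t ∈ Set.Icc 0 (dist x y), dist (f s) (f t) = |s - t|

/-- `X` is a geodesic space. -/
def IsGeodesicSpace (X : Type*) [MetricSpace X] : Prop :=
  ∀ x y : X, ∃ f : ℝ → X, IsGeodesicFrom f x y

/-- `C` is `lam`-quasiconvex: any two of its points are joined by a geodesic contained in
the closed `lam`-neighbourhood of `C`. -/
def IsQuasiconvex {X : Type*} [MetricSpace X] (lam : ℝ) (C : Set X) : Prop :=
  ∀ x ∈ C, ∀ y ∈ C, ∃ f : ℝ → X, IsGeodesicFrom f x y ∧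
    ∀ t ∈ Set.Icc 0 (dist x y), infDist (f t) C ≤ lam

/-- `C` is a convex subset: any two of its points are joined by a geodesic inside `C`. -/
def IsConvexSubset {X : Type*} [MetricSpace X] (C : Set X) : Prop :=
  ∀ x ∈ C, ∀ y ∈ C, ∃ f : ℝ → X, IsGeodesicFrom f x y ∧
    ∀ t ∈ Set.Icc 0 (dist x y), f t ∈ C

/-- Arc-length concatenation of three paths, of respective lengths `d₁`, `d₂` and the rest. -/
noncomputable def concatPath {X : Type*} (d₁ d₂ : ℝ) (f₁ f₂ f₃ : ℝ → X) : ℝ → X :=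
  fun t => if t ≤ d₁ then f₁ t else if t ≤ d₁ + d₂ then f₂ (t - d₁) else f₃ (t - d₁ - d₂)

open scoped Pointwise commutatorElement

section GroupTheory

variable {G : Type*} [Group G]

theorem isVirtuallyNilpotent_of_finite_normal (H : Subgroup G) [H.Normal] [Finite H]
    [Group.IsNilpotent (G ⧸ H)] : IsVirtuallyNilpotent G := by
  let φ : G →* MulAut H := MulAut.conjNormal
  have hfin : φ.ker.FiniteIndex := by
    have : Finite (MulAut H) := Finite.of_injective (fun e : MulAut H => (e : H → H))
      (fun a b h => by ext x; exact congrArg Subtype.val (congrFun h x))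
    have : Finite φ.range := inferInstance
    exact Subgroup.finiteIndex_ker φ
  refine ⟨φ.ker, hfin, ?_⟩
  refine Subgroup.isNilpotent_of_ker_le_center ((QuotientGroup.mk' H).comp φ.ker.subtype) ?_
  intro x hx
  have hx' : (x : G) ∈ H := by
    simpa [MonoidHom.mem_ker] using hx
  rw [Subgroup.mem_center_iff]
  intro y
  have hy : φ y = 1 := y.2
  have h1 : ((φ y) ⟨x, hx'⟩ : G) = x := by rw [hy]; rfl
  rw [MulAut.conjNormal_apply] at h1
  ext
  simp only [Subgroup.coe_mul]
  simp only at h1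
  exact mul_inv_eq_iff_eq_mul.mp h1

theorem isNilpotent_of_iterated_commutators (T : Set G) (hT : Subgroup.closure T = ⊤)
    (Q : ℕ → Set G) (K : ℕ) (h0 : T ⊆ Q 0) (hK : Q K ⊆ {1})
    (hQ : ∀ k, ∀ g ∈ Q k, ∀ t ∈ T, ⁅g, t⁆ ∈ Q (k + 1)) : Group.IsNilpotent G := by
  have key : ∀ j ≤ K, Q (K - j) ⊆ (Subgroup.upperCentralSeries G j : Set G) := by
    intro j
    induction j with
    | zero =>
      intro _ x hx
      have := hK hx
      simpa using this
    | succ j ih =>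
      intro hj x hx
      have ih' := ih (by omega)
      rw [SetLike.mem_coe, Subgroup.mem_upperCentralSeries_succ_iff]
      have hle : Subgroup.closure T ≤ (Subgroup.centralizer
          {QuotientGroup.mk' (Subgroup.upperCentralSeries G j) x}).comap
            (QuotientGroup.mk' (Subgroup.upperCentralSeries G j)) := by
        rw [Subgroup.closure_le]
        intro t ht
        have h1 : ⁅x, t⁆ ∈ Subgroup.upperCentralSeries G j := by
          apply ih'
          have := hQ _ x hx t ht
          rwa [show K - (j + 1) + 1 = K - j by omega] at this
        rw [SetLike.mem_coe, Subgroup.mem_comap, Subgroup.mem_centralizer_singleton_iff]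
        have h2 : QuotientGroup.mk' (Subgroup.upperCentralSeries G j) ⁅x, t⁆ = 1 := by
          exact (QuotientGroup.eq_one_iff _).2 h1
        rw [map_commutatorElement, commutatorElement_eq_one_iff_mul_comm] at h2
        exact h2.symm
      intro y
      have hy : y ∈ Subgroup.closure T := hT ▸ Subgroup.mem_top y
      have h3 := hle hy
      rw [Subgroup.mem_comap, Subgroup.mem_centralizer_singleton_iff] at h3
      have h4 : QuotientGroup.mk' (Subgroup.upperCentralSeries G j) ⁅x, y⁆ = 1 := by
        rw [map_commutatorElement, commutatorElement_eq_one_iff_mul_comm]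
        exact h3.symm
      have : ⁅x, y⁆ ∈ Subgroup.upperCentralSeries G j := (QuotientGroup.eq_one_iff _).1 h4
      simpa [commutatorElement_def] using this
  refine ⟨K, ?_⟩
  rw [eq_top_iff, ← hT, Subgroup.closure_le]
  exact h0.trans (by simpa using key K le_rfl)

theorem isVirtuallyNilpotent_of_iterated_commutators (T : Set G)
    (Q : ℕ → Set G) (K : ℕ) (h0 : T ⊆ Q 0) (H : Subgroup G) [Finite H]
    (hK : Q K ⊆ H) (hinv : ∀ t ∈ T, t⁻¹ ∈ T)
    (hQ : ∀ k, ∀ g ∈ Q k, ∀ t ∈ T, ⁅g, t⁆ ∈ Q (k + 1))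
    (hHT : ∀ t ∈ T, ∀ h ∈ H, t * h * t⁻¹ ∈ H) (hH : H ≤ Subgroup.closure T) :
    IsVirtuallyNilpotent (Subgroup.closure T) := by
  let N := Subgroup.closure T
  let H' : Subgroup N := H.subgroupOf N
  have hnorm : N ≤ Subgroup.normalizer (H : Set G) := by
    rw [Subgroup.closure_le]
    intro t ht
    rw [SetLike.mem_coe, Subgroup.mem_normalizer_iff]
    intro h
    refine ⟨hHT t ht h, fun hh => ?_⟩
    have := hHT _ (hinv t ht) _ hh
    simpa [mul_assoc] using this
  have : H'.Normal := (Subgroup.normal_subgroupOf_iff_le_normalizer hH).2 hnorm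
  have : Finite H' := Finite.of_injective (fun x : H' => (⟨x.1.1, x.2⟩ : H))
    (fun a b h => Subtype.ext (Subtype.ext (congrArg (fun x : H => (x : G)) h)))
  have : Group.IsNilpotent (N ⧸ H') := by
    let T' : Set N := Subtype.val ⁻¹' T
    refine isNilpotent_of_iterated_commutators (QuotientGroup.mk' H' '' T') ?_
      (fun k => QuotientGroup.mk' H' '' (Subtype.val ⁻¹' Q k)) K ?_ ?_ ?_
    · rw [← MonoidHom.map_closure]
      have : Subgroup.closure T' = ⊤ := Subgroup.closure_closure_coe_preimage
      rw [this]
      exact Subgroup.map_top_of_surjective _ (QuotientGroup.mk'_surjective _)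
    · exact Set.image_mono (Set.preimage_mono h0)
    · rintro _ ⟨x, hx, rfl⟩
      have : x ∈ H' := hK hx
      simpa using this
    · rintro k _ ⟨g, hg, rfl⟩ _ ⟨t, ht, rfl⟩
      exact ⟨⁅g, t⁆, hQ k g hg t ht, map_commutatorElement _ _ _⟩
  exact isVirtuallyNilpotent_of_finite_normal H'

theorem IsVirtuallyNilpotent.of_injective {K : Type*} [Group K] (h : IsVirtuallyNilpotent G)
    (f : K →* G) (hf : Function.Injective f) : IsVirtuallyNilpotent K := by
  obtain ⟨H, hH, hN⟩ := h
  refine ⟨H.comap f, ⟨?_⟩, ?_⟩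
  · rw [Subgroup.index_comap]
    exact fun h0 => hH.index_ne_zero (Subgroup.index_eq_zero_of_relIndex_eq_zero h0)
  · have : Group.IsNilpotent H := hN
    let g : H.comap f →* H := (f.comp (H.comap f).subtype).codRestrict H (fun x => x.2)
    refine Subgroup.isNilpotent_of_ker_le_center g ?_
    intro x hx
    have h1 : f x = f 1 := by
      have : g x = 1 := hx
      rw [map_one]; exact congrArg (fun x : H => (x : G)) this
    have : x = 1 := Subtype.ext (hf h1)
    rw [this]; exact one_mem _

theorem IsVirtuallyNilpotent.of_finiteIndex (N : Subgroup G) (hi : N.FiniteIndex)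
    (h : IsVirtuallyNilpotent N) : IsVirtuallyNilpotent G := by
  obtain ⟨H, hH, hN⟩ := h
  refine ⟨H.map N.subtype, ⟨?_⟩, ?_⟩
  · rw [Subgroup.index_map_subtype]
    exact mul_ne_zero hH.index_ne_zero hi.index_ne_zero
  · exact (Group.isNilpotent_congr (H.equivMapOfInjective N.subtype N.subtype_injective)).1 hN

/-- If the products of at most `c` elements of `E` meet at most `c` cosets of the virtually
nilpotent subgroup `N`, then `E` generates a virtually nilpotent group. -/
theorem isVirtuallyNilpotent_closure_of_card_cosets (N : Subgroup G)
    (hN : IsVirtuallyNilpotent N) (E S : Set G) (h1 : 1 ∈ E) (c : ℕ)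
    (hES : ∀ n ≤ c, E ^ n ⊆ S) (hfin : ((QuotientGroup.mk : G → G ⧸ N) '' S).Finite)
    (hcard : ((QuotientGroup.mk : G → G ⧸ N) '' S).ncard ≤ c) :
    IsVirtuallyNilpotent (Subgroup.closure E) := by
  let q : G → G ⧸ N := QuotientGroup.mk
  have hmono : ∀ i, E ^ i ⊆ E ^ (i + 1) := fun i => Set.pow_subset_pow_right h1 (Nat.le_succ i)
  have hstab : ∃ i ≤ c, q '' E ^ (i + 1) ⊆ q '' E ^ i := by
    by_contra! hcon
    have : ∀ i ≤ c + 1, i ≤ c → i + 1 ≤ (q '' E ^ i).ncard := by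
      intro i
      induction i with
      | zero =>
        intro _ _
        have : (q '' E ^ 0) = {q 1} := by simp
        rw [this]; simp
      | succ i ih =>
        intro hi hi'
        have h2 := ih (by omega) (by omega)
        have hlt : (q '' E ^ i).ncard < (q '' E ^ (i + 1)).ncard := by
          apply Set.ncard_lt_ncard
          · exact ⟨Set.image_mono (hmono i), hcon i (by omega)⟩
          · exact hfin.subset (Set.image_mono (hES _ hi'))
        omega
    have h3 := this c (by omega) le_rfl
    have h4 : (q '' E ^ c).ncard ≤ c :=
      (Set.ncard_le_ncard (Set.image_mono (hES c le_rfl)) hfin).trans hcard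
    omega
  obtain ⟨i, hi, hst⟩ := hstab
  have hinvar : ∀ g ∈ Subgroup.closure E, ∀ z, q z ∈ q '' E ^ i → q (g * z) ∈ q '' E ^ i := by
    intro g hg
    have hstep : ∀ g ∈ E, ∀ z, q z ∈ q '' E ^ i → q (g * z) ∈ q '' E ^ i := by
      rintro g hg z ⟨w, hw, hwz⟩
      apply hst
      refine ⟨g * w, ?_, ?_⟩
      · rw [pow_succ']; exact Set.mul_mem_mul hg hw
      · have : w⁻¹ * z ∈ N := QuotientGroup.eq.1 hwz
        exact QuotientGroup.eq.2 (by simpa [mul_assoc] using this)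
    induction hg using Subgroup.closure_induction with
    | mem g hg => exact hstep g hg
    | one => simp
    | mul a b _ _ ha hb => intro z hz; rw [mul_assoc]; exact ha _ (hb _ hz)
    | inv a ha ih =>
      intro z hz
      have hfi : (q '' E ^ i).Finite :=
        hfin.subset (Set.image_mono ((hES i hi)))
      have hmap : Set.MapsTo (fun u : G ⧸ N => a • u) (q '' E ^ i) (q '' E ^ i) := by
        rintro _ ⟨w, hw, rfl⟩
        exact ih w ⟨w, hw, rfl⟩
      have hsurj := (hfi.injOn_iff_bijOn_of_mapsTo hmap).1 (MulAction.injective a).injOn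
      obtain ⟨u, hu, hu2⟩ := hsurj.surjOn hz
      have : q (a⁻¹ * z) = u := by
        have h5 : a⁻¹ • q z = u := by rw [← hu2]; simp
        exact h5
      rw [this]; exact hu
  have hG : q '' (Subgroup.closure E : Set G) ⊆ q '' E ^ i := by
    rintro _ ⟨g, hg, rfl⟩
    have := hinvar g hg 1 ⟨1, Set.one_mem_pow h1, rfl⟩
    simpa using this
  have hGfin : (q '' (Subgroup.closure E : Set G)).Finite :=
    hfin.subset (hG.trans (Set.image_mono ((hES i hi))))
  refine IsVirtuallyNilpotent.of_finiteIndex (N.subgroupOf (Subgroup.closure E)) ?_ ?_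
  · let f : Subgroup.closure E ⧸ N.subgroupOf (Subgroup.closure E) →
        q '' (Subgroup.closure E : Set G) :=
      Quotient.lift (fun g => ⟨q g, g, g.2, rfl⟩) (by
        intro a b hab
        have h6 : a⁻¹ * b ∈ N.subgroupOf (Subgroup.closure E) := QuotientGroup.leftRel_apply.1 hab
        have h8 : q a = q b := QuotientGroup.eq.2 h6
        exact Subtype.ext h8)
    have hf : Function.Injective f := by
      intro a b
      refine QuotientGroup.induction_on a fun a => QuotientGroup.induction_on b fun b => ?_
      intro h
      have h7 : q a = q b := congrArg Subtype.val h
      have h8 : (a : G)⁻¹ * b ∈ N := QuotientGroup.eq.1 h7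
      exact QuotientGroup.eq.2 h8
    have := hGfin.to_subtype
    have : Finite (Subgroup.closure E ⧸ N.subgroupOf (Subgroup.closure E)) :=
      Finite.of_injective f hf
    exact Subgroup.finiteIndex_of_finite_quotient
  · let f : N.subgroupOf (Subgroup.closure E) →* N :=
      ((Subgroup.closure E).subtype.comp (N.subgroupOf _).subtype).codRestrict N (fun x => x.2)
    refine hN.of_injective f ?_
    intro a b h
    have := congrArg Subtype.val h
    exact Subtype.ext (Subtype.ext this)

end GroupTheory

section Seminorms

variable {G : Type*} [Group G]

/-- The supremum of `ℓ` over the conjugates by the elements of the `ℓ`-ball of radius `ρ`. -/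
noncomputable def conjSup (ℓ : GroupSeminorm G) (ρ : ℝ) : GroupSeminorm G where
  toFun g := ⨆ y : {y : G // ℓ y ≤ ρ}, ℓ (y.1⁻¹ * g * y.1)
  map_one' := by simp [map_one_eq_zero]
  mul_le' g h := by
    have hb : ∀ g, BddAbove (Set.range fun y : {y : G // ℓ y ≤ ρ} => ℓ (y.1⁻¹ * g * y.1)) := by
      intro g
      refine ⟨ρ + ℓ g + ρ, ?_⟩
      rintro _ ⟨y, rfl⟩
      have h1 := map_mul_le_add ℓ (y.1⁻¹ * g) y.1
      have h2 := map_mul_le_add ℓ y.1⁻¹ g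
      rw [map_inv_eq_map] at h2
      have := y.2
      dsimp only
      linarith
    refine Real.iSup_le (fun y => ?_) (add_nonneg (Real.iSup_nonneg fun _ => apply_nonneg _ _)
      (Real.iSup_nonneg fun _ => apply_nonneg _ _))
    have h1 := map_mul_le_add ℓ (y.1⁻¹ * g * y.1) (y.1⁻¹ * h * y.1)
    rw [show y.1⁻¹ * g * y.1 * (y.1⁻¹ * h * y.1) = y.1⁻¹ * (g * h) * y.1 by group] at h1
    exact h1.trans (add_le_add (le_ciSup (hb g) y) (le_ciSup (hb h) y))
  inv' g := by
    congr 1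
    ext y
    rw [← map_inv_eq_map ℓ]
    congr 1
    group

theorem le_conjSup (ℓ : GroupSeminorm G) {ρ : ℝ} {y : G} (hy : ℓ y ≤ ρ) (g : G) :
    ℓ (y⁻¹ * g * y) ≤ conjSup ℓ ρ g := by
  have hb : BddAbove (Set.range fun y : {y : G // ℓ y ≤ ρ} => ℓ (y.1⁻¹ * g * y.1)) := by
    refine ⟨ρ + ℓ g + ρ, ?_⟩
    rintro _ ⟨y, rfl⟩
    have h1 := map_mul_le_add ℓ (y.1⁻¹ * g) y.1
    have h2 := map_mul_le_add ℓ y.1⁻¹ g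
    rw [map_inv_eq_map] at h2
    have := y.2
    dsimp only
    linarith
  exact le_ciSup hb ⟨y, hy⟩

theorem conjSup_le (ℓ : GroupSeminorm G) {ρ c : ℝ} (hc : 0 ≤ c) {g : G}
    (h : ∀ y, ℓ y ≤ ρ → ℓ (y⁻¹ * g * y) ≤ c) : conjSup ℓ ρ g ≤ c :=
  Real.iSup_le (fun y => h y.1 y.2) hc

theorem self_le_conjSup (ℓ : GroupSeminorm G) {ρ : ℝ} (hρ : 0 ≤ ρ) (g : G) :
    ℓ g ≤ conjSup ℓ ρ g := by
  have := le_conjSup ℓ (ρ := ρ) (y := 1) (by rw [map_one_eq_zero]; exact hρ) g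
  simpa using this

theorem conjSup_mono (ℓ : GroupSeminorm G) {ρ s : ℝ} (hρs : ρ ≤ s) (g : G) :
    conjSup ℓ ρ g ≤ conjSup ℓ s g :=
  conjSup_le ℓ (apply_nonneg _ _) fun _ hy => le_conjSup ℓ (hy.trans hρs) g

theorem conjSup_conj_le (ℓ : GroupSeminorm G) {ρ s t : ℝ} {y : G} (hy : ℓ y ≤ s)
    (ht : ρ + s ≤ t) (g : G) : conjSup ℓ ρ (y⁻¹ * g * y) ≤ conjSup ℓ t g := by
  refine conjSup_le ℓ (apply_nonneg _ _) fun z hz => ?_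
  have h1 : ℓ (y * z) ≤ t := by
    have := map_mul_le_add ℓ y z
    linarith
  have := le_conjSup ℓ h1 g
  rwa [show (y * z)⁻¹ * g * (y * z) = z⁻¹ * (y⁻¹ * g * y) * z by group] at this

/-- The `ℓ`-ball of radius `R` can be partitioned, for every `δ > 0`, into `C δ` pieces of
`ν`-diameter at most `δ`. -/
def IsColored (ℓ ν : GroupSeminorm G) (R : ℝ) (C : ℝ → ℕ) : Prop :=
  ∀ δ > 0, ∃ κ : G → Fin (C δ), ∀ g h, ℓ g ≤ R → ℓ h ≤ R → κ g = κ h → ν (g⁻¹ * h) ≤ δ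

theorem IsColored.conjSup {ℓ : GroupSeminorm G} {R S ρ : ℝ} {C : ℝ → ℕ} (h : IsColored ℓ ℓ R C)
    (hρ : ρ ≤ R) (hS : S + ρ ≤ R) :
    IsColored ℓ (conjSup ℓ ρ) S fun δ => C (δ / 3) ^ C (δ / 3) := by
  intro δ hδ
  obtain ⟨κ, hκ⟩ := h (δ / 3) (by positivity)
  classical
  let rep : Fin (C (δ / 3)) → G := fun j => if hj : ∃ y, ℓ y ≤ ρ ∧ κ y = j then hj.choose else 1
  refine ⟨fun g => finFunctionFinEquiv fun j => κ (g * rep j), fun g h hg hh hgh => ?_⟩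
  have hgh' := finFunctionFinEquiv.injective hgh
  refine conjSup_le ℓ hδ.le fun y hy => ?_
  have hex : ∃ z, ℓ z ≤ ρ ∧ κ z = κ y := ⟨y, hy, rfl⟩
  have hrep : ℓ (rep (κ y)) ≤ ρ ∧ κ (rep (κ y)) = κ y := by
    simp only [rep, dif_pos hex]
    exact hex.choose_spec
  set z := rep (κ y) with hz
  have hc : κ (g * z) = κ (h * z) := congrFun hgh' (κ y)
  have h1 := hκ _ _ (by have := map_mul_le_add ℓ g z; linarith)
    (by have := map_mul_le_add ℓ h z; linarith) hc
  have h2 := hκ _ _ (hy.trans hρ) (hrep.1.trans hρ) hrep.2.symm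
  have h3 := hκ _ _ (hrep.1.trans hρ) (hy.trans hρ) hrep.2
  have h4 := map_mul_le_add ℓ (y⁻¹ * z) ((g * z)⁻¹ * (h * z))
  have h5 := map_mul_le_add ℓ ((y⁻¹ * z) * ((g * z)⁻¹ * (h * z))) (z⁻¹ * y)
  rw [show y⁻¹ * z * ((g * z)⁻¹ * (h * z)) * (z⁻¹ * y) = y⁻¹ * (g⁻¹ * h) * y by group] at h5
  linarith

theorem IsColored.card_le {ℓ ν : GroupSeminorm G} {R δ : ℝ} {C : ℝ → ℕ} (h : IsColored ℓ ν R C)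
    (hδ : 0 < δ) (A V : Finset G) (hA : ∀ g ∈ A, ℓ g ≤ R) (hV : ∀ g, ν g ≤ δ → g ∈ V) :
    (A.card : ℝ) ≤ C δ * V.card := by
  classical
  obtain ⟨κ, hκ⟩ := h δ hδ
  have := Finset.card_le_mul_card_image_of_maps_to (s := A) (t := Finset.univ) (f := κ)
    (fun _ _ => Finset.mem_univ _) V.card (by
      intro j _
      rcases (A.filter fun g => κ g = j).eq_empty_or_nonempty with h0 | ⟨g, hg⟩
      · rw [h0]; simp
      · rw [Finset.mem_filter] at hg
        refine Finset.card_le_card_of_injOn (fun a => g⁻¹ * a) ?_ ?_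
        · intro a ha
          rw [Finset.coe_filter] at ha
          exact hV _ (hκ g a (hA g hg.1) (hA a ha.1) (hg.2.trans ha.2.symm))
        · intro a _ b _ hab
          exact mul_left_cancel hab)
  rw [Finset.card_univ, Fintype.card_fin, mul_comm] at this
  exact_mod_cast this

theorem IsColored.ncard_cosets_le {ℓ ν : GroupSeminorm G} {R δ : ℝ} {C : ℝ → ℕ}
    (h : IsColored ℓ ν R C) (hδ : 0 < δ) (N : Subgroup G) (hN : ∀ g, ν g ≤ δ → g ∈ N) (S : Set G)
    (hS : ∀ g ∈ S, ℓ g ≤ R) : ((QuotientGroup.mk : G → G ⧸ N) '' S).Finite ∧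
      ((QuotientGroup.mk : G → G ⧸ N) '' S).ncard ≤ C δ := by
  classical
  obtain ⟨κ, hκ⟩ := h δ hδ
  let f : ↥((QuotientGroup.mk : G → G ⧸ N) '' S) → Fin (C δ) := fun u => κ u.2.choose
  have hf : Function.Injective f := by
    intro u v huv
    have h1 := hκ _ _ (hS _ u.2.choose_spec.1) (hS _ v.2.choose_spec.1) huv
    have h2 := QuotientGroup.eq.2 (hN _ h1)
    rw [u.2.choose_spec.2, v.2.choose_spec.2] at h2
    exact Subtype.ext h2
  have hfin := Finite.of_injective f hf
  refine ⟨Set.toFinite _, ?_⟩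
  rw [← Nat.card_coe_set_eq]
  have := Nat.card_le_card_of_injective f hf
  simpa using this

/-- The word seminorm associated with a symmetric weight `ω`. -/
noncomputable def wordSeminorm (ω : G → ℝ) (h0 : ∀ g, 0 ≤ ω g) (hi : ∀ g, ω g⁻¹ = ω g) :
    GroupSeminorm G where
  toFun z := ⨅ l : {l : List G // l.prod = z}, (l.1.map ω).sum
  map_one' := by
    refine le_antisymm ?_ (Real.iInf_nonneg fun l => List.sum_nonneg (by simp; simp [h0]))
    refine ciInf_le_of_le ⟨0, ?_⟩ ⟨[], rfl⟩ (by simp)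
    rintro _ ⟨l, rfl⟩
    exact List.sum_nonneg (by simp; simp [h0])
  mul_le' g h := by
    have hb : ∀ z, BddBelow (Set.range fun l : {l : List G // l.prod = z} => (l.1.map ω).sum) := by
      rintro z
      refine ⟨0, ?_⟩
      rintro _ ⟨l, rfl⟩
      exact List.sum_nonneg (by simp; simp [h0])
    have : ∀ z, Nonempty {l : List G // l.prod = z} := fun z => ⟨[z], by simp⟩
    refine le_ciInf_add_ciInf fun l m => ?_
    refine ciInf_le_of_le (hb _) ⟨l.1 ++ m.1, by rw [List.prod_append, l.2, m.2]⟩ (by simp)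
  inv' g := by
    have hb : ∀ z, BddBelow (Set.range fun l : {l : List G // l.prod = z} => (l.1.map ω).sum) := by
      rintro z
      refine ⟨0, ?_⟩
      rintro _ ⟨l, rfl⟩
      exact List.sum_nonneg (by simp; simp [h0])
    have : ∀ z, Nonempty {l : List G // l.prod = z} := fun z => ⟨[z], by simp⟩
    have key : ∀ z : G, (⨅ l : {l : List G // l.prod = z⁻¹}, (l.1.map ω).sum) ≤
        ⨅ l : {l : List G // l.prod = z}, (l.1.map ω).sum := by
      intro z
      refine le_ciInf fun l => ?_
      refine ciInf_le_of_le (hb _) ⟨(l.1.map fun x => x⁻¹).reverse, ?_⟩ ?_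
      · rw [← List.prod_inv_reverse, l.2]
      · rw [List.map_reverse, List.sum_reverse, List.map_map]
        exact le_of_eq (congrArg List.sum (List.map_congr_left fun x _ => hi x))
    refine le_antisymm (key g) ?_
    have := key g⁻¹
    rwa [inv_inv] at this

theorem wordSeminorm_prod_le (ω : G → ℝ) (h0 : ∀ g, 0 ≤ ω g) (hi : ∀ g, ω g⁻¹ = ω g)
    (l : List G) : wordSeminorm ω h0 hi l.prod ≤ (l.map ω).sum := by
  refine ciInf_le (f := fun l' : {l' : List G // l'.prod = l.prod} => (l'.1.map ω).sum)
    ⟨0, ?_⟩ ⟨l, rfl⟩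
  rintro _ ⟨l, rfl⟩
  exact List.sum_nonneg (by simp; simp [h0])

theorem wordSeminorm_le (ω : G → ℝ) (h0 : ∀ g, 0 ≤ ω g) (hi : ∀ g, ω g⁻¹ = ω g)
    (g : G) : wordSeminorm ω h0 hi g ≤ ω g := by
  simpa using wordSeminorm_prod_le ω h0 hi [g]

theorem exists_list_of_wordSeminorm_lt (ω : G → ℝ) (h0 : ∀ g, 0 ≤ ω g) (hi : ∀ g, ω g⁻¹ = ω g)
    {z : G} {c : ℝ} (h : wordSeminorm ω h0 hi z < c) :
    ∃ l : List G, l.prod = z ∧ (l.map ω).sum < c := by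
  have : Nonempty {l : List G // l.prod = z} := ⟨[z], by simp⟩
  obtain ⟨l, hl⟩ := exists_lt_of_ciInf_lt h
  exact ⟨l.1, l.2, hl⟩

end Seminorms

section Gleason

variable {G : Type*} [Group G]

theorem abs_max_sub_max_le (a b : ℝ) : |max a 0 - max b 0| ≤ |a - b| := by
  have := abs_max_sub_max_le_abs a b 0
  simpa using this

/-- A function equal to `1` on the `σ`-ball of radius `a`, which is `1`-Lipschitz for the left
translation length `lam`. -/
noncomputable def plateau (lam σ : GroupSeminorm G) (a : ℝ) (y : G) : ℝ :=
  ⨆ s : {s : G // σ s ≤ a}, max (1 - lam (y * s.1)) 0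

theorem bddAbove_plateau (lam σ : GroupSeminorm G) (a : ℝ) (y : G) :
    BddAbove (Set.range fun s : {s : G // σ s ≤ a} => max (1 - lam (y * s.1)) 0) := by
  refine ⟨1, ?_⟩
  rintro _ ⟨s, rfl⟩
  exact max_le (by linarith [apply_nonneg lam (y * s.1)]) zero_le_one

theorem plateau_nonneg (lam σ : GroupSeminorm G) (a : ℝ) (y : G) : 0 ≤ plateau lam σ a y :=
  Real.iSup_nonneg fun _ => le_max_right _ _

theorem plateau_le_one (lam σ : GroupSeminorm G) (a : ℝ) (y : G) : plateau lam σ a y ≤ 1 :=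
  Real.iSup_le (fun s => max_le (by linarith [apply_nonneg lam (y * s.1)]) zero_le_one) zero_le_one

theorem le_plateau (lam σ : GroupSeminorm G) {a : ℝ} {s : G} (hs : σ s ≤ a) (y : G) :
    1 - lam (y * s) ≤ plateau lam σ a y :=
  (le_max_left _ _).trans (le_ciSup (bddAbove_plateau lam σ a y) ⟨s, hs⟩)

theorem plateau_eq_one (lam σ : GroupSeminorm G) {a : ℝ} {y : G} (hy : σ y ≤ a) :
    plateau lam σ a y = 1 := by
  refine le_antisymm (plateau_le_one _ _ _ _) ?_
  have := le_plateau lam σ (a := a) (s := y⁻¹) (by rwa [map_inv_eq_map]) y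
  simpa [map_one_eq_zero] using this

theorem exists_of_plateau_ne_zero (lam σ : GroupSeminorm G) {a : ℝ} {y : G}
    (h : plateau lam σ a y ≠ 0) : ∃ w s, lam w < 1 ∧ σ s ≤ a ∧ y = w * s := by
  by_contra! hcon
  apply h
  refine le_antisymm (Real.iSup_le (fun s => max_le ?_ le_rfl) le_rfl) (plateau_nonneg _ _ _ _)
  by_contra! h1
  refine hcon (y * s.1) s.1⁻¹ (by linarith) (by rw [map_inv_eq_map]; exact s.2) (by group)

theorem abs_plateau_sub_le (lam σ : GroupSeminorm G) (a : ℝ) (g y : G) :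
    |plateau lam σ a (g⁻¹ * y) - plateau lam σ a y| ≤ lam g := by
  have key : ∀ g y, plateau lam σ a (g⁻¹ * y) ≤ plateau lam σ a y + lam g := by
    intro g y
    refine Real.iSup_le (fun s => max_le ?_ ?_) ?_
    · have h1 := le_plateau lam σ s.2 y
      have h2 := map_mul_le_add lam g (g⁻¹ * y * s.1)
      rw [show g * (g⁻¹ * y * s.1) = y * s.1 by group] at h2
      linarith
    · exact add_nonneg (plateau_nonneg _ _ _ _) (apply_nonneg _ _)
    · exact add_nonneg (plateau_nonneg _ _ _ _) (apply_nonneg _ _)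
  rw [abs_sub_le_iff]
  constructor
  · linarith [key g y]
  · have := key g⁻¹ (g⁻¹ * y)
    rw [inv_inv, mul_inv_cancel_left, map_inv_eq_map] at this
    linarith

/-- The tent function of radius `a`. -/
noncomputable def tent (σ : GroupSeminorm G) (a : ℝ) (u : G) : ℝ := max (1 - σ u / a) 0

theorem tent_nonneg (σ : GroupSeminorm G) (a : ℝ) (u : G) : 0 ≤ tent σ a u := le_max_right _ _

theorem abs_tent_sub_le (σ : GroupSeminorm G) {a : ℝ} (ha : 0 < a) (k u : G) :
    |tent σ a (k * u) - tent σ a u| ≤ σ k / a := by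
  refine (abs_max_sub_max_le _ _).trans ?_
  rw [show 1 - σ (k * u) / a - (1 - σ u / a) = (σ u - σ (k * u)) / a by ring, abs_div,
    abs_of_pos ha]
  gcongr
  rw [abs_sub_le_iff]
  have h1 := map_mul_le_add σ k u
  have h2 := map_mul_le_add σ k⁻¹ (k * u)
  rw [inv_mul_cancel_left, map_inv_eq_map] at h2
  constructor <;> linarith

theorem lt_of_tent_ne_zero (σ : GroupSeminorm G) {a : ℝ} (ha : 0 < a) {u : G}
    (h : tent σ a u ≠ 0) : σ u < a := by
  by_contra! hcon
  apply h
  refine max_eq_right ?_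
  rw [sub_nonpos, le_div_iff₀ ha]
  linarith

/-- Convolution of a function supported on the finite set `F` with another function. -/
noncomputable def convOn (F : Finset G) (φ η : G → ℝ) (z : G) : ℝ :=
  ∑ y ∈ F, φ y * η (y⁻¹ * z)

theorem exists_of_convOn_ne_zero {F : Finset G} {φ η : G → ℝ} {z : G} (h : convOn F φ η z ≠ 0) :
    ∃ y, φ y ≠ 0 ∧ η (y⁻¹ * z) ≠ 0 := by
  obtain ⟨y, _, hy⟩ := Finset.exists_ne_zero_of_sum_ne_zero h
  exact ⟨y, left_ne_zero_of_mul hy, right_ne_zero_of_mul hy⟩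

theorem convOn_subset {F E : Finset G} (hFE : F ⊆ E) {φ : G → ℝ} (hF : ∀ y, φ y ≠ 0 → y ∈ F)
    (η : G → ℝ) (z : G) : convOn F φ η z = convOn E φ η z := by
  refine Finset.sum_subset hFE fun y _ hy => ?_
  have : φ y = 0 := by by_contra h; exact hy (hF y h)
  rw [this, zero_mul]

open Classical in
theorem convOn_translate_sub {F : Finset G} {φ : G → ℝ} (hF : ∀ y, φ y ≠ 0 → y ∈ F)
    (η : G → ℝ) (g z : G) : convOn F φ η (g⁻¹ * z) - convOn F φ η z =
      convOn (F ∪ F.image (g * ·)) (fun y => φ (g⁻¹ * y) - φ y) η z := by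
  have h1 : convOn F φ η (g⁻¹ * z) =
      convOn (F ∪ F.image (g * ·)) (fun y => φ (g⁻¹ * y)) η z := by
    rw [← convOn_subset (F := F.image (g * ·)) Finset.subset_union_right]
    · unfold convOn
      rw [Finset.sum_image (fun a _ b _ h => mul_left_cancel h)]
      refine Finset.sum_congr rfl fun y _ => ?_
      simp only [inv_mul_cancel_left, mul_inv_rev, mul_assoc]
    · intro y hy
      exact Finset.mem_image.2 ⟨_, hF _ hy, by simp⟩
  rw [h1, convOn_subset Finset.subset_union_left hF, convOn, convOn, convOn,
    ← Finset.sum_sub_distrib]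
  exact Finset.sum_congr rfl fun y _ => by ring

theorem abs_convOn_translate_sub_le (E : Finset G) (f η : G → ℝ) (k : G) {b c : ℝ}
    (hb : ∀ y ∈ E, |f y| ≤ b) (hc : ∀ y ∈ E, ∀ u, |η (y⁻¹ * k⁻¹ * y * u) - η u| ≤ c) (z : G) :
    |convOn E f η (k⁻¹ * z) - convOn E f η z| ≤ E.card * (b * c) := by
  rw [convOn, convOn, ← Finset.sum_sub_distrib, ← nsmul_eq_mul]
  refine (Finset.abs_sum_le_sum_abs _ _).trans (Finset.sum_le_card_nsmul _ _ _ fun y hy => ?_)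
  rw [← mul_sub, abs_mul]
  have h1 := hc y hy (y⁻¹ * z)
  rw [show y⁻¹ * k⁻¹ * y * (y⁻¹ * z) = y⁻¹ * (k⁻¹ * z) by group] at h1
  exact mul_le_mul (hb y hy) h1 (abs_nonneg _) ((abs_nonneg _).trans (hb y hy))

theorem abs_prod_translate_sub_le (ψ : G → ℝ) (ω : G → ℝ) (c : ℝ) (l : List G)
    (h : ∀ g ∈ l, ∀ z, |ψ (g⁻¹ * z) - ψ z| ≤ c * ω g) (z : G) :
    |ψ (l.prod⁻¹ * z) - ψ z| ≤ c * (l.map ω).sum := by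
  induction l generalizing z with
  | nil => simp
  | cons g l ih =>
    have h1 := h g (by simp) z
    have h2 := ih (fun g' hg' => h g' (List.mem_cons_of_mem _ hg')) (g⁻¹ * z)
    rw [List.prod_cons, mul_inv_rev, mul_assoc, List.map_cons, List.sum_cons, mul_add]
    have := abs_add_le (ψ (l.prod⁻¹ * (g⁻¹ * z)) - ψ (g⁻¹ * z)) (ψ (g⁻¹ * z) - ψ z)
    rw [sub_add_sub_cancel] at this
    linarith

theorem mul_abs_translate_sub_le (ψ : G → ℝ) (g : G) (n : ℕ) {P R : ℝ}
    (hP : ∀ z, |ψ ((g ^ n)⁻¹ * z) - ψ z| ≤ P)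
    (hR : ∀ i < n, ∀ z, |(ψ (g⁻¹ * ((g ^ i)⁻¹ * z)) - ψ ((g ^ i)⁻¹ * z)) -
      (ψ (g⁻¹ * z) - ψ z)| ≤ R) (z : G) :
    n * |ψ (g⁻¹ * z) - ψ z| ≤ P + n * R := by
  have htel : ∑ i ∈ Finset.range n, (ψ (g⁻¹ * ((g ^ i)⁻¹ * z)) - ψ ((g ^ i)⁻¹ * z)) =
      ψ ((g ^ n)⁻¹ * z) - ψ z := by
    have := Finset.sum_range_sub (fun i => ψ ((g ^ i)⁻¹ * z)) n
    simp only [pow_zero, inv_one, one_mul] at this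
    rw [← this]
    refine Finset.sum_congr rfl fun i _ => ?_
    rw [pow_succ, mul_inv_rev, mul_assoc]
  have hsum : (n : ℝ) * (ψ (g⁻¹ * z) - ψ z) = (ψ ((g ^ n)⁻¹ * z) - ψ z) -
      ∑ i ∈ Finset.range n, ((ψ (g⁻¹ * ((g ^ i)⁻¹ * z)) - ψ ((g ^ i)⁻¹ * z)) -
        (ψ (g⁻¹ * z) - ψ z)) := by
    rw [Finset.sum_sub_distrib, htel]
    simp [mul_sub]
  have h1 : (n : ℝ) * |ψ (g⁻¹ * z) - ψ z| = |(n : ℝ) * (ψ (g⁻¹ * z) - ψ z)| := by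
    rw [abs_mul, Nat.abs_cast]
  rw [h1, hsum]
  refine (abs_sub _ _).trans (add_le_add (hP z) ?_)
  refine (Finset.abs_sum_le_sum_abs _ _).trans ?_
  refine (Finset.sum_le_card_nsmul _ _ R fun i hi => hR i (Finset.mem_range.1 hi) z).trans ?_
  simp

open Classical in
theorem card_union_image_le (F : Finset G) (g : G) :
    ((F ∪ F.image (g * ·)).card : ℝ) ≤ 2 * F.card := by
  have h1 := Finset.card_union_le F (F.image (g * ·))
  have h2 := Finset.card_image_le (s := F) (f := (g * ·))
  have : (F ∪ F.image (g * ·)).card ≤ 2 * F.card := by omega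
  exact_mod_cast this

theorem convOn_plateau_tent_deriv_le (lam σ : GroupSeminorm G) {a ε w : ℝ} (ha : 0 < a)
    (F : Finset G) (hF : ∀ y, plateau lam σ a y ≠ 0 → y ∈ F) (g : G) (n : ℕ) (hn : 0 < n)
    (hε : ∀ i ≤ n, ∀ y ∈ F, σ (y⁻¹ * g ^ i * y) ≤ ε) (hw : lam g ≤ w) (hnw : 1 ≤ n * w) (z : G) :
    |convOn F (plateau lam σ a) (tent σ a) (g⁻¹ * z) - convOn F (plateau lam σ a) (tent σ a) z| ≤
      3 * F.card * ε / a * w := by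
  classical
  set φ := plateau lam σ a
  set η := tent σ a
  have hconj : ∀ i ≤ n, ∀ y ∈ F, ∀ u, |η (y⁻¹ * (g ^ i)⁻¹ * y * u) - η u| ≤ ε / a := by
    intro i hi y hy u
    refine (abs_tent_sub_le σ ha _ u).trans ?_
    have := hε i hi y hy
    rw [← map_inv_eq_map, show (y⁻¹ * g ^ i * y)⁻¹ = y⁻¹ * (g ^ i)⁻¹ * y by group] at this
    gcongr
  have hP : ∀ z, |convOn F φ η ((g ^ n)⁻¹ * z) - convOn F φ η z| ≤ F.card * (1 * (ε / a)) := by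
    refine abs_convOn_translate_sub_le F φ η (g ^ n) (fun y _ => ?_) (hconj n le_rfl)
    rw [abs_of_nonneg (plateau_nonneg _ _ _ _)]
    exact plateau_le_one _ _ _ _
  have hR : ∀ i < n, ∀ z, |(convOn F φ η (g⁻¹ * ((g ^ i)⁻¹ * z)) - convOn F φ η ((g ^ i)⁻¹ * z)) -
      (convOn F φ η (g⁻¹ * z) - convOn F φ η z)| ≤ 2 * F.card * (w * (ε / a)) := by
    intro i hi z
    rw [convOn_translate_sub hF, convOn_translate_sub hF]
    refine (abs_convOn_translate_sub_le _ _ η (g ^ i) (b := w) (c := ε / a) ?_ ?_ z).trans ?_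
    · intro y _
      exact (abs_plateau_sub_le lam σ a g y).trans hw
    · intro y hy u
      rcases Finset.mem_union.1 hy with hy | hy
      · exact hconj i hi.le y hy u
      · obtain ⟨y', hy', rfl⟩ := Finset.mem_image.1 hy
        have := hconj i hi.le y' hy' u
        convert this using 4
        have : g⁻¹ * (g ^ i)⁻¹ * g = (g ^ i)⁻¹ := by group
        calc (g * y')⁻¹ * (g ^ i)⁻¹ * (g * y') * u = y'⁻¹ * (g⁻¹ * (g ^ i)⁻¹ * g) * y' * u := by
              group
          _ = _ := by rw [this]
    · rcases F.eq_empty_or_nonempty with h0 | ⟨y, hy⟩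
      · simp [h0]
      · have he : 0 ≤ ε := (apply_nonneg σ _).trans (hε 0 (Nat.zero_le _) y hy)
        have hw0 : 0 ≤ w := (apply_nonneg lam g).trans hw
        exact mul_le_mul_of_nonneg_right (card_union_image_le F g) (by positivity)
  have h1 := mul_abs_translate_sub_le (convOn F φ η) g n hP hR z
  have hn' : (0 : ℝ) < n := by exact_mod_cast hn
  have hFe : 0 ≤ (F.card : ℝ) * (ε / a) := by
    rcases F.eq_empty_or_nonempty with h0 | ⟨y, hy⟩
    · simp [h0]
    · have he : 0 ≤ ε := (apply_nonneg σ _).trans (hε 0 (Nat.zero_le _) y hy)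
      positivity
  have h2 : (F.card : ℝ) * (1 * (ε / a)) + n * (2 * F.card * (w * (ε / a))) ≤
      n * (3 * F.card * ε / a * w) := by
    have := mul_le_mul_of_nonneg_right hnw hFe
    calc _ = 1 * (F.card * (ε / a)) + n * (2 * F.card * (w * (ε / a))) := by ring
      _ ≤ n * w * (F.card * (ε / a)) + n * (2 * F.card * (w * (ε / a))) := by linarith
      _ = _ := by ring
  exact le_of_mul_le_mul_left (h1.trans h2) hn'

theorem le_convOn_plateau_tent_one (lam σ : GroupSeminorm G) {a : ℝ} (ha : 0 < a)
    (F V : Finset G) (hF : ∀ y, plateau lam σ a y ≠ 0 → y ∈ F) (hV : ∀ y ∈ V, σ y ≤ a / 2) :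
    (V.card : ℝ) / 2 ≤ convOn F (plateau lam σ a) (tent σ a) 1 := by
  have hVF : V ⊆ F := fun y hy => hF y (by
    rw [plateau_eq_one lam σ ((hV y hy).trans (by linarith))]; exact one_ne_zero)
  have h1 : (V.card : ℝ) / 2 = ∑ y ∈ V, (1 / 2 : ℝ) := by simp; ring
  rw [h1]
  refine (Finset.sum_le_sum fun y hy => ?_).trans
    (Finset.sum_le_sum_of_subset_of_nonneg hVF fun y _ _ =>
      mul_nonneg (plateau_nonneg _ _ _ _) (tent_nonneg _ _ _))
  rw [plateau_eq_one lam σ ((hV y hy).trans (by linarith)), one_mul, mul_one]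
  refine le_max_of_le_left ?_
  rw [map_inv_eq_map]
  have : σ y / a ≤ 1 / 2 := by
    rw [div_le_iff₀ ha]; linarith [hV y hy]
  linarith

/-- Words of total weight at most `L` in elements that move slowly stay close to the unit ball of
`lam`. -/
theorem gleason_escape (lam σ : GroupSeminorm G) {a ε L : ℝ} (ha : 0 < a)
    (F V : Finset G) (hF : ∀ w s, lam w < 1 → σ s ≤ a → w * s ∈ F)
    (hV : ∀ y ∈ V, σ y ≤ a / 2) (ω : G → ℝ) (hε0 : 0 ≤ ε)
    (hsmall : 6 * F.card * ε * L < a * V.card) (l : List G)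
    (hl : ∀ g ∈ l, lam g ≤ ω g ∧ ∃ n : ℕ, 0 < n ∧ 1 ≤ n * ω g ∧
      ∀ i ≤ n, ∀ y ∈ F, σ (y⁻¹ * g ^ i * y) ≤ ε) (hL : (l.map ω).sum ≤ L) :
    ∃ w s, lam w < 1 ∧ σ s ≤ 2 * a ∧ l.prod = w * s := by
  have hF' : ∀ y, plateau lam σ a y ≠ 0 → y ∈ F := by
    intro y hy
    obtain ⟨w, s, hw, hs, rfl⟩ := exists_of_plateau_ne_zero lam σ hy
    exact hF w s hw hs
  set ψ := convOn F (plateau lam σ a) (tent σ a)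
  have h1 := abs_prod_translate_sub_le ψ ω (3 * F.card * ε / a) l (by
    intro g hg z
    obtain ⟨h1, n, hn, hn1, h2⟩ := hl g hg
    exact convOn_plateau_tent_deriv_le lam σ ha F hF' g n hn h2 h1 hn1 z) l.prod
  rw [inv_mul_cancel] at h1
  have h2 := le_convOn_plateau_tent_one lam σ ha F V hF' hV
  have h3 : 3 * F.card * ε / a * (l.map ω).sum < (V.card : ℝ) / 2 := by
    refine (mul_le_mul_of_nonneg_left hL (by positivity)).trans_lt ?_
    rw [div_mul_eq_mul_div, div_lt_iff₀ ha]
    linarith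
  have h4 : ψ l.prod ≠ 0 := by
    intro h0
    rw [h0, sub_zero] at h1
    linarith [le_abs_self (ψ 1)]
  obtain ⟨y, hy1, hy2⟩ := exists_of_convOn_ne_zero h4
  obtain ⟨w, s, hw, hs, rfl⟩ := exists_of_plateau_ne_zero lam σ hy1
  have hu := lt_of_tent_ne_zero σ ha hy2
  refine ⟨w, s * ((w * s)⁻¹ * l.prod), hw, ?_, by group⟩
  have := map_mul_le_add σ s ((w * s)⁻¹ * l.prod)
  linarith

theorem convOn_second_deriv_le (lam σ : GroupSeminorm G) (a : ℝ) (F : Finset G)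
    (hF : ∀ y, plateau lam σ a y ≠ 0 → y ∈ F) (g h : G) {α β : ℝ}
    (hg : ∀ y ∈ F, lam (y⁻¹ * g * y) ≤ α ∧ lam ((h * y)⁻¹ * g * (h * y)) ≤ α)
    (hh : lam h ≤ β) (hα : 0 ≤ α) (z : G) :
    |(convOn F (plateau lam σ a) (plateau lam σ a) (h⁻¹ * (g⁻¹ * z)) -
        convOn F (plateau lam σ a) (plateau lam σ a) (g⁻¹ * z)) -
      (convOn F (plateau lam σ a) (plateau lam σ a) (h⁻¹ * z) -
        convOn F (plateau lam σ a) (plateau lam σ a) z)| ≤ 2 * F.card * (β * α) := by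
  classical
  have hβ : 0 ≤ β := (apply_nonneg lam h).trans hh
  rw [convOn_translate_sub hF, convOn_translate_sub hF]
  refine (abs_convOn_translate_sub_le _ _ _ g (b := β) (c := α) ?_ ?_ z).trans ?_
  · intro y _
    exact (abs_plateau_sub_le lam σ a h y).trans hh
  · intro y hy u
    have key : lam (y⁻¹ * g * y) ≤ α := by
      rcases Finset.mem_union.1 hy with hy | hy
      · exact (hg y hy).1
      · obtain ⟨y', hy', rfl⟩ := Finset.mem_image.1 hy
        exact (hg y' hy').2
    have := abs_plateau_sub_le lam σ a (y⁻¹ * g * y) u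
    rw [show (y⁻¹ * g * y)⁻¹ * u = y⁻¹ * g⁻¹ * y * u by group] at this
    exact this.trans key
  · exact mul_le_mul_of_nonneg_right (card_union_image_le F h) (by positivity)

theorem convOn_commutator_deriv_le (lam σ : GroupSeminorm G) (a : ℝ) (F : Finset G)
    (hF : ∀ y, plateau lam σ a y ≠ 0 → y ∈ F) (g h : G) {α β : ℝ}
    (hg : ∀ y ∈ F, lam (y⁻¹ * g * y) ≤ α ∧ lam ((h * y)⁻¹ * g * (h * y)) ≤ α)
    (hh : ∀ y ∈ F, lam (y⁻¹ * h * y) ≤ β ∧ lam ((g * y)⁻¹ * h * (g * y)) ≤ β)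
    (hg1 : lam g ≤ α) (hh1 : lam h ≤ β) (z : G) :
    |convOn F (plateau lam σ a) (plateau lam σ a) (⁅g⁻¹, h⁻¹⁆⁻¹ * z) -
        convOn F (plateau lam σ a) (plateau lam σ a) z| ≤ 4 * F.card * (α * β) := by
  set ψ := convOn F (plateau lam σ a) (plateau lam σ a)
  have h1 := convOn_second_deriv_le lam σ a F hF g h hg hh1 ((apply_nonneg lam g).trans hg1)
    (h * g * z)
  have h2 := convOn_second_deriv_le lam σ a F hF h g hh hg1 ((apply_nonneg lam h).trans hh1)
    (h * g * z)
  have e1 : h⁻¹ * (g⁻¹ * (h * g * z)) = ⁅g⁻¹, h⁻¹⁆⁻¹ * z := by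
    rw [commutatorElement_def]; group
  have e2 : g⁻¹ * (h⁻¹ * (h * g * z)) = z := by group
  rw [e1] at h1
  rw [e2] at h2
  rw [abs_le] at h1 h2 ⊢
  constructor <;> linarith [h1.1, h1.2, h2.1, h2.2]

end Gleason

section Spectral

variable {H : Type*} [NormedAddCommGroup H] [InnerProductSpace ℝ H]

theorem exists_spectral_decomposition {β : Type*} (B : Finset β) (u : β → H) :
    ∃ (n : ℕ) (w : Fin n → H) (μ : Fin n → ℝ), Orthonormal ℝ w ∧ (∀ i, 0 ≤ μ i) ∧
      (∀ q, ∑ y ∈ B, inner ℝ (u y) q • u y = ∑ i, (μ i * inner ℝ (w i) q) • w i) ∧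
      ∑ i, μ i ≤ ∑ y ∈ B, ‖u y‖ ^ 2 := by
  classical
  let W : Submodule ℝ H := Submodule.span ℝ (B.image u : Set H)
  have hu : ∀ y ∈ B, u y ∈ W := fun y hy =>
    Submodule.subset_span (Finset.mem_coe.2 (Finset.mem_image_of_mem u hy))
  have hfd : FiniteDimensional ℝ W := FiniteDimensional.span_finset ℝ _
  let A : H →ₗ[ℝ] H := ∑ y ∈ B, ((innerSL ℝ (u y)).smulRight (u y) : H →L[ℝ] H).toLinearMap
  have hA : ∀ q, A q = ∑ y ∈ B, inner ℝ (u y) q • u y := by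
    intro q
    simp [A]
  have hAW : ∀ q, A q ∈ W := by
    intro q
    rw [hA]
    exact Submodule.sum_mem _ fun y hy => Submodule.smul_mem _ _ (hu y hy)
  have hsymm : ∀ p q, inner ℝ (A p) q = inner ℝ p (A q) := by
    intro p q
    rw [hA, hA, sum_inner, inner_sum]
    refine Finset.sum_congr rfl fun y _ => ?_
    rw [real_inner_smul_left, real_inner_smul_right, real_inner_comm p (u y)]
    ring
  let T : W →ₗ[ℝ] W := (A.comp W.subtype).codRestrict W fun q => hAW _
  have hT : T.IsSymmetric := fun p q => hsymm p q
  let e := hT.eigenvectorBasis (n := Module.finrank ℝ W) rfl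
  let μ := hT.eigenvalues (n := Module.finrank ℝ W) rfl
  have he : ∀ i, A (e i : H) = μ i • (e i : H) := by
    intro i
    have := congrArg Subtype.val (hT.apply_eigenvectorBasis rfl i)
    exact this
  have hon : Orthonormal ℝ fun i => (e i : H) := by
    have := e.orthonormal.comp_linearIsometry W.subtypeₗᵢ
    exact this
  have hμ : ∀ i, μ i = ∑ y ∈ B, inner ℝ (e i : H) (u y) ^ 2 := by
    intro i
    have h1 : inner ℝ (e i : H) (A (e i : H)) = μ i := by
      rw [he, real_inner_smul_right, real_inner_self_eq_norm_sq, hon.1 i]; simp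
    rw [← h1, hA, inner_sum]
    refine Finset.sum_congr rfl fun y _ => ?_
    rw [real_inner_smul_right, real_inner_comm]
    ring
  refine ⟨Module.finrank ℝ W, fun i => (e i : H), μ, hon, ?_, ?_, ?_⟩
  · intro i
    rw [hμ]
    exact Finset.sum_nonneg fun _ _ => sq_nonneg _
  · intro q
    rw [← hA]
    have h1 := e.sum_repr ⟨A q, hAW q⟩
    have h2 := congrArg Subtype.val h1
    simp only [Submodule.coe_sum, Submodule.coe_smul] at h2
    rw [← h2]
    refine Finset.sum_congr rfl fun i _ => ?_
    congr 1
    rw [e.repr_apply_apply, Submodule.coe_inner, ← hsymm, he, real_inner_smul_left]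
  · simp_rw [hμ]
    rw [Finset.sum_comm]
    refine Finset.sum_le_sum fun y _ => ?_
    have := hon.sum_inner_products_le (u y) (s := Finset.univ)
    simpa using this

/-- The orthogonal projection onto the span of the vectors `w i`, `i ∈ J`. -/
noncomputable def specProj {ι : Type*} (w : ι → H) (J : Finset ι) : H →L[ℝ] H :=
  ∑ i ∈ J, (innerSL ℝ (w i)).smulRight (w i)

variable {ι : Type*} {w : ι → H}

theorem specProj_apply (J : Finset ι) (v : H) :
    specProj w J v = ∑ i ∈ J, inner ℝ (w i) v • w i := by
  simp [specProj]

theorem inner_specProj_mem [DecidableEq ι] (hw : Orthonormal ℝ w) {J : Finset ι} {i : ι}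
    (v : H) : inner ℝ (w i) (specProj w J v) = if i ∈ J then inner ℝ (w i) v else 0 := by
  rw [specProj_apply, inner_sum]
  simp_rw [real_inner_smul_right, orthonormal_iff_ite.1 hw]
  simp

theorem inner_sub_specProj [DecidableEq ι] (hw : Orthonormal ℝ w) {J : Finset ι} {i : ι}
    (v : H) : inner ℝ (w i) (v - specProj w J v) = if i ∈ J then 0 else inner ℝ (w i) v := by
  rw [inner_sub_right, inner_specProj_mem hw]
  split_ifs <;> simp

theorem inner_specProj_sub (hw : Orthonormal ℝ w) (J : Finset ι) (v v' : H) :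
    inner ℝ (specProj w J v') (v - specProj w J v) = 0 := by
  classical
  rw [specProj_apply J v', sum_inner]
  refine Finset.sum_eq_zero fun i hi => ?_
  rw [real_inner_smul_left, inner_sub_specProj hw, if_pos hi, mul_zero]

theorem norm_sq_specProj_add (hw : Orthonormal ℝ w) (J : Finset ι) (v : H) :
    ‖v‖ ^ 2 = ‖specProj w J v‖ ^ 2 + ‖v - specProj w J v‖ ^ 2 := by
  have h := norm_add_sq_real (specProj w J v) (v - specProj w J v)
  rw [inner_specProj_sub hw, add_sub_cancel] at h
  linarith

theorem norm_specProj_le (hw : Orthonormal ℝ w) (J : Finset ι) (v : H) :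
    ‖specProj w J v‖ ≤ ‖v‖ := by
  have := norm_sq_specProj_add hw J v
  refine le_of_sq_le_sq ?_ (norm_nonneg _)
  nlinarith [sq_nonneg ‖v - specProj w J v‖]

theorem specProj_specProj (hw : Orthonormal ℝ w) (J : Finset ι) (v : H) :
    specProj w J (specProj w J v) = specProj w J v := by
  classical
  rw [specProj_apply, specProj_apply]
  refine Finset.sum_congr rfl fun i hi => ?_
  rw [← specProj_apply, inner_specProj_mem hw, if_pos hi]

variable [Fintype ι] {μ : ι → ℝ} {J : Finset ι} {b : ℝ}

theorem inner_sub_specProj_le (hw : Orthonormal ℝ w) (hJ : ∀ i, i ∉ J → μ i ≤ b)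
    (hb : 0 ≤ b) (f : H) :
    inner ℝ (f - specProj w J f) (∑ i, (μ i * inner ℝ (w i) f) • w i) ≤
      b * ‖f - specProj w J f‖ ^ 2 := by
  classical
  set q := f - specProj w J f with hq
  rw [inner_sum]
  have h1 : ∀ i, inner ℝ q ((μ i * inner ℝ (w i) f) • w i) ≤ b * ‖inner ℝ (w i) q‖ ^ 2 := by
    intro i
    rw [real_inner_smul_right, real_inner_comm (w i) q, hq, inner_sub_specProj hw]
    split_ifs with hi
    · simp
    · have := hJ i hi
      rw [Real.norm_eq_abs, sq_abs]
      nlinarith [sq_nonneg (inner ℝ (w i) f)]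
  refine (Finset.sum_le_sum fun i _ => h1 i).trans ?_
  rw [← Finset.mul_sum]
  exact mul_le_mul_of_nonneg_left (hw.sum_inner_products_le q) hb

theorem norm_sub_specProj_mul_le (hw : Orthonormal ℝ w) (hJ : ∀ i, i ∉ J → μ i ≤ b)
    (hb : 0 ≤ b) (f : H) :
    (1 - b) * ‖f - specProj w J f‖ ≤ ‖f - ∑ i, (μ i * inner ℝ (w i) f) • w i‖ := by
  set q := f - specProj w J f with hq
  rcases eq_or_lt_of_le (norm_nonneg q) with h0 | h0
  · rw [← h0, mul_zero]; exact norm_nonneg _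
  have h1 := inner_sub_specProj_le hw hJ hb f
  have h2 : inner ℝ q f = ‖q‖ ^ 2 := by
    have h3 : inner ℝ q (specProj w J f) = 0 := by
      rw [real_inner_comm]; exact inner_specProj_sub hw J f f
    rw [← real_inner_self_eq_norm_sq]
    conv_rhs => rw [hq, inner_sub_right, ← hq, h3, sub_zero]
  have h3 := real_inner_le_norm q (f - ∑ i, (μ i * inner ℝ (w i) f) • w i)
  rw [inner_sub_right, h2] at h3
  have h4 : ‖q‖ * ((1 - b) * ‖q‖) ≤ ‖q‖ * ‖f - ∑ i, (μ i * inner ℝ (w i) f) • w i‖ := by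
    nlinarith
  exact le_of_mul_le_mul_left h4 h0

/-- A spectral gap forces almost invariance of the spectral subspace. -/
theorem norm_sub_specProj_isometry_le (hw : Orthonormal ℝ w) {g₀ κ : ℝ}
    (hJ : ∀ i, i ∉ J → μ i ≤ b - g₀) (hJ' : ∀ i ∈ J, b ≤ μ i) (hb : 0 ≤ b - g₀) (hg : 0 < g₀)
    (A : H →L[ℝ] H) (hA : ∀ q, A q = ∑ i, (μ i * inner ℝ (w i) q) • w i) (τ : H ≃ₗᵢ[ℝ] H)
    (hκ : ∀ v, ‖τ (A v) - A (τ v)‖ ≤ κ * ‖v‖) {i : ι} (hi : i ∈ J) :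
    ‖τ (w i) - specProj w J (τ (w i))‖ ≤ κ / g₀ := by
  classical
  set q := τ (w i) - specProj w J (τ (w i)) with hq
  have hκ0 : ‖τ (A (w i)) - A (τ (w i))‖ ≤ κ := by simpa [hw.1 i] using hκ (w i)
  rcases eq_or_lt_of_le (norm_nonneg q) with h0 | h0
  · rw [← h0]
    exact div_nonneg ((norm_nonneg _).trans hκ0) hg.le
  have hAw : A (w i) = μ i • w i := by
    rw [hA]
    simp_rw [orthonormal_iff_ite.1 hw]
    simp
  have h1 := inner_sub_specProj_le hw hJ hb (τ (w i))
  rw [← hA, ← hq] at h1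
  have h2 : inner ℝ q (τ (w i)) = ‖q‖ ^ 2 := by
    have h3 : inner ℝ q (specProj w J (τ (w i))) = 0 := by
      rw [real_inner_comm]; exact inner_specProj_sub hw J _ _
    rw [← real_inner_self_eq_norm_sq]
    conv_rhs => rw [hq, inner_sub_right, ← hq, h3, sub_zero]
  have h3 := real_inner_le_norm q (τ (A (w i)) - A (τ (w i)))
  rw [inner_sub_right, hAw, map_smul, real_inner_smul_right, h2] at h3
  rw [hAw, map_smul] at hκ0
  have h4 := hJ' i hi
  rw [le_div_iff₀ hg]
  have h5 : ‖q‖ * (‖q‖ * g₀) ≤ ‖q‖ * κ := by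
    have h6 := mul_le_mul_of_nonneg_left hκ0 h0.le
    nlinarith [mul_le_mul_of_nonneg_right h4 (sq_nonneg ‖q‖)]
  exact le_of_mul_le_mul_left h5 h0

theorem exists_spectral_gap (hμ : ∀ i, 0 ≤ μ i) (D : ℕ) (hD : 4 * ∑ i, μ i ≤ D) :
    ∃ (b : ℝ) (J : Finset ι), 1 / 4 ≤ b - 1 / (4 * (D + 1)) ∧ b ≤ 1 / 2 ∧ J.card ≤ D ∧
      (∀ i, i ∉ J → μ i ≤ b - 1 / (4 * (D + 1))) ∧ ∀ i ∈ J, b ≤ μ i := by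
  classical
  set g₀ : ℝ := 1 / (4 * (D + 1)) with hg
  have hg0 : 0 < g₀ := by positivity
  have hcard : ∀ J : Finset ι, (∀ i ∈ J, 1 / 4 ≤ μ i) → J.card ≤ D := by
    intro J hJ
    have h1 : (J.card : ℝ) * (1 / 4) ≤ ∑ i ∈ J, μ i := by
      rw [← nsmul_eq_mul]; exact Finset.card_nsmul_le_sum _ _ _ hJ
    have h2 : ∑ i ∈ J, μ i ≤ ∑ i, μ i :=
      Finset.sum_le_sum_of_subset_of_nonneg (Finset.subset_univ _) fun i _ _ => hμ i
    have : (J.card : ℝ) ≤ D := by linarith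
    exact_mod_cast this
  obtain ⟨k, hk, hgap⟩ : ∃ k ≤ D, ∀ i, μ i < 1 / 4 + (k + 1) * g₀ → μ i < 1 / 4 + k * g₀ := by
    by_contra! hcon
    have hne : Nonempty ι := ⟨(hcon 0 (Nat.zero_le _)).choose⟩
    choose! f hf1 hf2 using hcon
    have hinj : Set.InjOn f ((Finset.range (D + 1) : Finset ℕ) : Set ℕ) := by
      have key : ∀ j k, j ≤ D → k ≤ D → f j = f k → j ≤ k := by
        intro j k hj hk hjk
        have h1 := hf1 k hk
        have h2 := hf2 j hj
        rw [hjk] at h2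
        have h3 : (j : ℝ) * g₀ < (k + 1) * g₀ := by linarith
        have h4 : (j : ℝ) < k + 1 := lt_of_mul_lt_mul_right h3 hg0.le
        have : j < k + 1 := by exact_mod_cast h4
        omega
      intro j hj k hk hjk
      rw [Finset.coe_range, Set.mem_Iio] at hj hk
      exact le_antisymm (key j k (by omega) (by omega) hjk) (key k j (by omega) (by omega) hjk.symm)
    have h1 := hcard ((Finset.range (D + 1)).image f) (by
      intro i hi
      obtain ⟨k, hk, rfl⟩ := Finset.mem_image.1 hi
      have := hf2 k (by rw [Finset.mem_range] at hk; omega)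
      have h0 : 0 ≤ (k : ℝ) * g₀ := by positivity
      linarith)
    rw [Finset.card_image_of_injOn hinj, Finset.card_range] at h1
    omega
  refine ⟨1 / 4 + (k + 1) * g₀, Finset.univ.filter fun i => 1 / 4 + (k + 1) * g₀ ≤ μ i, ?_, ?_,
    hcard _ ?_, ?_, ?_⟩
  · have h0 : 0 ≤ (k : ℝ) * g₀ := by positivity
    linarith
  · have h1 : ((k : ℝ) + 1) * g₀ ≤ (D + 1) * g₀ := by
      have : (k : ℝ) ≤ D := by exact_mod_cast hk
      gcongr
    have h2 : ((D : ℝ) + 1) * g₀ = 1 / 4 := by rw [hg]; field_simp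
    linarith
  · intro i hi
    have h0 : 0 ≤ ((k : ℝ) + 1) * g₀ := by positivity
    have := (Finset.mem_filter.1 hi).2
    linarith
  · intro i hi
    have h1 : μ i < 1 / 4 + (k + 1) * g₀ := by
      by_contra! h
      exact hi (Finset.mem_filter.2 ⟨Finset.mem_univ _, h⟩)
    have := hgap i h1
    linarith
  · intro i hi
    exact (Finset.mem_filter.1 hi).2

variable {G : Type*} [Group G]

theorem unitary_mul_apply (τ : G →* H ≃ₗᵢ[ℝ] H) (g h : G) (v : H) :
    τ (g * h) v = τ g (τ h v) := by
  rw [map_mul]; rfl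

/-- The displacement of the range of `P` under a unitary representation. -/
noncomputable def opSeminorm (τ : G →* H ≃ₗᵢ[ℝ] H) (P : H →L[ℝ] H) : GroupSeminorm G where
  toFun g := ‖((τ g : H ≃L[ℝ] H) : H →L[ℝ] H).comp P - P‖
  map_one' := by
    have : ((τ 1 : H ≃L[ℝ] H) : H →L[ℝ] H).comp P = P := by
      ext v; simp
    rw [this, sub_self, norm_zero]
  mul_le' g h := by
    refine ContinuousLinearMap.opNorm_le_bound _ (by positivity) fun v => ?_
    have h1 := (((τ g : H ≃L[ℝ] H) : H →L[ℝ] H).comp P - P).le_opNorm v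
    have h2 := (((τ h : H ≃L[ℝ] H) : H →L[ℝ] H).comp P - P).le_opNorm v
    simp only [sub_apply, ContinuousLinearMap.comp_apply,
      ContinuousLinearEquiv.coe_coe, LinearIsometryEquiv.coe_toContinuousLinearEquiv] at h1 h2 ⊢
    rw [unitary_mul_apply]
    have h3 : ‖τ g (τ h (P v)) - τ g (P v)‖ = ‖τ h (P v) - P v‖ := by
      rw [← map_sub, LinearIsometryEquiv.norm_map]
    have h4 := norm_sub_le_norm_sub_add_norm_sub (τ g (τ h (P v))) (τ g (P v)) (P v)
    rw [add_mul]
    linarith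
  inv' g := by
    have key : ∀ g, ‖((τ g⁻¹ : H ≃L[ℝ] H) : H →L[ℝ] H).comp P - P‖ ≤
        ‖((τ g : H ≃L[ℝ] H) : H →L[ℝ] H).comp P - P‖ := by
      intro g
      refine ContinuousLinearMap.opNorm_le_bound _ (norm_nonneg _) fun v => ?_
      refine le_trans (le_of_eq ?_) ((((τ g : H ≃L[ℝ] H) : H →L[ℝ] H).comp P - P).le_opNorm v)
      simp only [sub_apply, ContinuousLinearMap.comp_apply,
        ContinuousLinearEquiv.coe_coe, LinearIsometryEquiv.coe_toContinuousLinearEquiv]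
      have h1 : τ g (τ g⁻¹ (P v)) = P v := by
        rw [← unitary_mul_apply]; simp
      rw [← LinearIsometryEquiv.norm_map (τ g) (τ g⁻¹ (P v) - P v), map_sub, h1, norm_sub_rev]
    refine le_antisymm (key g) ?_
    simpa using key g⁻¹

theorem norm_sub_le_opSeminorm (τ : G →* H ≃ₗᵢ[ℝ] H) (P : H →L[ℝ] H) (g : G) (v : H) :
    ‖τ g (P v) - P v‖ ≤ opSeminorm τ P g * ‖v‖ :=
  (((τ g : H ≃L[ℝ] H) : H →L[ℝ] H).comp P - P).le_opNorm v

theorem opSeminorm_le (τ : G →* H ≃ₗᵢ[ℝ] H) (P : H →L[ℝ] H) (g : G) {c : ℝ} (hc : 0 ≤ c)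
    (h : ∀ v, ‖τ g (P v) - P v‖ ≤ c * ‖v‖) : opSeminorm τ P g ≤ c :=
  ContinuousLinearMap.opNorm_le_bound _ hc h

/-- Elements whose first powers almost preserve the range of `P` without moving it far move it
very little. -/
theorem opSeminorm_trap (τ : G →* H ≃ₗᵢ[ℝ] H) (P : H →L[ℝ] H) (hP : ∀ v, ‖P v‖ ≤ ‖v‖)
    (hPP : ∀ v, P (P v) = P v) {η : ℝ} (g : G) (m : ℕ) (hm : 0 < m)
    (hη : ∀ i < m, ∀ v, ‖τ (g ^ i) (P v) - P (τ (g ^ i) (P v))‖ ≤ η * ‖v‖) (hη0 : 0 ≤ η)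
    (hx : ∀ i < m, opSeminorm τ P (g ^ i) ≤ 1 / 2) : opSeminorm τ P g ≤ 4 / m + 4 * η := by
  have hm' : (0 : ℝ) < m := by exact_mod_cast hm
  suffices h : opSeminorm τ P g ≤ 2 / m + 2 * η + opSeminorm τ P g / 2 by
    have : 4 / (m : ℝ) = 2 * (2 / m) := by ring
    linarith
  refine opSeminorm_le τ P g (by have := apply_nonneg (opSeminorm τ P) g; positivity) fun v => ?_
  set e := P v with he
  set S : H := ∑ i ∈ Finset.range m, (τ (g ^ i) e - e) with hS
  have hSn : ‖S‖ ≤ m * (1 / 2 * ‖v‖) := by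
    refine (norm_sum_le _ _).trans ?_
    refine (Finset.sum_le_card_nsmul _ _ (1 / 2 * ‖v‖) fun i hi => ?_).trans (by simp)
    refine (norm_sub_le_opSeminorm τ P (g ^ i) v).trans ?_
    gcongr
    exact hx i (Finset.mem_range.1 hi)
  have hSP : ‖S - P S‖ ≤ m * (η * ‖v‖) := by
    have : S - P S = ∑ i ∈ Finset.range m, (τ (g ^ i) e - P (τ (g ^ i) e)) := by
      rw [hS, map_sum, ← Finset.sum_sub_distrib]
      refine Finset.sum_congr rfl fun i _ => ?_
      rw [map_sub, he, hPP]
      abel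
    rw [this]
    refine (norm_sum_le _ _).trans ?_
    exact (Finset.sum_le_card_nsmul _ _ (η * ‖v‖) fun i hi =>
      hη i (Finset.mem_range.1 hi) v).trans (by simp)
  have htel : τ g S - S = (τ (g ^ m) e - e) - (m : ℝ) • (τ g e - e) := by
    have h1 : ∑ i ∈ Finset.range m, τ g (τ (g ^ i) e) - ∑ i ∈ Finset.range m, τ (g ^ i) e =
        τ (g ^ m) e - e := by
      have := Finset.sum_range_sub (fun i => τ (g ^ i) e) m
      rw [← Finset.sum_sub_distrib]
      simp only [pow_zero, map_one, LinearIsometryEquiv.coe_one, id_eq] at this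
      rw [← this]
      refine Finset.sum_congr rfl fun i _ => ?_
      rw [pow_succ' g i, unitary_mul_apply]
    rw [hS, map_sum]
    simp only [map_sub, Finset.sum_sub_distrib, Finset.sum_const, Finset.card_range]
    rw [← h1, smul_sub, Nat.cast_smul_eq_nsmul, Nat.cast_smul_eq_nsmul]
    abel
  have hgS : ‖τ g S - S‖ ≤ opSeminorm τ P g * ‖S‖ + 2 * ‖S - P S‖ := by
    have h1 := norm_sub_le_opSeminorm τ P g S
    have h2 : ‖τ g (S - P S)‖ = ‖S - P S‖ := LinearIsometryEquiv.norm_map _ _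
    have h3 : τ g S - S = (τ g (P S) - P S) + τ g (S - P S) - (S - P S) := by
      rw [map_sub]; abel
    rw [h3]
    have h4 := norm_sub_le ((τ g (P S) - P S) + τ g (S - P S)) (S - P S)
    have h5 := norm_add_le (τ g (P S) - P S) (τ g (S - P S))
    linarith
  have hm2 : ‖(m : ℝ) • (τ g e - e)‖ ≤ 2 * ‖v‖ + ‖τ g S - S‖ := by
    have h1 : (m : ℝ) • (τ g e - e) = (τ (g ^ m) e - e) - (τ g S - S) := by
      rw [htel]; abel
    rw [h1]
    have h2 := norm_sub_le (τ (g ^ m) e - e) (τ g S - S)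
    have h3 := norm_sub_le (τ (g ^ m) e) e
    have h4 : ‖τ (g ^ m) e‖ = ‖e‖ := LinearIsometryEquiv.norm_map _ _
    have := hP v
    linarith
  rw [norm_smul, Real.norm_natCast] at hm2
  have hx0 := apply_nonneg (opSeminorm τ P) g
  have h6 := mul_le_mul_of_nonneg_left hSn hx0
  have h7 : (m : ℝ) * ‖τ g e - e‖ ≤ m * ((2 / m + 2 * η + opSeminorm τ P g / 2) * ‖v‖) := by
    have : (m : ℝ) * ((2 / m + 2 * η + opSeminorm τ P g / 2) * ‖v‖) =
      2 * ‖v‖ + 2 * (m * (η * ‖v‖)) + opSeminorm τ P g * (m * (1 / 2 * ‖v‖)) := by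
      field_simp
    rw [this]
    linarith
  exact le_of_mul_le_mul_left h7 hm'

theorem exists_spectral_seminorm (τ : G →* H ≃ₗᵢ[ℝ] H) {β : Type*} (B : Finset β) (u : β → H)
    (A : H → H) (hA : ∀ q, A q = ∑ y ∈ B, inner ℝ (u y) q • u y)
    (D : ℕ) (hD : 4 * ∑ y ∈ B, ‖u y‖ ^ 2 ≤ D) : ∃ x : GroupSeminorm G,
      (∀ f, 20 * ‖f - A f‖ ≤ ‖f‖ → ∀ g, x g ≤ 1 / 2 → 10 * ‖τ g f - f‖ ≤ 7 * ‖f‖) ∧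
      (∀ g t, 0 ≤ t → (∀ y ∈ B, ‖τ g (u y) - u y‖ ≤ t) →
        x g ≤ 4 * D * (∑ y ∈ B, ‖u y‖) * t) ∧
      (∀ g κ, 0 ≤ κ → ∀ m : ℕ, 0 < m →
        (∀ i < m, ∀ v, ‖τ (g ^ i) (A v) - A (τ (g ^ i) v)‖ ≤ κ * ‖v‖) →
        (∀ i < m, x (g ^ i) ≤ 1 / 2) → x g ≤ 4 / m + 16 * D * (D + 1) * κ) := by
  classical
  obtain ⟨n, w, μ, hw, hμ, hdec, htr⟩ := exists_spectral_decomposition B u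
  obtain ⟨b, J, hb1, hb2, hJc, hJ, hJ'⟩ := exists_spectral_gap hμ D (by linarith)
  set g₀ : ℝ := 1 / (4 * (D + 1)) with hg
  have hg0 : 0 < g₀ := by positivity
  have hJc' : (J.card : ℝ) ≤ D := by exact_mod_cast hJc
  set P := specProj w J
  have hPle : ∀ v, ‖P v‖ ≤ ‖v‖ := norm_specProj_le hw J
  let A' : H →L[ℝ] H := ∑ y ∈ B, (innerSL ℝ (u y)).smulRight (u y)
  have hA' : ∀ q, A' q = A q := by
    intro q
    simp [A', hA]
  have hA'' : ∀ q, A' q = ∑ i, (μ i * inner ℝ (w i) q) • w i := by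
    intro q
    rw [hA', hA, hdec]
  refine ⟨opSeminorm τ P, ?_, ?_, ?_⟩
  · intro f hf g hx
    have h1 := norm_sub_specProj_mul_le hw (b := b) (fun i hi => (hJ i hi).trans (by linarith))
      (by linarith) f
    rw [← hA'', hA'] at h1
    have h2 := norm_sub_le_opSeminorm τ P g f
    have h3 : τ g f - f = (τ g (P f) - P f) + τ g (f - P f) - (f - P f) := by
      rw [map_sub]; abel
    have h4 := norm_sub_le ((τ g (P f) - P f) + τ g (f - P f)) (f - P f)
    have h5 := norm_add_le (τ g (P f) - P f) (τ g (f - P f))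
    rw [LinearIsometryEquiv.norm_map] at h5
    rw [h3]
    have h6 : opSeminorm τ P g * ‖f‖ ≤ 1 / 2 * ‖f‖ := by gcongr
    have h7 : 1 / 2 * ‖f - P f‖ ≤ (1 - b) * ‖f - P f‖ := by gcongr; linarith
    have h8 : (1 - b) * ‖f - P f‖ ≤ ‖f - A f‖ := h1
    linarith
  · intro g t ht hu
    refine opSeminorm_le τ P g (by positivity) fun v => ?_
    set v' : H := ∑ i ∈ J, ((μ i)⁻¹ * inner ℝ (w i) v) • w i with hv'
    have hμpos : ∀ i ∈ J, 1 / 4 ≤ μ i := fun i hi => by linarith [hJ' i hi]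
    have hinner : ∀ i, |inner ℝ (w i) v| ≤ ‖v‖ := by
      intro i
      have := abs_real_inner_le_norm (w i) v
      rwa [hw.1 i, one_mul] at this
    have hv'n : ‖v'‖ ≤ D * (4 * ‖v‖) := by
      refine (norm_sum_le _ _).trans ?_
      refine (Finset.sum_le_card_nsmul _ _ (4 * ‖v‖) fun i hi => ?_).trans ?_
      · rw [norm_smul, hw.1 i, mul_one, Real.norm_eq_abs, abs_mul, abs_inv,
          abs_of_pos (by linarith [hμpos i hi] : 0 < μ i)]
        refine mul_le_mul ?_ (hinner i) (abs_nonneg _) (by norm_num)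
        rw [inv_le_comm₀ (by linarith [hμpos i hi]) (by norm_num)]
        linarith [hμpos i hi]
      · rw [nsmul_eq_mul]; gcongr
    have hPv : P v = A' v' := by
      rw [hA'', specProj_apply, ← Finset.sum_subset (Finset.subset_univ J)]
      · refine Finset.sum_congr rfl fun i hi => ?_
        congr 1
        have h1 : inner ℝ (w i) v' = (μ i)⁻¹ * inner ℝ (w i) v := by
          rw [hv', inner_sum]
          simp_rw [real_inner_smul_right, orthonormal_iff_ite.1 hw]
          simp [hi]
        have : μ i ≠ 0 := by linarith [hμpos i hi]
        rw [h1]; field_simp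
      · intro i _ hi
        have h1 : inner ℝ (w i) v' = 0 := by
          rw [hv', inner_sum]
          simp_rw [real_inner_smul_right, orthonormal_iff_ite.1 hw]
          simp [hi]
        rw [h1]; simp
    rw [hPv, hA', hA, map_sum, ← Finset.sum_sub_distrib]
    have h1 : ∀ y ∈ B, ‖τ g (inner ℝ (u y) v' • u y) - inner ℝ (u y) v' • u y‖ ≤
        ‖u y‖ * (D * (4 * ‖v‖) * t) := by
      intro y hy
      rw [map_smul, ← smul_sub, norm_smul, Real.norm_eq_abs]
      have h2 := abs_real_inner_le_norm (u y) v'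
      calc _ ≤ (‖u y‖ * ‖v'‖) * t := mul_le_mul h2 (hu y hy) (norm_nonneg _) (by positivity)
        _ ≤ (‖u y‖ * (D * (4 * ‖v‖))) * t := by gcongr
        _ = _ := by ring
    refine (norm_sum_le _ _).trans ((Finset.sum_le_sum h1).trans (le_of_eq ?_))
    rw [← Finset.sum_mul]
    ring
  · intro g κ hκ m hm hcomm hx
    have := opSeminorm_trap τ P hPle (specProj_specProj hw J) (η := D * (κ / g₀)) g m hm ?_
      (by positivity) hx
    · refine this.trans (le_of_eq ?_)
      rw [hg]; field_simp; ring
    · intro i hi v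
      have h1 : ∀ j ∈ J, ‖τ (g ^ i) (w j) - P (τ (g ^ i) (w j))‖ ≤ κ / g₀ := fun j hj =>
        norm_sub_specProj_isometry_le hw hJ hJ' (by linarith) hg0 A' hA'' (τ (g ^ i))
          (fun v => by rw [hA', hA']; exact hcomm i hi v) hj
      have h2 : τ (g ^ i) (P v) - P (τ (g ^ i) (P v)) =
          ∑ j ∈ J, inner ℝ (w j) v • (τ (g ^ i) (w j) - P (τ (g ^ i) (w j))) := by
        have h3 : P v = ∑ j ∈ J, inner ℝ (w j) v • w j := specProj_apply J v
        rw [h3]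
        simp only [map_sum, map_smul, smul_sub, Finset.sum_sub_distrib]
      rw [h2]
      refine (norm_sum_le _ _).trans ?_
      refine (Finset.sum_le_card_nsmul _ _ (‖v‖ * (κ / g₀)) fun j hj => ?_).trans ?_
      · rw [norm_smul]
        refine mul_le_mul ?_ (h1 j hj) (norm_nonneg _) (norm_nonneg _)
        have := norm_inner_le_norm (𝕜 := ℝ) (w j) v
        rwa [hw.1 j, one_mul] at this
      · rw [nsmul_eq_mul]
        have : (J.card : ℝ) * (‖v‖ * (κ / g₀)) ≤ D * (‖v‖ * (κ / g₀)) := by gcongr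
        linarith

end Spectral

section Translation

variable {G : Type*}

/-- A finitely supported function as an element of `ℓ²(G)`. -/
noncomputable def l2Of (f : G → ℝ) (hf : (Function.support f).Finite) :
    lp (fun _ : G => ℝ) 2 :=
  ⟨f, by
    change Memℓp _ 2
    rw [memℓp_gen_iff (by norm_num)]
    refine summable_of_hasFiniteSupport (hf.subset fun z hz => ?_)
    contrapose! hz
    simp [Function.notMem_support.1 hz]⟩

theorem l2Of_apply (f : G → ℝ) (hf : (Function.support f).Finite) (z : G) :
    l2Of f hf z = f z := rfl

theorem l2_norm_sq (v : lp (fun _ : G => ℝ) 2) : ‖v‖ ^ 2 = ∑' z, v z ^ 2 := by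
  rw [← real_inner_self_eq_norm_sq, lp.inner_eq_tsum]
  refine tsum_congr fun z => ?_
  simp [sq]

theorem l2_norm_sq_eq_sum (v : lp (fun _ : G => ℝ) 2) (F : Finset G)
    (h : ∀ z, v z ≠ 0 → z ∈ F) : ‖v‖ ^ 2 = ∑ z ∈ F, v z ^ 2 := by
  rw [l2_norm_sq]
  refine tsum_eq_sum fun z hz => ?_
  have : v z = 0 := by_contra fun hv => hz (h z hv)
  simp [this]

theorem sum_sq_le_l2_norm_sq (v : lp (fun _ : G => ℝ) 2) (F : Finset G) :
    ∑ z ∈ F, v z ^ 2 ≤ ‖v‖ ^ 2 := by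
  have h : HasSum (fun z => inner ℝ (v z) (v z)) (inner ℝ v v) := lp.hasSum_inner v v
  rw [real_inner_self_eq_norm_sq] at h
  have h2 := sum_le_hasSum F (fun z _ => real_inner_self_nonneg (x := v z)) h
  refine le_trans (le_of_eq (Finset.sum_congr rfl fun z _ => ?_)) h2
  simp [sq]

variable [Group G]

/-- Left translation by `g` on `ℓ²(G)`, as a linear isometry. -/
noncomputable def l2TranslateIsometry (g : G) :
    lp (fun _ : G => ℝ) 2 →ₗᵢ[ℝ] lp (fun _ : G => ℝ) 2 where
  toFun v := ⟨fun z => v (g⁻¹ * z), by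
    have h := lp.memℓp v
    change Memℓp _ 2
    rw [memℓp_gen_iff (by norm_num)] at h ⊢
    exact (Equiv.mulLeft g⁻¹).summable_iff.2 h⟩
  map_add' v w := by ext z; rfl
  map_smul' c v := by ext z; rfl
  norm_map' v := by
    rw [lp.norm_eq_tsum_rpow (by norm_num), lp.norm_eq_tsum_rpow (by norm_num)]
    congr 1
    exact (Equiv.mulLeft g⁻¹).tsum_eq fun z => ‖v z‖ ^ (2 : ENNReal).toReal

theorem l2TranslateIsometry_apply (g : G) (v : lp (fun _ : G => ℝ) 2) (z : G) :
    l2TranslateIsometry g v z = v (g⁻¹ * z) := rfl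

/-- The left regular representation of `G` on `ℓ²(G)`. -/
noncomputable def l2Translate :
    G →* (lp (fun _ : G => ℝ) 2 ≃ₗᵢ[ℝ] lp (fun _ : G => ℝ) 2) where
  toFun g :=
    { toLinearEquiv := LinearEquiv.ofLinearMap (l2TranslateIsometry g).toLinearMap
        (l2TranslateIsometry g⁻¹).toLinearMap
        (by ext v z; simp [l2TranslateIsometry_apply])
        (by ext v z; simp [l2TranslateIsometry_apply])
      norm_map' := (l2TranslateIsometry g).norm_map }
  map_one' := by
    ext v z
    change v (1⁻¹ * z) = v z
    simp
  map_mul' g h := by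
    ext v z
    change v ((g * h)⁻¹ * z) = v (h⁻¹ * (g⁻¹ * z))
    simp [mul_assoc]

theorem l2Translate_apply (g : G) (v : lp (fun _ : G => ℝ) 2) (z : G) :
    l2Translate g v z = v (g⁻¹ * z) := rfl

theorem l2_inner_translate (v w : lp (fun _ : G => ℝ) 2) (y : G) (F : Finset G)
    (h : ∀ z, v z ≠ 0 → z ∈ F) :
    inner ℝ (l2Translate y v) w = ∑ s ∈ F, v s * w (y * s) := by
  rw [lp.inner_eq_tsum, ← (Equiv.mulLeft y).tsum_eq]
  rw [tsum_eq_sum (s := F)]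
  · refine Finset.sum_congr rfl fun s _ => ?_
    simp [l2Translate_apply, mul_comm]
  · intro s hs
    have : v s = 0 := by_contra fun hv => hs (h s hv)
    simp [l2Translate_apply, this]

/-- Convolving a tent function of width `r` twice with a symmetric probability kernel supported
at scale `δ` moves it by at most `2 δ / r`. -/
theorem abs_mollify_tent_sub_le (ν : GroupSeminorm G) {r δ : ℝ} (hr : 0 < r)
    (φ : G → ℝ) (U : Finset G) (h0 : ∀ s, 0 ≤ φ s) (h1 : ∑ s ∈ U, φ s = 1)
    (hsupp : ∀ s, φ s ≠ 0 → ν s < δ) (z : G) :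
    |∑ s ∈ U, φ s * (∑ t ∈ U, φ t * tent ν r (z * s⁻¹ * t)) - tent ν r z| ≤ 2 * δ / r := by
  have hmove : ∀ u k, |tent ν r (u * k) - tent ν r u| ≤ ν k / r := by
    intro u k
    have h := abs_tent_sub_le ν hr k⁻¹ u⁻¹
    rw [map_inv_eq_map] at h
    unfold tent at h ⊢
    rwa [← map_inv_eq_map ν (u * k), mul_inv_rev, ← map_inv_eq_map ν u]
  have hδr : ∀ s, φ s ≠ 0 → ν s / r ≤ δ / r := fun s hs => by
    have := (hsupp s hs).le
    gcongr
  have havg : ∀ (c : G → ℝ) (a e : ℝ), (∀ s, φ s ≠ 0 → |c s - a| ≤ e) →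
      |∑ s ∈ U, φ s * c s - a| ≤ e := by
    intro c a e h
    have h2 : ∑ s ∈ U, φ s * c s - a = ∑ s ∈ U, φ s * (c s - a) := by
      simp_rw [mul_sub, Finset.sum_sub_distrib, ← Finset.sum_mul, h1, one_mul]
    rw [h2]
    refine (Finset.abs_sum_le_sum_abs _ _).trans ?_
    calc ∑ s ∈ U, |φ s * (c s - a)| ≤ ∑ s ∈ U, φ s * e := by
          refine Finset.sum_le_sum fun s _ => ?_
          rw [abs_mul, abs_of_nonneg (h0 s)]
          rcases eq_or_ne (φ s) 0 with hs | hs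
          · simp [hs]
          · exact mul_le_mul_of_nonneg_left (h s hs) (h0 s)
      _ = e := by rw [← Finset.sum_mul, h1, one_mul]
  refine havg _ _ _ fun s hs => havg _ _ _ fun t ht => ?_
  have h2 := hmove (z * s⁻¹) t
  have h3 := hmove z s⁻¹
  rw [map_inv_eq_map] at h3
  have h4 := abs_sub_le (tent ν r (z * s⁻¹ * t)) (tent ν r (z * s⁻¹)) (tent ν r z)
  have h5 := hδr s hs
  have h6 := hδr t ht
  rw [mul_div_assoc]
  linarith

/-- The frame operator of the translates `y φ`, `y ∈ B`, almost commutes with `τ g` if `B` is almost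
invariant under `g`. -/
theorem norm_frame_commutator_le [DecidableEq G] {H : Type*} [NormedAddCommGroup H]
    [InnerProductSpace ℝ H] (τ : G →* H ≃ₗᵢ[ℝ] H) (φ : H) (B : Finset G) (g : G) (v : H) :
    ‖τ g (∑ y ∈ B, inner ℝ (τ y φ) v • τ y φ) - ∑ y ∈ B, inner ℝ (τ y φ) (τ g v) • τ y φ‖ ≤
      2 * ((g • B) \ B).card * ‖φ‖ ^ 2 * ‖v‖ := by
  set F : G → H := fun y => inner ℝ (τ y φ) (τ g v) • τ y φ with hF
  have h1 : τ g (∑ y ∈ B, inner ℝ (τ y φ) v • τ y φ) = ∑ y ∈ g • B, F y := by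
    rw [map_sum, Finset.smul_finset_def, Finset.sum_image (by simp)]
    refine Finset.sum_congr rfl fun y _ => ?_
    simp only [hF, smul_eq_mul, unitary_mul_apply, map_smul, LinearIsometryEquiv.inner_map_map]
  have hFn : ∀ y, ‖F y‖ ≤ ‖φ‖ ^ 2 * ‖v‖ := by
    intro y
    have := norm_inner_le_norm (𝕜 := ℝ) (τ y φ) (τ g v)
    rw [LinearIsometryEquiv.norm_map, LinearIsometryEquiv.norm_map] at this
    rw [hF, norm_smul, LinearIsometryEquiv.norm_map]
    calc _ ≤ ‖φ‖ * ‖v‖ * ‖φ‖ := by gcongr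
      _ = _ := by ring
  have hcard : (B \ (g • B)).card = ((g • B) \ B).card := by
    have h2 := Finset.card_sdiff_add_card_inter B (g • B)
    have h3 := Finset.card_sdiff_add_card_inter (g • B) B
    rw [Finset.card_smul_finset] at h3
    rw [Finset.inter_comm] at h3
    omega
  rw [h1, ← Finset.sum_sdiff_sub_sum_sdiff]
  refine (norm_sub_le _ _).trans ?_
  have h2 := norm_sum_le_of_le ((g • B) \ B) fun y _ => hFn y
  have h3 := norm_sum_le_of_le (B \ (g • B)) fun y _ => hFn y
  rw [Finset.sum_const, nsmul_eq_mul] at h2 h3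
  rw [hcard] at h3
  linarith

set_option maxHeartbeats 1000000 in
/-- A seminorm extracted from a spectral projection of a convolution-type operator. It detects small
elements, is Lipschitz for conjugation-uniformly small elements, and has the trapping property for
elements whose powers almost preserve `B`. -/
theorem exists_peterWeyl_seminorm [DecidableEq G] (ν : GroupSeminorm G) {r δ C₁ C₂ : ℝ}
    (hr : 0 < r) (hδ : 0 < δ) (hC₁ : 1 ≤ C₁) (hC₂ : 1 ≤ C₂) (hδr : 80 * C₁ * δ ≤ r)
    (U V W B : Finset G) (hU : ∀ g, ν g ≤ 2 * r → g ∈ U) (hV : ∀ g ∈ V, ν g ≤ r / 2)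
    (hUV : (U.card : ℝ) ≤ C₁ * V.card) (hW : ∀ g ∈ W, ν g ≤ δ / 2) (hW0 : W.Nonempty)
    (hUB : U ⊆ B) (hBW : (B.card : ℝ) ≤ C₂ * W.card) (D : ℕ) (hD : 8 * C₂ ≤ D) :
    ∃ x : GroupSeminorm G, (∀ g, x g ≤ 1 / 2 → ν g ≤ 2 * r) ∧
      (∀ g t, 0 ≤ t → (∀ y ∈ B, ν (y⁻¹ * g * y) ≤ t) → x g ≤ 16 * D * C₂ ^ 2 / δ * t) ∧
      (∀ g κ, 0 ≤ κ → ∀ m : ℕ, 0 < m →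
        (∀ i < m, (((g ^ i • B) \ B).card : ℝ) ≤ κ * W.card) →
        (∀ i < m, x (g ^ i) ≤ 1 / 2) → x g ≤ 4 / m + 64 * D * (D + 1) * κ) := by
  have hw0 : (0 : ℝ) < W.card := by exact_mod_cast hW0.card_pos
  have hδ2 : 2 * δ ≤ r := by nlinarith
  -- the mollifier
  have htU : ∀ z, tent ν δ z ≠ 0 → z ∈ U := fun z hz =>
    hU z (by have := lt_of_tent_ne_zero ν hδ hz; linarith)
  have hWU : W ⊆ U := fun g hg => hU g (by have := hW g hg; linarith)
  set Z := ∑ s ∈ U, tent ν δ s with hZ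
  have hZW : (W.card : ℝ) / 2 ≤ Z := by
    have h1 : (W.card : ℝ) / 2 = ∑ s ∈ W, (1 / 2 : ℝ) := by simp; ring
    rw [h1]
    refine (Finset.sum_le_sum fun s hs => ?_).trans
      (Finset.sum_le_sum_of_subset_of_nonneg hWU fun s _ _ => tent_nonneg ν δ s)
    refine le_max_of_le_left ?_
    have : ν s / δ ≤ 1 / 2 := by
      rw [div_le_iff₀ hδ]; have := hW s hs; linarith
    linarith
  have hZ0 : 0 < Z := by linarith
  set φ : G → ℝ := fun s => tent ν δ s / Z with hφ
  have hφ0 : ∀ s, 0 ≤ φ s := fun s => div_nonneg (tent_nonneg ν δ s) hZ0.le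
  have hφs : ∀ s, φ s ≠ 0 → tent ν δ s ≠ 0 := fun s hs h => hs (by simp [hφ, h])
  have hφ1 : ∑ s ∈ U, φ s = 1 := by
    rw [hφ, ← Finset.sum_div, div_self hZ0.ne']
  have hφinv : ∀ s, φ s⁻¹ = φ s := fun s => by simp [hφ, tent]
  have hφlt : ∀ s, φ s ≠ 0 → ν s < δ := fun s hs => lt_of_tent_ne_zero ν hδ (hφs s hs)
  have hφU : ∀ s, φ s ≠ 0 → s ∈ U := fun s hs => htU s (hφs s hs)
  set Φ := l2Of φ (U.finite_toSet.subset fun s hs => hφU s hs) with hΦ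
  have hΦn : ‖Φ‖ ^ 2 ≤ 2 / W.card := by
    rw [l2_norm_sq_eq_sum Φ U hφU]
    have hle : ∀ s, φ s ≤ 1 / Z := fun s => by
      refine div_le_div_of_nonneg_right (max_le ?_ zero_le_one) hZ0.le
      have := div_nonneg (apply_nonneg ν s) hδ.le
      linarith
    calc ∑ z ∈ U, Φ z ^ 2 ≤ ∑ z ∈ U, φ z * (1 / Z) := by
          refine Finset.sum_le_sum fun z _ => ?_
          rw [hΦ, l2Of_apply, sq]
          exact mul_le_mul_of_nonneg_left (hle z) (hφ0 z)
      _ = 1 / Z := by rw [← Finset.sum_mul, hφ1, one_mul]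
      _ ≤ 1 / (W.card / 2) := by gcongr
      _ = _ := by field_simp
  set τ := l2Translate (G := G)
  set u : G → lp (fun _ : G => ℝ) 2 := fun y => τ y Φ with hu
  have hun : ∀ y, ‖u y‖ = ‖Φ‖ := fun y => (τ y).norm_map Φ
  obtain ⟨x, hx1, hx2, hx3⟩ := exists_spectral_seminorm τ B u
    (fun q => ∑ y ∈ B, inner ℝ (u y) q • u y) (fun _ => rfl) D (by
      simp_rw [hun]
      rw [Finset.sum_const, nsmul_eq_mul]
      calc 4 * ((B.card : ℝ) * ‖Φ‖ ^ 2) ≤ 4 * ((C₂ * W.card) * (2 / W.card)) := by gcongr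
        _ = 8 * C₂ := by field_simp; ring
        _ ≤ D := hD)
  refine ⟨x, ?_, ?_, ?_⟩
  · -- a test function
    set f : G → ℝ := tent ν r with hf
    have hflt : ∀ s, f s ≠ 0 → ν s < r := fun s hs => lt_of_tent_ne_zero ν hr hs
    have hfU : ∀ s, f s ≠ 0 → s ∈ U := fun s hs => hU s (by have := hflt s hs; linarith)
    set Ψ := l2Of f (U.finite_toSet.subset fun s hs => hfU s hs) with hΨ
    have hfB : ∀ y, inner ℝ (u y) Ψ = ∑ s ∈ U, φ s * f (y * s) := fun y =>
      l2_inner_translate Φ Ψ y U hφU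
    have hcB : ∀ y, inner ℝ (u y) Ψ ≠ 0 → ν y < r + δ := by
      intro y hy
      rw [hfB] at hy
      obtain ⟨s, _, hs⟩ := Finset.exists_ne_zero_of_sum_ne_zero hy
      have h1 := hφlt s (left_ne_zero_of_mul hs)
      have h2 := hflt _ (right_ne_zero_of_mul hs)
      have h3 := map_mul_le_add ν (y * s) s⁻¹
      rw [mul_inv_cancel_right, map_inv_eq_map] at h3
      linarith
    have hcoe : ∀ z, (∑ y ∈ B, inner ℝ (u y) Ψ • u y) z =
        ∑ s ∈ U, φ s * ∑ t ∈ U, φ t * f (z * s⁻¹ * t) := by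
      intro z
      have h1 : (∑ y ∈ B, inner ℝ (u y) Ψ • u y) z =
          ∑ y ∈ B, inner ℝ (u y) Ψ * φ (y⁻¹ * z) := by
        simp only [lp.coeFn_sum, Finset.sum_apply]
        rfl
      rw [h1]
      have h2 : ∑ y ∈ B, inner ℝ (u y) Ψ * φ (y⁻¹ * z) =
          ∑' y, inner ℝ (u y) Ψ * φ (y⁻¹ * z) := by
        refine (tsum_eq_sum fun y hy => ?_).symm
        by_contra hne
        exact hy (hUB (hU y (by have := hcB y (left_ne_zero_of_mul hne); linarith)))
      rw [h2, ← ((Equiv.inv G).trans (Equiv.mulLeft z)).tsum_eq]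
      rw [tsum_eq_sum (s := U)]
      · refine Finset.sum_congr rfl fun s _ => ?_
        simp [hfB, mul_comm]
      · intro s hs
        have : φ s = 0 := by_contra fun h => hs (hφU s h)
        simp [this]
    have hdiff : ∀ z, |(Ψ - ∑ y ∈ B, inner ℝ (u y) Ψ • u y) z| ≤ 2 * δ / r := by
      intro z
      rw [lp.coeFn_sub, Pi.sub_apply, hcoe, abs_sub_comm]
      exact abs_mollify_tent_sub_le ν hr φ U hφ0 hφ1 hφlt z
    have hsuppd : ∀ z, (Ψ - ∑ y ∈ B, inner ℝ (u y) Ψ • u y) z ≠ 0 → z ∈ U := by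
      intro z hz
      by_contra hzU
      have hfz : f z = 0 := by_contra fun h => hzU (hfU z h)
      rw [lp.coeFn_sub, Pi.sub_apply, hcoe, hΨ, l2Of_apply, hfz, zero_sub, neg_ne_zero] at hz
      obtain ⟨s, _, hs⟩ := Finset.exists_ne_zero_of_sum_ne_zero hz
      obtain ⟨t, _, ht⟩ := Finset.exists_ne_zero_of_sum_ne_zero (right_ne_zero_of_mul hs)
      have h1 := hφlt s (left_ne_zero_of_mul hs)
      have h2 := hφlt t (left_ne_zero_of_mul ht)
      have h3 := hflt _ (right_ne_zero_of_mul ht)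
      refine hzU (hU z ?_)
      have h4 := map_mul_le_add ν (z * s⁻¹ * t) (t⁻¹ * s)
      rw [show z * s⁻¹ * t * (t⁻¹ * s) = z by group] at h4
      have h5 := map_mul_le_add ν t⁻¹ s
      rw [map_inv_eq_map] at h5
      linarith
    have hn1 : ‖Ψ - ∑ y ∈ B, inner ℝ (u y) Ψ • u y‖ ^ 2 ≤ U.card * (2 * δ / r) ^ 2 := by
      rw [l2_norm_sq_eq_sum _ U hsuppd, ← nsmul_eq_mul]
      refine Finset.sum_le_card_nsmul _ _ _ fun z _ => ?_
      rw [← sq_abs]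
      have := hdiff z
      gcongr
    have hn2 : (V.card : ℝ) / 4 ≤ ‖Ψ‖ ^ 2 := by
      refine le_trans ?_ (sum_sq_le_l2_norm_sq Ψ V)
      have h1 : (V.card : ℝ) / 4 = ∑ s ∈ V, (1 / 4 : ℝ) := by simp; ring
      rw [h1]
      refine Finset.sum_le_sum fun s hs => ?_
      have h2 : 1 / 2 ≤ Ψ s := by
        refine le_max_of_le_left ?_
        have : ν s / r ≤ 1 / 2 := by
          rw [div_le_iff₀ hr]; have := hV s hs; linarith
        linarith
      nlinarith
    have hn3 : 20 * ‖Ψ - ∑ y ∈ B, inner ℝ (u y) Ψ • u y‖ ≤ ‖Ψ‖ := by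
      refine le_of_sq_le_sq ?_ (norm_nonneg _)
      have hq : C₁ * (2 * δ / r) ^ 2 ≤ 1 / 1600 := by
        have h1 : C₁ * (δ / r) ≤ 1 / 80 := by
          rw [← mul_div_assoc, div_le_iff₀ hr]; linarith
        have h2 : δ / r ≤ C₁ * (δ / r) := le_mul_of_one_le_left (by positivity) hC₁
        have h3 : 0 ≤ δ / r := by positivity
        have h4 : C₁ * (2 * δ / r) ^ 2 = 4 * (C₁ * (δ / r)) * (δ / r) := by ring
        rw [h4]
        nlinarith
      calc (20 * ‖Ψ - ∑ y ∈ B, inner ℝ (u y) Ψ • u y‖) ^ 2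
          ≤ 400 * (U.card * (2 * δ / r) ^ 2) := by rw [mul_pow]; linarith
        _ ≤ 400 * ((C₁ * V.card) * (2 * δ / r) ^ 2) := by gcongr
        _ = 400 * V.card * (C₁ * (2 * δ / r) ^ 2) := by ring
        _ ≤ 400 * V.card * (1 / 1600) := by gcongr
        _ ≤ ‖Ψ‖ ^ 2 := by linarith
    intro g hg
    have h1 := hx1 Ψ hn3 g hg
    by_contra! hcon
    have h2 : inner ℝ (τ g Ψ) Ψ = 0 := by
      rw [l2_inner_translate Ψ Ψ g U hfU]
      refine Finset.sum_eq_zero fun s _ => ?_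
      by_contra hne
      have h3 := hflt s (left_ne_zero_of_mul hne)
      have h4 := hflt (g * s) (right_ne_zero_of_mul hne)
      have h5 := map_mul_le_add ν (g * s) s⁻¹
      rw [mul_inv_cancel_right, map_inv_eq_map] at h5
      linarith
    have h3 := norm_sub_sq_real (τ g Ψ) Ψ
    rw [h2, LinearIsometryEquiv.norm_map] at h3
    have h4 : 0 < ‖Ψ‖ ^ 2 := by
      refine lt_of_lt_of_le one_pos (le_trans ?_ (sum_sq_le_l2_norm_sq Ψ {1}))
      simp [hΨ, l2Of_apply, hf, tent]
    have h5 : (10 * ‖τ g Ψ - Ψ‖) ^ 2 ≤ (7 * ‖Ψ‖) ^ 2 := by gcongr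
    nlinarith
  · intro g t ht hg
    set s := Real.sqrt (2 * B.card) * (t / (δ * Z)) with hs
    have hs0 : 0 ≤ s := by positivity
    have h1 : ∀ y ∈ B, ‖τ g (u y) - u y‖ ≤ s := by
      intro y hy
      have h2 : ‖τ g (u y) - u y‖ = ‖τ (y⁻¹ * g * y) Φ - Φ‖ := by
        have e : τ g (u y) = τ y (τ (y⁻¹ * g * y) Φ) := by
          change τ g (τ y Φ) = _
          rw [← unitary_mul_apply, ← unitary_mul_apply]
          congr 2
          group
        rw [e, hu, ← map_sub, LinearIsometryEquiv.norm_map]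
      rw [h2]
      set k := y⁻¹ * g * y
      have hk := hg y hy
      have h3 : ∀ z, |(τ k Φ - Φ) z| ≤ t / (δ * Z) := by
        intro z
        have h4 : (τ k Φ - Φ) z = (tent ν δ (k⁻¹ * z) - tent ν δ z) / Z := by
          rw [sub_div]; rfl
        rw [h4, abs_div, abs_of_pos hZ0, ← div_div]
        gcongr
        refine (abs_tent_sub_le ν hδ _ _).trans ?_
        rw [map_inv_eq_map]
        gcongr
      have h4 : ∀ z, (τ k Φ - Φ) z ≠ 0 → z ∈ U ∪ (k • U) := by
        intro z hz
        rw [Finset.mem_union]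
        by_contra! hcon
        obtain ⟨h5, h6⟩ := hcon
        have h7 : φ z = 0 := by_contra fun h => h5 (hφU z h)
        have h8 : φ (k⁻¹ * z) = 0 := by
          by_contra h
          refine h6 (Finset.mem_smul_finset.2 ⟨k⁻¹ * z, hφU _ h, by simp⟩)
        apply hz
        change φ (k⁻¹ * z) - φ z = 0
        rw [h7, h8, sub_zero]
      rw [hs]
      refine le_of_sq_le_sq ?_ (by positivity)
      rw [mul_pow, Real.sq_sqrt (by positivity), l2_norm_sq_eq_sum _ _ h4]
      refine (Finset.sum_le_card_nsmul _ _ ((t / (δ * Z)) ^ 2) fun z _ => ?_).trans ?_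
      · rw [← sq_abs]
        have := h3 z
        gcongr
      · rw [nsmul_eq_mul]
        gcongr
        have h5 := Finset.card_union_le U (k • U)
        rw [Finset.card_smul_finset] at h5
        have h6 := Finset.card_le_card hUB
        have h7 : (U ∪ (k • U)).card ≤ 2 * B.card := by omega
        exact_mod_cast h7
    refine (hx2 g s hs0 h1).trans ?_
    simp_rw [hun]
    rw [Finset.sum_const, nsmul_eq_mul, hs]
    have h2 : ‖Φ‖ * Real.sqrt (2 * B.card) ≤ 2 * C₂ := by
      refine le_of_sq_le_sq ?_ (by positivity)
      rw [mul_pow, Real.sq_sqrt (by positivity)]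
      calc ‖Φ‖ ^ 2 * (2 * B.card) ≤ (2 / W.card) * (2 * (C₂ * W.card)) := by gcongr
        _ = 4 * C₂ := by field_simp; ring
        _ ≤ (2 * C₂) ^ 2 := by nlinarith
    have h3 : (B.card : ℝ) * (1 / Z) ≤ 2 * C₂ := by
      rw [mul_one_div, div_le_iff₀ hZ0]
      nlinarith
    calc 4 * (D : ℝ) * (B.card * ‖Φ‖) * (Real.sqrt (2 * B.card) * (t / (δ * Z)))
        = 4 * D * (‖Φ‖ * Real.sqrt (2 * B.card)) * (B.card * (1 / Z)) * (t / δ) := by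
          field_simp
      _ ≤ 4 * D * (2 * C₂) * (2 * C₂) * (t / δ) := by gcongr
      _ = _ := by ring
  · intro g κ hκ m hm hB hx
    have := hx3 g (4 * κ) (by positivity) m hm (fun i hi v => ?_) hx
    · linarith
    · refine (norm_frame_commutator_le τ Φ B (g ^ i) v).trans ?_
      have h1 := hB i hi
      calc 2 * (((g ^ i • B) \ B).card : ℝ) * ‖Φ‖ ^ 2 * ‖v‖
          ≤ 2 * (κ * W.card) * (2 / W.card) * ‖v‖ := by gcongr
        _ = _ := by field_simp; ring

end Translation

section SmallPowers

variable {G : Type*} [Group G]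

theorem Set.list_prod_mem_pow_length {Q : Set G} (l : List G) (hl : ∀ g ∈ l, g ∈ Q) :
    l.prod ∈ Q ^ l.length := by
  induction l with
  | nil => simp
  | cons g l ih =>
    rw [List.prod_cons, List.length_cons, pow_succ']
    exact Set.mul_mem_mul (hl g (by simp)) (ih fun h hh => hl h (by simp [hh]))

theorem Set.exists_list_of_mem_pow {Q : Set G} {n : ℕ} {z : G} (hz : z ∈ Q ^ n) :
    ∃ l : List G, l.length = n ∧ (∀ g ∈ l, g ∈ Q) ∧ l.prod = z := by
  obtain ⟨f, rfl⟩ := Set.mem_pow.1 hz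
  exact ⟨_, List.length_ofFn, by simp [List.mem_ofFn], rfl⟩

/-- If the first `n` powers of the elements of `Q` are small and `Q ^ n` stays in the unit ball, then
so do, up to small elements, much longer products of elements of `Q`. -/
theorem exists_mul_of_mem_pow (ℓ : GroupSeminorm G) {a ε L : ℝ} (ha : 0 < a) (ha1 : a ≤ 1)
    (hε0 : 0 ≤ ε) (F V : Finset G) (hF : ∀ g, ℓ g ≤ 2 → g ∈ F) (hF3 : ∀ g ∈ F, ℓ g ≤ 3)
    (hV : ∀ g ∈ V, conjSup ℓ 2 g ≤ a / 2) (hsmall : 6 * F.card * ε * L < a * V.card)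
    (Q : Set G) (h1 : 1 ∈ Q) (hinv : ∀ g ∈ Q, g⁻¹ ∈ Q) {n : ℕ} (hn : 0 < n)
    (hQn : ∀ g ∈ Q ^ n, ℓ g ≤ 1) (hQ : ∀ g ∈ Q, ∀ i ≤ n, conjSup ℓ 5 (g ^ i) ≤ ε)
    {N : ℕ} (hN : (N : ℝ) ≤ L * n) {z : G} (hz : z ∈ Q ^ N) :
    ∃ w ∈ Q ^ n, ∃ s, conjSup ℓ 2 s ≤ 2 * a ∧ z = w * s := by
  classical
  have hn' : (0 : ℝ) < n := by exact_mod_cast hn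
  set ω : G → ℝ := fun g => if g ∈ Q then 1 / n else 1 with hω
  have hω0 : ∀ g, 0 ≤ ω g := fun g => by
    simp only [hω]; split_ifs <;> positivity
  have hωi : ∀ g, ω g⁻¹ = ω g := fun g => by
    have : g⁻¹ ∈ Q ↔ g ∈ Q := ⟨fun h => by simpa using hinv _ h, hinv g⟩
    simp only [hω, this]
  have hlam : ∀ w, wordSeminorm ω hω0 hωi w < 1 → w ∈ Q ^ n := by
    intro w hw
    obtain ⟨l, rfl, hl⟩ := exists_list_of_wordSeminorm_lt ω hω0 hωi hw
    have hlQ : ∀ g ∈ l, g ∈ Q := by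
      intro g hg
      by_contra hgQ
      have h2 : ω g ≤ (l.map ω).sum := List.single_le_sum (by simpa using fun g _ => hω0 g) _
        (List.mem_map_of_mem hg)
      simp only [hω, hgQ, if_false] at h2 hl
      linarith
    have h2 : (l.map ω).sum = l.length * (1 / n) := by
      rw [List.map_congr_left (g := fun _ => (1 / n : ℝ)) fun g hg => by simp [hω, hlQ g hg]]
      simp
    rw [h2, mul_one_div, div_lt_one hn'] at hl
    exact Set.pow_subset_pow_right h1 (by exact_mod_cast hl.le)
      (Set.list_prod_mem_pow_length l hlQ)
  obtain ⟨l, hlN, hlQ, rfl⟩ := Set.exists_list_of_mem_pow hz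
  obtain ⟨w, s, hw, hs, he⟩ := gleason_escape (wordSeminorm ω hω0 hωi) (conjSup ℓ 2) ha F V
    (fun w s hw hs => hF _ (by
      have h2 := map_mul_le_add ℓ w s
      have h3 := hQn w (hlam w hw)
      have h4 := self_le_conjSup ℓ (by norm_num : (0 : ℝ) ≤ 2) s
      linarith)) hV ω hε0 hsmall l (fun g hg => ⟨wordSeminorm_le ω hω0 hωi g, n, hn, by
        simp only [hω, hlQ g hg, if_true]
        rw [mul_one_div_cancel hn'.ne'], fun i hi y hy =>
        (conjSup_conj_le ℓ (hF3 y hy) (by norm_num) _).trans (hQ g (hlQ g hg) i hi)⟩) (by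
      rw [List.map_congr_left (g := fun _ => (1 / n : ℝ)) fun g hg => by simp [hω, hlQ g hg]]
      simp only [List.map_const', List.sum_replicate, hlN, nsmul_eq_mul]
      rw [mul_one_div, div_le_iff₀ hn']
      exact hN)
  exact ⟨w, hlam w hw, s, hs, he⟩

/-- The elements whose first `M` powers are `ε`-small. -/
def powSmall (σ : GroupSeminorm G) (ε : ℝ) (M : ℕ) : Set G := {g | ∀ i ≤ M, σ (g ^ i) ≤ ε}

theorem one_mem_powSmall (σ : GroupSeminorm G) {ε : ℝ} (hε : 0 ≤ ε) (M : ℕ) :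
    1 ∈ powSmall σ ε M := fun i _ => by simpa using hε

theorem inv_mem_powSmall {σ : GroupSeminorm G} {ε : ℝ} {M : ℕ} {g : G}
    (h : g ∈ powSmall σ ε M) : g⁻¹ ∈ powSmall σ ε M := fun i hi => by
  rw [inv_pow, map_inv_eq_map]; exact h i hi

theorem powSmall_anti (σ : GroupSeminorm G) (ε : ℝ) {M N : ℕ} (h : M ≤ N) :
    powSmall σ ε N ⊆ powSmall σ ε M := fun _ hg i hi => hg i (hi.trans h)

theorem exists_succ_sub_le_of_card_le (f : ℕ → ℝ) {p : ℕ} {s c : ℝ} (h0 : 0 ≤ f 0)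
    (hp : f p ≤ c) (hc : c < p * s) : ∃ t < p, f (t + 1) - f t ≤ s := by
  by_contra! hcon
  have h : ∀ t ≤ p, t * s ≤ f t := by
    intro t ht
    induction t with
    | zero => simpa using h0
    | succ t ih =>
      have h1 := hcon t (by omega)
      have h2 := ih (by omega)
      push_cast
      linarith
  have := h p le_rfl
  linarith

theorem exists_powSmall_pow_subset (C : ℝ → ℕ) : ∃ ε : ℝ, 0 < ε ∧ ε ≤ 1 / 4 ∧
    ∀ (G : Type*) [Group G] (ℓ : GroupSeminorm G), (∀ R, {g | ℓ g ≤ R}.Finite) →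
      IsColored ℓ ℓ 20 C → ∀ M : ℕ, ∀ g ∈ powSmall (conjSup ℓ 5) ε M ^ M, ℓ g ≤ 1 := by
  obtain ⟨C₁, hC₁, hC₁'⟩ : ∃ c : ℝ, 1 ≤ c ∧ (C (1 / 16) : ℝ) ≤ c :=
    ⟨max 1 _, le_max_left _ _, le_max_right _ _⟩
  obtain ⟨δ, hδ, hδ'⟩ : ∃ δ : ℝ, 0 < δ ∧ 80 * C₁ * δ = 1 / 8 :=
    ⟨1 / 8 / (80 * C₁), by positivity, by field_simp⟩
  obtain ⟨C₂, hC₂, hC₂'⟩ : ∃ c : ℝ, 1 ≤ c ∧ (C (δ / 2) : ℝ) ≤ c :=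
    ⟨max 1 _, le_max_left _ _, le_max_right _ _⟩
  obtain ⟨D, hD⟩ := exists_nat_ge (8 * C₂)
  have hD0 : (0 : ℝ) < D := by linarith
  obtain ⟨K, hK⟩ : ∃ K, K = 16 * D * C₂ ^ 2 / δ := ⟨_, rfl⟩
  have hK0 : 0 < K := by rw [hK]; positivity
  obtain ⟨κ, hκ0, hκ⟩ : ∃ κ : ℝ, 0 < κ ∧ 64 * D * (D + 1) * κ = 1 / 32 :=
    ⟨1 / 32 / (64 * D * (D + 1)), by positivity, by field_simp⟩
  obtain ⟨p, hp⟩ := exists_nat_gt (C₂ / κ)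
  rw [div_lt_iff₀ hκ0] at hp
  have hp0 : 0 < p := by
    rcases Nat.eq_zero_or_pos p with h | h
    · rw [h] at hp; norm_num at hp; linarith
    · exact h
  have hp1 : (1 : ℝ) ≤ p := by exact_mod_cast hp0
  obtain ⟨a, ha, ha1, haK⟩ : ∃ a : ℝ, 0 < a ∧ a ≤ 1 / 4 ∧ K * (2 * a) ≤ 1 / 16 := by
    refine ⟨min (1 / 4) (1 / (32 * K)), by positivity, min_le_left _ _, ?_⟩
    calc K * (2 * min (1 / 4) (1 / (32 * K))) ≤ K * (2 * (1 / (32 * K))) := by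
          gcongr; exact min_le_right _ _
      _ = _ := by field_simp; norm_num
  set C₃ : ℕ := C (a / 2 / 3) ^ C (a / 2 / 3) with hC₃
  obtain ⟨ε, hε0, hε, hεa⟩ : ∃ ε : ℝ, 0 < ε ∧ 6 * (C₃ + 1) * ε * (p * 128) = a ∧ ε ≤ a := by
    have h1 : 1 ≤ 6 * ((C₃ : ℝ) + 1) * (p * 128) := by
      have : (0 : ℝ) ≤ C₃ := by positivity
      nlinarith
    refine ⟨a / (6 * (C₃ + 1) * (p * 128)), by positivity, by field_simp, div_le_self ha.le h1⟩
  refine ⟨ε, hε0, hεa.trans ha1, ?_⟩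
  intro G _ ℓ hfin hcol M
  classical
  set Q := powSmall (conjSup ℓ 5) ε M with hQ
  have h1Q : 1 ∈ Q := one_mem_powSmall _ hε0.le M
  have hQinv : ∀ g ∈ Q, g⁻¹ ∈ Q := fun g hg => inv_mem_powSmall hg
  set S : ℝ → Finset G := fun R => (hfin R).toFinset with hS
  have hSmem : ∀ R g, g ∈ S R ↔ ℓ g ≤ R := fun R g => by simp [hS]
  have hcard : ∀ R ≤ 20, ∀ η > 0, ((S R).card : ℝ) ≤ C η * (S η).card := fun R hR η hη =>
    hcol.card_le hη _ _ (fun g hg => ((hSmem _ _).1 hg).trans hR) fun g hg => (hSmem _ _).2 hg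
  -- the escape property
  set V := (S 2).filter fun g => conjSup ℓ 2 g ≤ a / 2 with hV
  have hVmem : ∀ g, conjSup ℓ 2 g ≤ a / 2 → g ∈ V := fun g hg => by
    rw [hV, Finset.mem_filter, hSmem]
    have := self_le_conjSup ℓ (by norm_num : (0 : ℝ) ≤ 2) g
    exact ⟨by linarith, hg⟩
  have hFV : 6 * (S 2).card * ε * (p * 128) < a * V.card := by
    have h1 : ((S 2).card : ℝ) ≤ C₃ * V.card := by
      have h2 := (hcol.conjSup (S := 18) (ρ := 2) (by norm_num) (by norm_num)).card_le
        (δ := a / 2) (by positivity) (S 2) V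
        (fun g hg => ((hSmem _ _).1 hg).trans (by norm_num)) hVmem
      exact_mod_cast h2
    have h2 : (0 : ℝ) < V.card := by
      have : V.Nonempty := ⟨1, hVmem 1 (by rw [map_one_eq_zero]; positivity)⟩
      exact_mod_cast this.card_pos
    calc 6 * ((S 2).card : ℝ) * ε * (p * 128) ≤ 6 * (C₃ * V.card) * ε * (p * 128) := by gcongr
      _ < 6 * ((C₃ + 1) * V.card) * ε * (p * 128) := by gcongr; linarith
      _ = (6 * (C₃ + 1) * ε * (p * 128)) * V.card := by ring
      _ = a * V.card := by rw [hε]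
  have hescape : ∀ k, 0 < k → k ≤ M → (∀ g ∈ Q ^ k, ℓ g ≤ 1) → ∀ N : ℕ, N ≤ p * 128 * k →
      ∀ z ∈ Q ^ N, ∃ w ∈ Q ^ k, ∃ s, conjSup ℓ 2 s ≤ 2 * a ∧ z = w * s := by
    intro k hk hkM hQk N hN z hz
    exact exists_mul_of_mem_pow ℓ ha (by linarith) hε0.le (S 2) V (fun g hg => (hSmem _ _).2 hg)
      (fun g hg => ((hSmem _ _).1 hg).trans (by norm_num))
      (fun g hg => (Finset.mem_filter.1 hg).2) hFV Q h1Q hQinv hk hQk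
      (fun g hg i hi => hg i (hi.trans hkM)) (by exact_mod_cast hN) hz
  -- the self-improvement
  have hquarter : ∀ n, n ≤ M → (∀ g ∈ Q ^ n, ℓ g ≤ 1) → ∀ g ∈ Q ^ n, ℓ g ≤ 1 / 4 := by
    intro n hnM hQn
    rcases Nat.eq_zero_or_pos n with rfl | hn
    · simp
    set Y : ℕ → Finset G := fun t => (S 2).filter
      fun g => ∃ q ∈ Q ^ (t * 128 * n), ∃ s, ℓ s ≤ 1 / 4 ∧ g = q * s with hY
    have hYmem : ∀ t ≤ p, ∀ q ∈ Q ^ (t * 128 * n), ∀ s, ℓ s ≤ 1 / 4 → q * s ∈ Y t := by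
      intro t ht q hq s hs
      rw [hY, Finset.mem_filter, hSmem]
      refine ⟨?_, q, hq, s, hs, rfl⟩
      obtain ⟨w, hw, v, hv, rfl⟩ := hescape n hn hnM hQn (t * 128 * n) (by gcongr) q hq
      have h1 := hQn w hw
      have h2 := self_le_conjSup ℓ (by norm_num : (0 : ℝ) ≤ 2) v
      have h3 := map_mul_le_add ℓ w v
      have h4 := map_mul_le_add ℓ (w * v) s
      linarith
    set W := S (δ / 2) with hW
    have hW0 : W.Nonempty := ⟨1, (hSmem _ _).2 (by rw [map_one_eq_zero]; positivity)⟩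
    have hw0 : (0 : ℝ) < W.card := by exact_mod_cast hW0.card_pos
    have hYW : ∀ t, ((Y t).card : ℝ) ≤ C₂ * W.card := by
      intro t
      calc ((Y t).card : ℝ) ≤ (S 2).card := by exact_mod_cast Finset.card_filter_le _ _
        _ ≤ C (δ / 2) * W.card := hcard 2 (by norm_num) _ (by positivity)
        _ ≤ C₂ * W.card := by gcongr
    obtain ⟨t, htp, ht⟩ := exists_succ_sub_le_of_card_le (fun t => ((Y t).card : ℝ)) (p := p)
      (s := κ * W.card) (by positivity) (hYW p) (by rw [← mul_assoc]; gcongr)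
    have hYsub : ∀ h ∈ Q ^ (128 * n), h • Y t ⊆ Y (t + 1) := by
      intro h hh g hg
      obtain ⟨g, hg', rfl⟩ := Finset.mem_smul_finset.1 hg
      obtain ⟨q, hq, s, hs, rfl⟩ := (Finset.mem_filter.1 hg').2
      rw [smul_eq_mul, ← mul_assoc]
      refine hYmem (t + 1) htp _ ?_ s hs
      rw [show (t + 1) * 128 * n = 128 * n + t * 128 * n by ring, pow_add]
      exact Set.mul_mem_mul hh hq
    have hYmono : Y t ⊆ Y (t + 1) := by
      have := hYsub 1 (Set.one_mem_pow h1Q)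
      rwa [one_smul] at this
    have hinvariant : ∀ h ∈ Q ^ (128 * n), (((h • Y t) \ Y t).card : ℝ) ≤ κ * W.card := by
      intro h hh
      refine le_trans ?_ ht
      have h1 : (h • Y t) \ Y t ⊆ Y (t + 1) \ Y t := Finset.sdiff_subset_sdiff (hYsub h hh) le_rfl
      have h2 := Finset.card_le_card h1
      have h3 := Finset.card_sdiff_add_card_eq_card hYmono
      have h4 : ((Y (t + 1) \ Y t).card : ℝ) + (Y t).card = (Y (t + 1)).card := by
        exact_mod_cast h3
      have h5 : (((h • Y t) \ Y t).card : ℝ) ≤ ((Y (t + 1) \ Y t).card : ℝ) := by exact_mod_cast h2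
      linarith
    obtain ⟨x, hx1, hx2, hx3⟩ := exists_peterWeyl_seminorm ℓ (r := 1 / 8) (by norm_num) hδ hC₁ hC₂
      hδ'.le (S (1 / 4)) (S (1 / 16)) W (Y t)
      (fun g hg => (hSmem _ _).2 (by linarith))
      (fun g hg => ((hSmem _ _).1 hg).trans (by norm_num))
      ((hcard (1 / 4) (by norm_num) (1 / 16) (by norm_num)).trans (by gcongr))
      (fun g hg => (hSmem _ _).1 hg) hW0
      (fun g hg => by
        have := hYmem t htp.le 1 (Set.one_mem_pow h1Q) g ((hSmem _ _).1 hg)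
        rwa [one_mul] at this) (hYW t) D hD
    have hxK : ∀ g, x g ≤ K * conjSup ℓ 2 g := by
      intro g
      rw [hK]
      refine hx2 g _ (apply_nonneg _ _) fun y hy => le_conjSup ℓ ?_ g
      exact (hSmem _ _).1 (Finset.filter_subset _ _ hy)
    have hmain : ∀ k, 0 < k → k ≤ n → (∀ g ∈ Q ^ k, x g ≤ 1 / 8) → ∀ g ∈ Q ^ k, x g ≤ 1 / 16 := by
      intro k hk hkn hQk g hg
      have hgi : ∀ i, g ^ i ∈ Q ^ (k * i) := fun i => by
        rw [pow_mul]; exact Set.pow_mem_pow hg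
      have h := hx3 g κ hκ0.le 128 (by norm_num)
        (fun i hi => hinvariant _ (Set.pow_subset_pow_right h1Q (by nlinarith) (hgi i)))
        (fun i hi => by
          obtain ⟨w, hw, s, hs, he⟩ := hescape k hk (hkn.trans hnM)
            (fun g hg => hQn g (Set.pow_subset_pow_right h1Q hkn hg)) (k * i) (by nlinarith) _ (hgi i)
          rw [he]
          have h1 := map_mul_le_add x w s
          have h2 := hQk w hw
          have h3 : x s ≤ 1 / 16 :=
            ((hxK s).trans (mul_le_mul_of_nonneg_left hs hK0.le)).trans haK
          linarith)
      rw [hκ] at h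
      norm_num at h ⊢
      linarith
    have hmain2 : ∀ k, k ≤ n → ∀ g ∈ Q ^ k, x g ≤ 1 / 8 := by
      intro k
      induction k with
      | zero => intro _ g hg; rw [pow_zero, Set.mem_one] at hg; rw [hg, map_one_eq_zero]; norm_num
      | succ k ih =>
        intro hkn g hg
        rw [pow_succ] at hg
        obtain ⟨w, hw, q, hq, rfl⟩ := Set.mem_mul.1 hg
        have h1 : x w ≤ 1 / 16 := by
          rcases Nat.eq_zero_or_pos k with hk | hk
          · rw [hk, pow_zero, Set.mem_one] at hw; rw [hw, map_one_eq_zero]; norm_num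
          · exact hmain k hk (by omega) (ih (by omega)) w hw
        have h2 : x q ≤ 1 / 16 := by
          have h3 := hq 1 (by omega)
          rw [pow_one] at h3
          have h4 := conjSup_mono ℓ (by norm_num : (2 : ℝ) ≤ 5) q
          refine (hxK q).trans (le_trans ?_ haK)
          gcongr
          linarith
        have h3 := map_mul_le_add x w q
        linarith
    intro g hg
    have := hx1 g ((hmain2 n le_rfl g hg).trans (by norm_num))
    linarith
  have hall : ∀ n, n ≤ M → ∀ g ∈ Q ^ n, ℓ g ≤ 1 := by
    intro n
    induction n with
    | zero => simp
    | succ n ih =>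
      intro hn g hg
      rw [pow_succ] at hg
      obtain ⟨w, hw, q, hq, rfl⟩ := Set.mem_mul.1 hg
      have h1 := hquarter n (by omega) (ih (by omega)) w hw
      have h3 := hq 1 (by omega)
      rw [pow_one] at h3
      have h4 := self_le_conjSup ℓ (by norm_num : (0 : ℝ) ≤ 5) q
      have h5 := map_mul_le_add ℓ w q
      linarith
  exact hall M le_rfl

end SmallPowers

section Trapping

theorem exists_iSup_iInf_bounds (F : ℕ → ℕ → ℝ) (c : ℝ) (h0 : ∀ M j, 0 ≤ F M j)
    (hc : ∀ M j, F M j ≤ c) (hanti : ∀ j, Antitone fun M => F M j) :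
    ∃ s, (∀ κ > 0, ∃ j, ∀ M, s - κ < F M j) ∧ ∀ κ > 0, ∀ j, ∀ᶠ M in atTop, F M j < s + κ := by
  have hb : ∀ j, BddBelow (Set.range fun M => F M j) := fun j =>
    ⟨0, by rintro _ ⟨M, rfl⟩; exact h0 M j⟩
  have hB : BddAbove (Set.range fun j => ⨅ M, F M j) :=
    ⟨c, by rintro _ ⟨j, rfl⟩; exact (ciInf_le (hb j) 0).trans (hc 0 j)⟩
  refine ⟨⨆ j, ⨅ M, F M j, fun κ hκ => ?_, fun κ hκ j => ?_⟩
  · obtain ⟨j, hj⟩ := exists_lt_of_lt_ciSup (f := fun j => ⨅ M, F M j)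
      (b := (⨆ j, ⨅ M, F M j) - κ) (by linarith)
    exact ⟨j, fun M => hj.trans_le (ciInf_le (hb j) M)⟩
  · obtain ⟨M, hM⟩ := exists_lt_of_ciInf_lt (f := fun M => F M j)
      (a := (⨆ j, ⨅ M, F M j) + κ) (by
        have := le_ciSup hB j
        linarith)
    filter_upwards [eventually_ge_atTop M] with N hN
    exact (hanti j hN).trans_lt hM

theorem card_smul_sdiff_le {G : Type*} [Group G] [DecidableEq G] {B Z₁ Z₂ : Finset G} {h : G}
    {b s c : ℝ} (h1 : Z₁ ⊆ B) (h2 : Z₁ ⊆ Z₂) (h3 : h • Z₁ ⊆ Z₂) (hZ : s - c ≤ Z₁.card)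
    (hB : (B.card : ℝ) ≤ s + c) (hZ₂ : (Z₂.card : ℝ) ≤ s + c) (hb : 4 * c ≤ b) :
    (((h • B) \ B).card : ℝ) ≤ b := by
  have h4 : (h • B) \ B ⊆ (h • (B \ Z₁)) ∪ (Z₂ \ Z₁) := by
    intro g hg
    obtain ⟨hg1, hg2⟩ := Finset.mem_sdiff.1 hg
    obtain ⟨y, hy, rfl⟩ := Finset.mem_smul_finset.1 hg1
    rw [Finset.mem_union]
    by_cases hyZ : y ∈ Z₁
    · exact Or.inr (Finset.mem_sdiff.2 ⟨h3 (Finset.smul_mem_smul_finset hyZ),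
        fun hmem => hg2 (h1 hmem)⟩)
    · exact Or.inl (Finset.smul_mem_smul_finset (Finset.mem_sdiff.2 ⟨hy, hyZ⟩))
  have h5 := (Finset.card_le_card h4).trans (Finset.card_union_le _ _)
  rw [Finset.card_smul_finset] at h5
  have h6 := Finset.card_sdiff_add_card_eq_card h1
  have h7 := Finset.card_sdiff_add_card_eq_card h2
  have h5' : (((h • B) \ B).card : ℝ) ≤ (B \ Z₁).card + (Z₂ \ Z₁).card := by exact_mod_cast h5
  have h6' : ((B \ Z₁).card : ℝ) + Z₁.card = B.card := by exact_mod_cast h6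
  have h7' : ((Z₂ \ Z₁).card : ℝ) + Z₁.card = Z₂.card := by exact_mod_cast h7
  linarith

/-- Along a sequence of uniformly doubling groups there are seminorms `x` for which a trapping time
`Mf η` depending only on `η` is available, for any finite collection of thresholds `η`. -/
theorem exists_trapping_seminorm (C : ℝ → ℕ) : ∃ K : ℝ, 0 < K ∧
    ∀ (G : ℕ → Type*) [∀ n, Group (G n)] (ℓ : ∀ n, GroupSeminorm (G n)),
      (∀ n R, {g | ℓ n g ≤ R}.Finite) → (∀ n, IsColored (ℓ n) (ℓ n) 20 C) →
      ∃ Mf : ℝ → ℕ, ∀ P : Finset ℝ, (∀ η ∈ P, 0 < η) → ∀ᶠ n in (hyperfilter ℕ : Filter ℕ),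
        ∃ x : GroupSeminorm (G n), (∀ g, x g ≤ 1 / 2 → ℓ n g ≤ 1 / 4) ∧
          (∀ g, x g ≤ K * conjSup (ℓ n) 7 g) ∧
          ∀ η ∈ P, ∀ g, (∀ i ≤ Mf η, x (g ^ i) ≤ 1 / 2) → x g ≤ η := by
  obtain ⟨ε, hε0, hε4, hstep⟩ := exists_powSmall_pow_subset C
  set C' : ℝ → ℕ := fun δ => C (δ / 3) ^ C (δ / 3) with hC'
  obtain ⟨C₁, hC₁, hC₁'⟩ : ∃ c : ℝ, 1 ≤ c ∧ (C' (ε / 4) : ℝ) ≤ c :=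
    ⟨max 1 _, le_max_left _ _, le_max_right _ _⟩
  obtain ⟨δ, hδ, hδ'⟩ : ∃ δ : ℝ, 0 < δ ∧ 80 * C₁ * δ = ε / 2 :=
    ⟨ε / 2 / (80 * C₁), by positivity, by field_simp⟩
  obtain ⟨C₂, hC₂, hC₂'⟩ : ∃ c : ℝ, 1 ≤ c ∧ (C' (δ / 2) : ℝ) ≤ c :=
    ⟨max 1 _, le_max_left _ _, le_max_right _ _⟩
  obtain ⟨D, hD⟩ := exists_nat_ge (8 * C₂)
  have hD0 : (0 : ℝ) < D := by linarith
  refine ⟨16 * D * C₂ ^ 2 / δ, by positivity, ?_⟩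
  intro G _ ℓ hfin hcol
  classical
  set Q : ∀ n, ℕ → Set (G n) := fun n M => powSmall (conjSup (ℓ n) 5) ε M with hQ
  have h1Q : ∀ n M, 1 ∈ Q n M := fun n M => one_mem_powSmall _ hε0.le M
  have hQM : ∀ n M, ∀ g ∈ Q n M ^ M, ℓ n g ≤ 1 := fun n M =>
    hstep (G n) (ℓ n) (hfin n) (hcol n) M
  set S : ∀ n, ℝ → Finset (G n) := fun n R => (hfin n R).toFinset with hS
  have hSmem : ∀ n R g, g ∈ S n R ↔ ℓ n g ≤ R := fun n R g => by simp [hS]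
  have hcol' : ∀ n, IsColored (ℓ n) (conjSup (ℓ n) 5) 15 C' := fun n =>
    (hcol n).conjSup (by norm_num) (by norm_num)
  have hself : ∀ n g, ℓ n g ≤ conjSup (ℓ n) 5 g := fun n g =>
    self_le_conjSup (ℓ n) (by norm_num) g
  set V : ∀ n, ℝ → Finset (G n) := fun n R => (S n R).filter fun g => conjSup (ℓ n) 5 g ≤ R
    with hV
  have hVmem : ∀ n R g, g ∈ V n R ↔ conjSup (ℓ n) 5 g ≤ R := fun n R g => by
    rw [hV, Finset.mem_filter, hSmem]
    exact ⟨fun h => h.2, fun h => ⟨(hself n g).trans h, h⟩⟩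
  set Y : ∀ n, ℕ → ℕ → Finset (G n) := fun n M j => (S n 2).filter
    fun g => ∃ q ∈ Q n M ^ j, ∃ s, conjSup (ℓ n) 5 s ≤ ε ∧ g = q * s with hY
  have hYmem : ∀ n M j, j ≤ M → ∀ q ∈ Q n M ^ j, ∀ s, conjSup (ℓ n) 5 s ≤ ε → q * s ∈ Y n M j := by
    intro n M j hj q hq s hs
    rw [hY, Finset.mem_filter, hSmem]
    refine ⟨?_, q, hq, s, hs, rfl⟩
    have h1 := hQM n M q (Set.pow_subset_pow_right (h1Q n M) hj hq)
    have h2 := hself n s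
    have h3 := map_mul_le_add (ℓ n) q s
    linarith
  have hYmono : ∀ n M, Monotone (Y n M) := fun n M i j hij g hg => by
    simp only [hY, Finset.mem_filter] at hg ⊢
    obtain ⟨h1, q, hq, h2⟩ := hg
    exact ⟨h1, q, Set.pow_subset_pow_right (h1Q n M) hij hq, h2⟩
  have hYanti : ∀ n j, Antitone fun M => Y n M j := fun n j M N hMN g hg => by
    simp only [hY, Finset.mem_filter] at hg ⊢
    obtain ⟨h1, q, hq, h2⟩ := hg
    exact ⟨h1, q, Set.pow_subset_pow_left (powSmall_anti _ ε hMN) hq, h2⟩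
  have hYsmul : ∀ n M j m, j + m ≤ M → ∀ h ∈ Q n M ^ m, h • Y n M j ⊆ Y n M (j + m) := by
    intro n M j m hjm h hh g hg
    obtain ⟨g, hg', rfl⟩ := Finset.mem_smul_finset.1 hg
    obtain ⟨q, hq, s, hs, rfl⟩ := (Finset.mem_filter.1 hg').2
    rw [smul_eq_mul, ← mul_assoc]
    refine hYmem n M _ hjm _ ?_ s hs
    rw [add_comm, pow_add]
    exact Set.mul_mem_mul hh hq
  have hw0 : ∀ n, (0 : ℝ) < (V n (δ / 2)).card := fun n => by
    have : (V n (δ / 2)).Nonempty := ⟨1, (hVmem _ _ _).2 (by rw [map_one_eq_zero]; positivity)⟩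
    exact_mod_cast this.card_pos
  have hYW : ∀ n M j, ((Y n M j).card : ℝ) ≤ C₂ * (V n (δ / 2)).card := by
    intro n M j
    calc ((Y n M j).card : ℝ) ≤ C' (δ / 2) * (V n (δ / 2)).card :=
          (hcol' n).card_le (by positivity) _ _
            (fun g hg => ((hSmem _ _ _).1 (Finset.filter_subset _ _ hg)).trans (by norm_num))
            fun g hg => (hVmem _ _ _).2 hg
      _ ≤ _ := by gcongr
  set y : ℕ → ℕ → ℕ → ℝ := fun M j n => (Y n M j).card / (V n (δ / 2)).card with hy
  have hlim : ∀ M j, ∃ t ∈ Set.Icc 0 C₂, Tendsto (y M j) (hyperfilter ℕ : Filter ℕ) (nhds t) := by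
    intro M j
    refine (isCompact_Icc (a := (0 : ℝ)) (b := C₂)).ultrafilter_le_nhds
      ((hyperfilter ℕ).map (y M j)) ?_
    rw [le_principal_iff]
    refine Ultrafilter.mem_coe.2 (Ultrafilter.mem_map.2 (Filter.univ_mem' fun n => ?_))
    refine ⟨by positivity, ?_⟩
    rw [hy, div_le_iff₀ (hw0 n)]
    exact hYW n M j
  choose F hF hFlim using hlim
  obtain ⟨s, hs1, hs2⟩ := exists_iSup_iInf_bounds F C₂ (fun M j => (hF M j).1)
    (fun M j => (hF M j).2)
    (fun j M N hMN => le_of_tendsto_of_tendsto' (hFlim N j) (hFlim M j) fun n =>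
      div_le_div_of_nonneg_right (by exact_mod_cast Finset.card_le_card (hYanti n j hMN))
        (hw0 n).le)
  have hchoice : ∀ η : ℝ, ∃ M : ℕ, 0 < η → ∃ (j m : ℕ) (κ : ℝ), 0 < m ∧ 0 < κ ∧ j + m ≤ M ∧
      4 / (m : ℝ) + 64 * D * (D + 1) * (4 * κ) ≤ η ∧ (∀ N, s - κ < F N j) ∧
      F M (j + m) < s + κ := by
    intro η
    by_cases hη : 0 < η
    · set κ : ℝ := η / (512 * D * (D + 1)) with hκ
      have hκ0 : 0 < κ := by positivity
      obtain ⟨m, hm⟩ := exists_nat_ge (8 / η)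
      have hm0 : (0 : ℝ) < m := lt_of_lt_of_le (by positivity) hm
      obtain ⟨j, hj⟩ := hs1 κ hκ0
      obtain ⟨M, hM1, hM2⟩ := ((hs2 κ hκ0 (j + m)).and (eventually_ge_atTop (j + m))).exists
      refine ⟨M, fun _ => ⟨j, m, κ, by exact_mod_cast hm0, hκ0, hM2, ?_, hj, hM1⟩⟩
      have h1 : 4 / (m : ℝ) ≤ η / 2 := by
        rw [div_le_iff₀ hη] at hm
        rw [div_le_iff₀ hm0]
        linarith
      have h2 : 64 * D * (D + 1) * (4 * κ) = η / 2 := by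
        rw [hκ]; field_simp; norm_num
      linarith
    · exact ⟨0, fun h => absurd h hη⟩
  choose Mf hMf using hchoice
  refine ⟨Mf, fun P hP => ?_⟩
  have hMf' : ∀ η : P, ∃ (j m : ℕ) (κ : ℝ), 0 < m ∧ 0 < κ ∧ j + m ≤ Mf η ∧
      4 / (m : ℝ) + 64 * D * (D + 1) * (4 * κ) ≤ η ∧ (∀ N, s - κ < F N j) ∧
      F (Mf η) (j + m) < s + κ := fun η => hMf η (hP η η.2)
  choose j m κ hm hκ hjm hη hsj hsM using hMf'
  set jB := Finset.univ.sup j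
  obtain ⟨MB, hMB1, hMB2, hMB3⟩ : ∃ MB, jB ≤ MB ∧ (∀ η : P, Mf η.1 ≤ MB) ∧
      ∀ η : P, F MB jB < s + κ η := by
    have h1 : ∀ᶠ M in atTop, ∀ η : P, F M jB < s + κ η :=
      eventually_all.2 fun η => hs2 (κ η) (hκ η) jB
    have h2 : ∀ᶠ M in atTop, ∀ η : P, Mf η.1 ≤ M :=
      eventually_all.2 fun η => eventually_ge_atTop _
    obtain ⟨M, hM1, hM2, hM3⟩ := ((eventually_ge_atTop jB).and (h2.and h1)).exists
    exact ⟨M, hM1, hM2, hM3⟩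
  have hev1 : ∀ᶠ n in (hyperfilter ℕ : Filter ℕ), ∀ η : P, y MB jB n < s + κ η :=
    eventually_all.2 fun η => (hFlim MB jB).eventually_lt_const (hMB3 η)
  have hev2 : ∀ᶠ n in (hyperfilter ℕ : Filter ℕ), ∀ η : P, s - κ η < y MB (j η) n :=
    eventually_all.2 fun η => (hFlim MB (j η)).eventually_const_lt (hsj η MB)
  have hev3 : ∀ᶠ n in (hyperfilter ℕ : Filter ℕ), ∀ η : P, y (Mf η) (j η + m η) n < s + κ η :=
    eventually_all.2 fun η => (hFlim _ _).eventually_lt_const (hsM η)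
  filter_upwards [hev1, hev2, hev3] with n hn1 hn2 hn3
  set w : ℝ := ((V n (δ / 2)).card : ℝ) with hw
  have hwn : 0 < w := hw0 n
  obtain ⟨x, hx1, hx2, hx3⟩ := exists_peterWeyl_seminorm (conjSup (ℓ n) 5) (r := ε / 2)
    (by positivity) hδ hC₁ hC₂ hδ'.le (V n ε) (V n (ε / 4)) (V n (δ / 2)) (Y n MB jB)
    (fun g hg => (hVmem _ _ _).2 (by linarith))
    (fun g hg => ((hVmem _ _ _).1 hg).trans (by linarith))
    (((hcol' n).card_le (δ := ε / 4) (by positivity) (V n ε) (V n (ε / 4))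
      (fun g hg => by have := (hVmem _ _ _).1 hg; have := hself n g; linarith)
      fun g hg => (hVmem _ _ _).2 hg).trans (by gcongr))
    (fun g hg => (hVmem _ _ _).1 hg)
    ⟨1, (hVmem _ _ _).2 (by rw [map_one_eq_zero]; positivity)⟩
    (fun g hg => by
      have := hYmem n MB jB hMB1 1 (Set.one_mem_pow (h1Q n MB)) g ((hVmem _ _ _).1 hg)
      rwa [one_mul] at this) (hYW n MB jB) D hD
  refine ⟨x, fun g hg => ?_, fun g => ?_, fun η hηP g hg => ?_⟩
  · have h1 := hx1 g hg
    have h2 := hself n g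
    linarith
  · refine hx2 g _ (apply_nonneg _ _) fun z hz => conjSup_conj_le (ℓ n) (s := 2) ?_ (by norm_num) g
    exact (hSmem _ _ _).1 (Finset.filter_subset _ _ hz)
  · set e : P := ⟨η, hηP⟩
    have hgQ : g ∈ Q n (Mf η) := fun i hi => by
      have := hx1 _ (hg i hi)
      linarith
    have hmM : m e ≤ Mf η := (Nat.le_add_left _ _).trans (hjm e)
    refine (hx3 g (4 * κ e) (by have := hκ e; positivity) (m e) (hm e) (fun i hi => ?_)
      fun i hi => hg i (hi.le.trans hmM)).trans (hη e)
    have hgi : g ^ i ∈ Q n (Mf η) ^ m e :=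
      Set.pow_subset_pow_right (h1Q n _) hi.le (Set.pow_mem_pow hgQ)
    have hsub : Y n MB (j e) ⊆ Y n (Mf η) (j e) := hYanti n (j e) (hMB2 e)
    have h1 := hn1 e
    have h2 := hn2 e
    have h3 := hn3 e
    simp only [hy] at h1 h2 h3
    rw [div_lt_iff₀ hwn] at h1 h3
    rw [lt_div_iff₀ hwn] at h2
    refine card_smul_sdiff_le (Z₁ := Y n MB (j e)) (Z₂ := Y n (Mf η) (j e + m e)) (s := s * w)
      (c := κ e * w)
      (hYmono n MB (Finset.le_sup (Finset.mem_univ e)))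
      (hsub.trans (hYmono n _ (Nat.le_add_right _ _)))
      ((Finset.smul_finset_subset_smul_finset hsub).trans (hYsmul n (Mf η) (j e) (m e) (hjm e) _ hgi))
      (by linarith) (by linarith) (by linarith) (by linarith)

end Trapping

section NoSmallSubgroups

variable {G : Type*} [Group G]

open Classical in
/-- The largest `m ≤ N` such that the powers of `g` up to `m` are `ε`-small for `σ`. -/
noncomputable def escapeRank (σ : GroupSeminorm G) (ε : ℝ) (N : ℕ) (g : G) : ℕ :=
  Nat.findGreatest (fun m => g ∈ powSmall σ ε m) N

/-- The reciprocal of the (truncated) escape rank. -/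
noncomputable def escapeWeight (σ : GroupSeminorm G) (ε : ℝ) (N : ℕ) (g : G) : ℝ :=
  1 / max 1 (escapeRank σ ε N g : ℝ)

theorem mem_powSmall_inv_iff {σ : GroupSeminorm G} {ε : ℝ} {m : ℕ} {g : G} :
    g⁻¹ ∈ powSmall σ ε m ↔ g ∈ powSmall σ ε m :=
  ⟨fun h => by simpa using inv_mem_powSmall h, inv_mem_powSmall⟩

theorem escapeWeight_inv (σ : GroupSeminorm G) (ε : ℝ) (N : ℕ) (g : G) :
    escapeWeight σ ε N g⁻¹ = escapeWeight σ ε N g := by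
  have h : (fun m => g⁻¹ ∈ powSmall σ ε m) = fun m => g ∈ powSmall σ ε m :=
    funext fun m => propext mem_powSmall_inv_iff
  unfold escapeWeight escapeRank
  congr!

theorem escapeWeight_nonneg (σ : GroupSeminorm G) (ε : ℝ) (N : ℕ) (g : G) :
    0 ≤ escapeWeight σ ε N g := by
  unfold escapeWeight; positivity

theorem escapeWeight_le_one (σ : GroupSeminorm G) (ε : ℝ) (N : ℕ) (g : G) :
    escapeWeight σ ε N g ≤ 1 := by
  unfold escapeWeight
  rw [div_le_one (by positivity)]
  exact le_max_left _ _

theorem one_div_le_escapeWeight (σ : GroupSeminorm G) (ε : ℝ) {N : ℕ} (hN : 1 ≤ N) (g : G) :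
    1 / (N : ℝ) ≤ escapeWeight σ ε N g := by
  classical
  unfold escapeWeight
  refine one_div_le_one_div_of_le (by positivity) (max_le (by exact_mod_cast hN) ?_)
  exact_mod_cast Nat.findGreatest_le N

theorem escapeWeight_le (σ : GroupSeminorm G) (ε : ℝ) {N m : ℕ} (hm : 1 ≤ m) (hN : m ≤ N) {g : G}
    (hg : g ∈ powSmall σ ε m) : escapeWeight σ ε N g ≤ 1 / m := by
  classical
  unfold escapeWeight
  refine one_div_le_one_div_of_le (by positivity) (le_max_of_le_right ?_)
  exact_mod_cast Nat.le_findGreatest (P := fun m => g ∈ powSmall σ ε m) hN hg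

theorem exists_of_escapeWeight_lt_one {σ : GroupSeminorm G} {ε : ℝ} {N : ℕ} {g : G}
    (h : escapeWeight σ ε N g < 1) :
    ∃ n : ℕ, 0 < n ∧ n * escapeWeight σ ε N g = 1 ∧ g ∈ powSmall σ ε n := by
  classical
  have hr : escapeRank σ ε N g ≠ 0 := by
    intro h0
    simp [escapeWeight, h0] at h
  refine ⟨escapeRank σ ε N g, Nat.pos_of_ne_zero hr, ?_, ?_⟩
  · have : (1 : ℝ) ≤ escapeRank σ ε N g := by exact_mod_cast Nat.pos_of_ne_zero hr
    rw [escapeWeight, max_eq_right this]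
    field_simp
  · exact Nat.findGreatest_of_ne_zero (P := fun m => g ∈ powSmall σ ε m) rfl hr

theorem List.sum_map_flatten_replicate {α : Type*} (ω : α → ℝ) (l : List α) (i : ℕ) :
    (((List.replicate i l).flatten).map ω).sum = i * (l.map ω).sum := by
  induction i with
  | zero => simp
  | succ i ih => simp [List.replicate_succ]; ring

theorem List.map_le_sum {α : Type*} (ω : α → ℝ) (h0 : ∀ a, 0 ≤ ω a) {l : List α} {a : α}
    (ha : a ∈ l) : ω a ≤ (l.map ω).sum :=
  List.single_le_sum (by simp; simp [h0]) _ (List.mem_map_of_mem ha)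

/-- `x` satisfies the trapping property at `η` with exponent `M`. -/
def IsTrapping (x : GroupSeminorm G) (η : ℝ) (M : ℕ) : Prop :=
  ∀ g, (∀ i ≤ M, x (g ^ i) ≤ 1 / 2) → x g ≤ η

theorem conj_le_add {x : GroupSeminorm G} (y g : G) : x (y⁻¹ * g * y) ≤ x g + 2 * x y := by
  have h1 := map_mul_le_add x (y⁻¹ * g) y
  have h2 := map_mul_le_add x y⁻¹ g
  rw [map_inv_eq_map] at h2
  linarith

/-- Words of total escape weight less than one are trapped. -/
theorem le_of_sum_escapeWeight_lt_one {x : GroupSeminorm G} {F V : Finset G} {D c : ℝ} {M N : ℕ}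
    (hc0 : 0 ≤ c) (hF : ∀ g, g ∈ F ↔ x g ≤ 1 / 32) (hV : ∀ g, g ∈ V ↔ x g ≤ 1 / 1024)
    (hD : (F.card : ℝ) ≤ D * V.card) (hM : IsTrapping x (1 / 64) M)
    (hc : 12 * D * M * c < 1 / 512) (hN : 1 ≤ N) (l : List G)
    (hl : (l.map (escapeWeight (conjSup x (3 / 64)) c N)).sum < 1) : x l.prod ≤ 1 / 64 := by
  set p := escapeWeight (conjSup x (3 / 64)) c N with hp
  have hp0 : ∀ g, 0 ≤ p g := escapeWeight_nonneg _ _ _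
  have hV0 : (0 : ℝ) < V.card := by
    have : (1 : G) ∈ V := (hV 1).2 (by rw [map_one_eq_zero]; norm_num)
    exact_mod_cast Finset.card_pos.2 ⟨1, this⟩
  have hstep : ∀ R : ℝ, 0 < R → 2 * R ≤ 1 → (∀ l : List G, (l.map p).sum < R → x l.prod ≤ 1 / 64) →
      ∀ l : List G, (l.map p).sum < 2 * R → x l.prod ≤ 1 / 64 := by
    intro R hR0 hR1 hB l hl
    have hω0 : ∀ g, 0 ≤ min 1 (p g / R) := fun g => le_min zero_le_one (div_nonneg (hp0 g) hR0.le)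
    have hωi : ∀ g, min 1 (p g⁻¹ / R) = min 1 (p g / R) := fun g => by rw [hp, escapeWeight_inv]
    set lam := wordSeminorm (fun g => min 1 (p g / R)) hω0 hωi with hlam
    have hball : ∀ w, lam w < 1 → x w ≤ 1 / 64 := by
      intro w hw
      obtain ⟨l', rfl, hl'⟩ := exists_list_of_wordSeminorm_lt _ hω0 hωi hw
      refine hB l' ?_
      have h1 : (l'.map fun g => min 1 (p g / R)) = l'.map fun g => p g / R := by
        refine List.map_congr_left fun g hg => ?_
        have h2 := List.map_le_sum _ hω0 hg
        have h3 : min 1 (p g / R) < 1 := h2.trans_lt hl'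
        rcases min_lt_iff.1 h3 with h | h
        · exact absurd h (lt_irrefl _)
        · exact min_eq_right h.le
      rw [h1] at hl'
      have h4 : (l'.map fun g => p g / R).sum = (l'.map p).sum / R := by
        simp only [div_eq_mul_inv]
        rw [List.sum_map_mul_right]
      rw [h4, div_lt_one hR0] at hl'
      exact hl'
    refine hM _ fun i hi => ?_
    have hesc : ∃ w s, lam w < 1 ∧ x s ≤ 2 * (1 / 512) ∧
        (List.replicate i l).flatten.prod = w * s := by
      refine gleason_escape lam x (a := 1 / 512) (ε := c) (L := 2 * M) (by norm_num) F V ?_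
        (fun y hy => by have := (hV y).1 hy; linarith) (fun g => p g / R) hc0 ?_
        (List.replicate i l).flatten ?_ ?_
      · intro w s hw hs
        rw [hF]
        have := map_mul_le_add x w s
        have := hball w hw
        linarith
      · have h1 : 0 ≤ 12 * (M : ℝ) * c := by positivity
        have h2 := mul_le_mul_of_nonneg_left hD h1
        have h3 := mul_lt_mul_of_pos_right hc hV0
        nlinarith
      · intro g hg
        have hgl : g ∈ l := by
          obtain ⟨l', hl', hgl'⟩ := List.mem_flatten.1 hg
          rw [List.eq_of_mem_replicate hl'] at hgl'
          exact hgl'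
        have h1 : p g < 1 := ((List.map_le_sum p hp0 hgl).trans_lt hl).trans_le hR1
        obtain ⟨n, hn0, hn1, hn⟩ := exists_of_escapeWeight_lt_one h1
        refine ⟨(wordSeminorm_le _ hω0 hωi g).trans (min_le_right _ _), n, hn0, ?_, ?_⟩
        · rw [← mul_div_assoc, hn1, le_div_iff₀ hR0]; linarith
        · intro j hj y hy
          exact (le_conjSup x (by have := (hF y).1 hy; linarith) _).trans (hn j hj)
      · have h4 : ((List.replicate i l).flatten.map fun g => p g / R).sum =
            i * (l.map p).sum / R := by
          rw [← List.sum_map_flatten_replicate]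
          simp only [div_eq_mul_inv]
          rw [List.sum_map_mul_right]
        rw [h4, div_le_iff₀ hR0]
        have h5 : (i : ℝ) ≤ M := by exact_mod_cast hi
        have h6 : 0 ≤ (l.map p).sum := List.sum_nonneg (by simp; simp [hp0])
        nlinarith [mul_le_mul h5 hl.le h6 (by positivity)]
    obtain ⟨w, s, hw, hs, hws⟩ := hesc
    have h5 : (List.replicate i l).flatten.prod = l.prod ^ i := by simp [List.prod_flatten]
    rw [← h5, hws]
    have := map_mul_le_add x w s
    have := hball w hw
    linarith
  have hall : ∀ j k : ℕ, N ≤ 2 ^ (j + k) → ∀ l : List G, (l.map p).sum < 1 / 2 ^ k →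
      x l.prod ≤ 1 / 64 := by
    intro j
    induction j with
    | zero =>
      intro k hk l hl
      cases l with
      | nil => simp [map_one_eq_zero]
      | cons g l =>
        exfalso
        have h1 := List.map_le_sum p hp0 (List.mem_cons_self (a := g) (l := l))
        have h2 : 1 / (N : ℝ) ≤ p g := one_div_le_escapeWeight _ _ hN g
        have h3 : (1 : ℝ) / 2 ^ k ≤ 1 / N := by
          refine one_div_le_one_div_of_le (by exact_mod_cast hN) ?_
          have : N ≤ 2 ^ k := by simpa using hk
          exact_mod_cast this
        linarith
    | succ j ih =>
      intro k hk l hl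
      have h2 : (2 : ℝ) * (1 / 2 ^ (k + 1)) = 1 / 2 ^ k := by rw [pow_succ]; field_simp
      refine hstep (1 / 2 ^ (k + 1)) (by positivity) ?_ (ih (k + 1) ?_) l (by rw [h2]; exact hl)
      · rw [h2]
        exact div_le_one_of_le₀ (one_le_pow₀ (by norm_num)) (by positivity)
      · rw [show j + (k + 1) = j + 1 + k by ring]; exact hk
  exact hall N 0 (by simpa using Nat.lt_two_pow_self.le) l (by simpa using hl)

/-- The trapping property is inherited by conjugates. -/
theorem conj_mem_powSmall {x : GroupSeminorm G} {c : ℝ} {M m l : ℕ} (hc0 : 0 ≤ c)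
    (hM : IsTrapping x c M) {g y : G} (hg : ∀ i ≤ m * M, x (y⁻¹ * g ^ i * y) ≤ 1 / 16)
    (hl : l ≤ m) : y⁻¹ * g * y ∈ powSmall (conjSup x (3 / 64)) c l := by
  intro i hi
  refine conjSup_le x hc0 fun z hz => hM _ fun j hj => ?_
  have h1 : (z⁻¹ * (y⁻¹ * g * y) ^ i * z) ^ j = z⁻¹ * (y⁻¹ * g ^ (i * j) * y) * z := by
    have e1 : ∀ (u v : G) (n : ℕ), (u⁻¹ * v * u) ^ n = u⁻¹ * v ^ n * u := fun u v n => by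
      simpa using conj_pow (i := n) (a := u⁻¹) (b := v)
    rw [e1, e1, e1, pow_mul]
  rw [h1]
  have h2 := conj_le_add (x := x) z (y⁻¹ * g ^ (i * j) * y)
  have h3 := hg (i * j) (Nat.mul_le_mul (hi.trans hl) hj)
  linarith

/-- Commutators of elements of high escape rank have even higher escape rank. -/
theorem commutator_mem_powSmall {x : GroupSeminorm G} {F V : Finset G} {D c : ℝ} {M₁ M₂ m l : ℕ}
    (hc0 : 0 ≤ c) (hc1 : c ≤ 1 / 64) (hF : ∀ g, g ∈ F ↔ x g ≤ 1 / 32)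
    (hV : ∀ g, g ∈ V ↔ x g ≤ 1 / 1024)
    (hD : (F.card : ℝ) ≤ D * V.card) (hM₁ : IsTrapping x (1 / 64) M₁)
    (hc : 12 * D * M₁ * c < 1 / 512) (hM₂0 : 0 < M₂) (hM₂ : IsTrapping x c M₂)
    (hm : 32 * D * M₂ ^ 3 < m) (hm1 : 1 ≤ m) (hl1 : 1 ≤ l) {g h : G}
    (hg : g ∈ powSmall (conjSup x (3 / 64)) c m) (hh : h ∈ powSmall (conjSup x (3 / 64)) c l) :
    ⁅g⁻¹, h⁻¹⁆ ∈ powSmall (conjSup x (3 / 64)) c (2 * l) := by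
  set N := max m l with hNdef
  have hN : 1 ≤ N := hm1.trans (le_max_left _ _)
  set p := escapeWeight (conjSup x (3 / 64)) c N with hp
  have hp0 : ∀ g, 0 ≤ p g := escapeWeight_nonneg _ _ _
  have hpi : ∀ g, p g⁻¹ = p g := escapeWeight_inv _ _ _
  set lam := wordSeminorm p hp0 hpi with hlam
  have hball : ∀ w, lam w < 1 → x w ≤ 1 / 64 := by
    intro w hw
    obtain ⟨l', rfl, hl'⟩ := exists_list_of_wordSeminorm_lt _ hp0 hpi hw
    exact le_of_sum_escapeWeight_lt_one hc0 hF hV hD hM₁ hc hN l' hl'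
  have hsupp : ∀ y, plateau lam x (1 / 512) y ≠ 0 → x y ≤ 1 / 32 := by
    intro y hy
    obtain ⟨w, s, hw, hs, rfl⟩ := exists_of_plateau_ne_zero lam x hy
    have := map_mul_le_add x w s
    have := hball w hw
    linarith
  have hV0 : (0 : ℝ) < V.card := by
    have : (1 : G) ∈ V := (hV 1).2 (by rw [map_one_eq_zero]; norm_num)
    exact_mod_cast Finset.card_pos.2 ⟨1, this⟩
  have hMr : (1 : ℝ) ≤ M₂ := by exact_mod_cast hM₂0
  have hlamconj : ∀ n, 1 ≤ n → n ≤ N → ∀ u ∈ powSmall (conjSup x (3 / 64)) c n, ∀ y, x y ≤ 3 / 64 →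
      lam (y⁻¹ * u * y) ≤ 2 * M₂ / n := by
    intro n hn1 hnN u hu y hy
    have hn0 : (1 : ℝ) ≤ n := by exact_mod_cast hn1
    refine (wordSeminorm_le _ hp0 hpi _).trans ?_
    rcases lt_or_ge n M₂ with h | h
    · refine (escapeWeight_le_one _ _ _ _).trans ?_
      have : (n : ℝ) ≤ M₂ := by exact_mod_cast h.le
      rw [le_div_iff₀ (by positivity)]; linarith
    · have hq : 1 ≤ n / M₂ := (Nat.one_le_div_iff hM₂0).2 h
      have hmem : y⁻¹ * u * y ∈ powSmall (conjSup x (3 / 64)) c (n / M₂) := by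
        refine conj_mem_powSmall hc0 hM₂ (m := n / M₂) (fun i hi => ?_) le_rfl
        have := (le_conjSup x hy (u ^ i)).trans (hu i (hi.trans (Nat.div_mul_le_self _ _)))
        linarith
      refine (escapeWeight_le _ _ hq ((Nat.div_le_self _ _).trans hnN) hmem).trans ?_
      have hq0 : (1 : ℝ) ≤ (n / M₂ : ℕ) := by exact_mod_cast hq
      rw [div_le_div_iff₀ (by positivity) (by positivity)]
      have h1 : n ≤ (n / M₂ + 1) * M₂ := by
        have := Nat.lt_div_mul_add hM₂0 (a := n)
        rw [add_mul]; omega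
      have h2 : (n : ℝ) ≤ ((n / M₂ : ℕ) + 1) * M₂ := by exact_mod_cast h1
      nlinarith
  have hgW : ∀ n, 1 ≤ n → ∀ u ∈ powSmall (conjSup x (3 / 64)) c n, x u ≤ 1 / 64 := by
    intro n hn u hu
    have h1 := hu 1 hn
    rw [pow_one] at h1
    exact (self_le_conjSup x (by norm_num) u).trans (h1.trans hc1)
  have hgx := hgW m hm1 g hg
  have hhx := hgW l hl1 h hh
  have hm0 : (1 : ℝ) ≤ m := by exact_mod_cast hm1
  have hl0 : (1 : ℝ) ≤ l := by exact_mod_cast hl1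
  set ψ := convOn F (plateau lam x (1 / 512)) (plateau lam x (1 / 512)) with hψ
  set k := ⁅g⁻¹, h⁻¹⁆ with hk
  have hderiv : ∀ z, |ψ (k⁻¹ * z) - ψ z| ≤ 4 * F.card * (2 * M₂ / m * (2 * M₂ / l)) := by
    have hmN : m ≤ N := le_max_left _ _
    have hlN : l ≤ N := le_max_right _ _
    refine convOn_commutator_deriv_le lam x (1 / 512) F (fun y hy => (hF y).2 (hsupp y hy)) g h
      (fun y hy => ?_) (fun y hy => ?_) ?_ ?_
    · have h1 := (hF y).1 hy
      have h2 := map_mul_le_add x h y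
      exact ⟨hlamconj m hm1 hmN g hg y (by linarith), hlamconj m hm1 hmN g hg _ (by linarith)⟩
    · have h1 := (hF y).1 hy
      have h2 := map_mul_le_add x g y
      exact ⟨hlamconj l hl1 hlN h hh y (by linarith), hlamconj l hl1 hlN h hh _ (by linarith)⟩
    · simpa using hlamconj m hm1 hmN g hg 1 (by rw [map_one_eq_zero]; norm_num)
    · simpa using hlamconj l hl1 hlN h hh 1 (by rw [map_one_eq_zero]; norm_num)
  have hψ1 : (V.card : ℝ) ≤ ψ 1 := by
    have hVF : V ⊆ F := fun y hy => (hF y).2 (by have := (hV y).1 hy; linarith)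
    calc (V.card : ℝ) = ∑ y ∈ V, (1 : ℝ) := by simp
      _ ≤ ∑ y ∈ V, plateau lam x (1 / 512) y * plateau lam x (1 / 512) (y⁻¹ * 1) := by
        refine Finset.sum_le_sum fun y hy => ?_
        have h1 := (hV y).1 hy
        rw [plateau_eq_one lam x (by linarith), plateau_eq_one lam x
          (by rw [mul_one, map_inv_eq_map]; linarith), one_mul]
      _ ≤ ψ 1 := Finset.sum_le_sum_of_subset_of_nonneg hVF fun y _ _ =>
        mul_nonneg (plateau_nonneg _ _ _ _) (plateau_nonneg _ _ _ _)
  have hpow : ∀ i ≤ 2 * l * M₂, x (k ^ i) ≤ 1 / 16 := by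
    intro i hi
    have h1 := abs_prod_translate_sub_le ψ (fun _ => 1)
      (4 * F.card * (2 * M₂ / m * (2 * M₂ / l))) (List.replicate i k)
      (fun u hu z => by rw [List.eq_of_mem_replicate hu, mul_one]; exact hderiv z) 1
    rw [List.prod_replicate, List.map_replicate, List.sum_replicate, nsmul_eq_mul, mul_one,
      mul_one] at h1
    have h2 : (4 * F.card * (2 * M₂ / m * (2 * M₂ / l))) * (i : ℝ) < V.card := by
      have h3 : (i : ℝ) ≤ 2 * l * M₂ := by exact_mod_cast hi
      calc (4 * F.card * (2 * M₂ / m * (2 * M₂ / l))) * (i : ℝ)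
          ≤ (4 * F.card * (2 * M₂ / m * (2 * M₂ / l))) * (2 * l * M₂) := by gcongr
        _ = F.card * (32 * M₂ ^ 3) / m := by field_simp; ring
        _ ≤ (D * V.card) * (32 * M₂ ^ 3) / m := by gcongr
        _ < V.card := by
          rw [div_lt_iff₀ (by positivity)]
          nlinarith
    have h4 : ψ (k ^ i)⁻¹ ≠ 0 := by
      have := (abs_le.1 h1).1
      intro h0
      rw [h0] at this
      linarith
    obtain ⟨y, hy1, hy2⟩ := exists_of_convOn_ne_zero h4
    have h5 := map_mul_le_add x y (y⁻¹ * (k ^ i)⁻¹)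
    have h6 := hsupp _ hy1
    have h7 := hsupp _ hy2
    rw [mul_inv_cancel_left, map_inv_eq_map] at h5
    linarith
  have := conj_mem_powSmall (x := x) (g := k) (y := 1) hc0 hM₂ (m := 2 * l)
    (fun i hi => by simpa using hpow i hi) le_rfl
  simpa using this

/-- In the presence of trapping, elements of high escape rank generate a virtually nilpotent
group. -/
theorem isVirtuallyNilpotent_closure_powSmall {x : GroupSeminorm G} {F V : Finset G} {D c : ℝ}
    {M₁ M₂ m : ℕ} (hfin : {g | x g ≤ 1 / 2}.Finite)
    (hc0 : 0 ≤ c) (hc1 : c ≤ 1 / 64) (hF : ∀ g, g ∈ F ↔ x g ≤ 1 / 32)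
    (hV : ∀ g, g ∈ V ↔ x g ≤ 1 / 1024)
    (hD : (F.card : ℝ) ≤ D * V.card) (hM₁ : IsTrapping x (1 / 64) M₁)
    (hc : 12 * D * M₁ * c < 1 / 512) (hM₂0 : 0 < M₂) (hM₂ : IsTrapping x c M₂)
    (hm : 32 * D * M₂ ^ 3 < m) (hm1 : 1 ≤ m) :
    IsVirtuallyNilpotent (Subgroup.closure (powSmall (conjSup x (3 / 64)) c m)) := by
  set Q := powSmall (conjSup x (3 / 64)) c with hQ
  have hself : ∀ g, x g ≤ conjSup x (3 / 64) g := self_le_conjSup x (by norm_num)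
  -- products of elements with all powers small have all powers small
  have hmul : ∀ g h, (∀ l, g ∈ Q l) → (∀ l, h ∈ Q l) → ∀ l, g * h ∈ Q l := by
    intro g h hg hh l
    have hpow : ∀ i, x ((g * h) ^ i) ≤ 1 / 64 := by
      intro i
      set N := 2 * i + 1 with hN
      have h1 := le_of_sum_escapeWeight_lt_one hc0 hF hV hD hM₁ hc (N := N) (by omega)
        (List.replicate i [g, h]).flatten (by
          rw [List.sum_map_flatten_replicate]
          have e1 := escapeWeight_le (conjSup x (3 / 64)) c (N := N) (m := N) (by omega) le_rfl (hg N)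
          have e2 := escapeWeight_le (conjSup x (3 / 64)) c (N := N) (m := N) (by omega) le_rfl (hh N)
          have e3 : (0 : ℝ) < N := by rw [hN]; positivity
          have e4 : (N : ℝ) = 2 * i + 1 := by rw [hN]; push_cast; ring
          simp only [List.map_cons, List.map_nil, List.sum_cons, List.sum_nil, add_zero]
          calc _ ≤ (i : ℝ) * (1 / N + 1 / N) := by gcongr
            _ < 1 := by
              rw [← add_div, ← mul_div_assoc, div_lt_one e3, e4]; linarith)
      simpa [List.prod_flatten] using h1
    have := conj_mem_powSmall (x := x) (g := g * h) (y := 1) hc0 hM₂ (m := l)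
      (fun i hi => by have := hpow i; simp; linarith) le_rfl
    simpa using this
  let H : Subgroup G :=
    { carrier := {g | ∀ l, g ∈ Q l}
      one_mem' := fun l => one_mem_powSmall _ hc0 l
      mul_mem' := fun {g h} hg hh => hmul g h hg hh
      inv_mem' := fun {g} hg l => inv_mem_powSmall (hg l) }
  have hHmem : ∀ g, g ∈ H ↔ ∀ l, g ∈ Q l := fun g => Iff.rfl
  have hHfin : Finite H := by
    refine (hfin.subset ?_ : (H : Set G).Finite)
    intro g hg
    have := hg 1 1 le_rfl
    rw [pow_one] at this
    have := hself g
    show x g ≤ 1 / 2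
    linarith
  have hcomm : ∀ l, 1 ≤ l → ∀ g ∈ Q l, ∀ t ∈ Q m, ⁅g, t⁆ ∈ Q (2 * l) := by
    intro l hl g hg t ht
    have := commutator_mem_powSmall hc0 hc1 hF hV hD hM₁ hc hM₂0 hM₂ hm hm1 hl
      (inv_mem_powSmall ht) (inv_mem_powSmall hg)
    rw [inv_inv, inv_inv] at this
    rw [← commutatorElement_inv]
    exact inv_mem_powSmall this
  set K := hfin.toFinset.card with hK
  have hstab : ∀ l, K ≤ l → ∀ g ∈ Q l, g ∈ H := by
    intro l hl g hg
    have hmaps : ∀ i ∈ Finset.range (l + 1), g ^ i ∈ hfin.toFinset := by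
      intro i hi
      rw [Set.Finite.mem_toFinset]
      have h1 := hg i (Nat.lt_succ_iff.1 (Finset.mem_range.1 hi))
      have h2 := hself (g ^ i)
      show x (g ^ i) ≤ 1 / 2
      linarith
    obtain ⟨i, hi, j, hj, hij, he⟩ := Finset.exists_ne_map_eq_of_card_lt_of_maps_to
      (by rw [Finset.card_range]; omega) hmaps
    have hord : ∃ n, 0 < n ∧ n ≤ l ∧ g ^ n = 1 := by
      rw [Finset.mem_range] at hi hj
      rcases lt_or_gt_of_ne hij with h | h
      · exact ⟨j - i, by omega, by omega, by rw [pow_sub g h.le, he, mul_inv_cancel]⟩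
      · exact ⟨i - j, by omega, by omega, by rw [pow_sub g h.le, he, mul_inv_cancel]⟩
    obtain ⟨n, hn0, hnl, hn⟩ := hord
    intro l' i _
    rw [← Nat.div_add_mod i n, pow_add, pow_mul, hn, one_pow, one_mul]
    exact hg _ ((Nat.mod_lt i hn0).le.trans hnl)
  refine isVirtuallyNilpotent_of_iterated_commutators (Q m) (fun k => Q (2 ^ k * m)) K
    (by simp) H ?_ (fun t ht => inv_mem_powSmall ht) ?_ ?_ ?_
  · intro g hg
    refine hstab _ ?_ g hg
    exact Nat.lt_two_pow_self.le.trans (Nat.le_mul_of_pos_right _ hm1)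
  · intro k g hg t ht
    have := hcomm (2 ^ k * m) (Nat.mul_pos (by positivity) hm1) g hg t ht
    rwa [← mul_assoc, ← pow_succ'] at this
  · intro t ht h hh
    have h1 : t * h * t⁻¹ = ⁅h, t⁆⁻¹ * h := by
      rw [commutatorElement_inv, commutatorElement_def]; group
    rw [h1]
    refine H.mul_mem (H.inv_mem ?_) hh
    intro l
    have := hcomm (l + 1) (by omega) h (hh (l + 1)) t ht
    exact powSmall_anti _ _ (by omega) this
  · intro g hg
    exact Subgroup.subset_closure (hg m)

end NoSmallSubgroups

section MargulisConstant

theorem GroupSeminorm.pow_le {G : Type*} [Group G] (σ : GroupSeminorm G) (g : G) (i : ℕ) :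
    σ (g ^ i) ≤ i * σ g := by
  induction i with
  | zero => simp [map_one_eq_zero]
  | succ i ih =>
    have := map_mul_le_add σ (g ^ i) g
    rw [pow_succ]; push_cast; linarith

universe u

/-- The Margulis lemma for groups with a length function whose balls are uniformly coverable. -/
theorem exists_margulis_constant (C : ℝ → ℕ) : ∃ ε : ℝ, 0 < ε ∧
    ∀ (G : Type u) [Group G] (ℓ : GroupSeminorm G), (∀ R, {g | ℓ g ≤ R}.Finite) →
      IsColored ℓ ℓ 20 C → ∀ r, 0 ≤ r → r < ε →
        IsVirtuallyNilpotent (Subgroup.closure {g | ℓ g ≤ r}) := by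
  by_contra! hcon
  choose G inst ℓ hfin hcol r hr0 hr hbad using fun n : ℕ => hcon (1 / (n + 1)) (by positivity)
  obtain ⟨K, hK, htrap⟩ := exists_trapping_seminorm.{u} C
  obtain ⟨Mf, hMf⟩ := htrap G ℓ hfin hcol
  set δ : ℝ := 1 / (1024 * K) with hδ
  have hδ0 : 0 < δ := by positivity
  set D : ℕ := C (δ / 3) ^ C (δ / 3) with hD
  set M₁ : ℕ := Mf (1 / 64) with hM₁
  set c : ℝ := 1 / (512 * (12 * D * M₁) + 512) with hc
  have hc0 : 0 < c := by positivity
  have hc1 : c ≤ 1 / 64 := one_div_le_one_div_of_le (by norm_num)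
    (by linarith [show (0 : ℝ) ≤ 512 * (12 * D * M₁) by positivity])
  have hc2 : 12 * D * M₁ * c < 1 / 512 := by
    rw [hc, mul_one_div, div_lt_div_iff₀ (by positivity) (by norm_num)]
    linarith
  set M₂ : ℕ := Mf c + 1 with hM₂
  obtain ⟨m, hm⟩ := exists_nat_gt (32 * (D : ℝ) * M₂ ^ 3)
  have hm1 : 1 ≤ m := by
    have : (0 : ℝ) < m := lt_of_le_of_lt (by positivity) hm
    exact_mod_cast this
  set ε : ℝ := c / (K * m) with hε
  have hm0 : (0 : ℝ) < m := by exact_mod_cast hm1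
  have hε0 : 0 < ε := by positivity
  set B : ℕ := C (ε / 3) ^ C (ε / 3) with hB
  have hlarge : ∀ᶠ n in (hyperfilter ℕ : Filter ℕ), B ≤ n :=
    Nat.hyperfilter_le_atTop (eventually_ge_atTop B)
  obtain ⟨n, ⟨x, hx1, hx2, hx3⟩, hn⟩ := ((hMf {1 / 64, c} (by
    intro η hη
    rw [Finset.mem_insert, Finset.mem_singleton] at hη
    rcases hη with rfl | rfl
    · norm_num
    · exact hc0)).and hlarge).exists
  have hxfin : {g | x g ≤ 1 / 2}.Finite := (hfin n (1 / 4)).subset fun g hg => hx1 g hg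
  have hsub : ∀ t : ℝ, t ≤ 1 / 2 → {g | x g ≤ t}.Finite := fun t ht =>
    hxfin.subset fun g (hg : x g ≤ t) => hg.trans ht
  set F := (hsub (1 / 32) (by norm_num)).toFinset with hFdef
  set V := (hsub (1 / 1024) (by norm_num)).toFinset with hVdef
  have hF : ∀ g, g ∈ F ↔ x g ≤ 1 / 32 := fun g => by rw [hFdef, Set.Finite.mem_toFinset]; rfl
  have hV : ∀ g, g ∈ V ↔ x g ≤ 1 / 1024 := fun g => by rw [hVdef, Set.Finite.mem_toFinset]; rfl
  have hFV : (F.card : ℝ) ≤ (D : ℝ) * V.card := by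
    refine ((hcol n).conjSup (ρ := 7) (S := 13) (by norm_num) (by norm_num)).card_le hδ0 F V
      (fun g hg => ?_) fun g hg => ?_
    · have h1 := (hF g).1 hg
      have := hx1 g (by linarith)
      linarith
    · rw [hV]
      refine (hx2 g).trans ?_
      calc K * conjSup (ℓ n) 7 g ≤ K * δ := by gcongr
        _ = 1 / 1024 := by rw [hδ]; field_simp
  have hvn := isVirtuallyNilpotent_closure_powSmall hxfin hc0.le hc1 hF hV hFV
    (M₁ := M₁) (fun g hg => hx3 _ (by simp) g hg) hc2 (M₂ := M₂) (by omega)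
    (fun g hg => hx3 c (by simp) g fun i hi => hg i (by omega)) hm hm1
  refine hbad n (isVirtuallyNilpotent_closure_of_card_cosets _ hvn _ {g | ℓ n g ≤ 12}
    (by show ℓ n 1 ≤ r n; rw [map_one_eq_zero]; exact hr0 n) B ?_ ?_ ?_)
  · intro j hj z hz
    obtain ⟨l, hl, hlE, rfl⟩ := Set.exists_list_of_mem_pow hz
    have h1 : ∀ l : List (G n), (∀ g ∈ l, ℓ n g ≤ r n) → ℓ n l.prod ≤ l.length * r n := by
      intro l
      induction l with
      | nil => simp [map_one_eq_zero]
      | cons g l ih =>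
        intro h
        rw [List.prod_cons, List.length_cons]
        have h1 := map_mul_le_add (ℓ n) g l.prod
        have h2 := h g (by simp)
        have h3 := ih fun g' hg' => h g' (by simp [hg'])
        push_cast; linarith
    have h2 := h1 l hlE
    have h3 : (l.length : ℝ) ≤ n := by rw [hl]; exact_mod_cast hj.trans hn
    show ℓ n l.prod ≤ 12
    have h4 : (l.length : ℝ) * r n ≤ n * (1 / (n + 1)) :=
      mul_le_mul h3 (hr n).le (hr0 n) (by positivity)
    have h5 : (n : ℝ) * (1 / (n + 1)) ≤ 1 := by
      rw [mul_one_div, div_le_one (by positivity)]; linarith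
    linarith
  all_goals
    have hN : ∀ g, conjSup (ℓ n) 8 g ≤ ε →
        g ∈ Subgroup.closure (powSmall (conjSup x (3 / 64)) c m) := by
      intro g hg
      refine Subgroup.subset_closure fun i hi => ?_
      have h1 : conjSup x (3 / 64) g ≤ K * ε := by
        refine conjSup_le x (by positivity) fun y hy => (hx2 _).trans ?_
        have h2 : ℓ n y ≤ 1 := (hx1 y (by linarith)).trans (by norm_num)
        have h3 := conjSup_conj_le (ℓ n) h2 (show (7 : ℝ) + 1 ≤ 8 by norm_num) g
        exact mul_le_mul_of_nonneg_left (h3.trans hg) hK.le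
      have h4 : (i : ℝ) ≤ m := by exact_mod_cast hi
      calc conjSup x (3 / 64) (g ^ i) ≤ i * conjSup x (3 / 64) g := GroupSeminorm.pow_le _ _ _
        _ ≤ m * (K * ε) := mul_le_mul h4 h1 (apply_nonneg _ _) hm0.le
        _ = c := by rw [hε]; field_simp
    have := ((hcol n).conjSup (ρ := 8) (S := 12) (by norm_num) (by norm_num)).ncard_cosets_le
      hε0 _ hN {g | ℓ n g ≤ 12} fun g hg => hg
  · exact this.1
  · exact this.2

end MargulisConstant

section PackedSpaces

universe u

variable {X : Type u} [MetricSpace X]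

/-- In a GCB-space, packing at some scale implies packing at all smaller scales. -/
theorem IsPacked.of_le {σ : X → X → ℝ → X} (hσ : IsGCB σ) {P₀ r₀ s : ℝ} (h : IsPacked X P₀ r₀)
    (hs : 0 < s) (hsr : s ≤ r₀) : IsPacked X P₀ s := by
  classical
  intro z S hS hsep
  set μ : ℝ := r₀ / s with hμ
  have hμ1 : 1 ≤ μ := (one_le_div hs).2 hsr
  have hμ0 : 0 < μ := by linarith
  have hex : ∀ y, ∃ w, dist z w = μ * dist z y ∧ σ z w (1 / μ) = y := by
    intro y
    obtain ⟨γ, hγ, hγσ, hy⟩ := hσ.geodComplete z y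
    have h0 : γ 0 = z := by
      have := hy 0 (by simp)
      rw [hσ.source, zero_mul] at this
      exact this.symm
    have h1 : γ (dist z y) = y := by
      have := hy 1 (by simp)
      rw [hσ.target, one_mul] at this
      exact this.symm
    refine ⟨γ (μ * dist z y), ?_, ?_⟩
    · nth_rewrite 1 [← h0]
      rw [hγ.dist_eq, Real.dist_eq, zero_sub, abs_neg, abs_of_nonneg (by positivity)]
    · have := hγσ 0 (μ * dist z y) (by positivity) (1 / μ)
        ⟨by positivity, (div_le_one hμ0).2 hμ1⟩
      rw [h0] at this
      rw [this, show 0 + 1 / μ * (μ * dist z y - 0) = dist z y by field_simp; ring, h1]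
  choose f hf1 hf2 using hex
  have hdist : ∀ y y', μ * dist y y' ≤ dist (f y) (f y') := by
    intro y y'
    have hconv := (hσ.convex z (f y) z (f y')).2
    have hc := hconv (x := 0) (y := 1) (by simp) (by simp)
      (a := 1 - 1 / μ) (b := 1 / μ) (by rw [sub_nonneg]; exact (div_le_one hμ0).2 hμ1)
      (by positivity) (by ring)
    simp only [smul_eq_mul, mul_zero, zero_add, mul_one, hf2, hσ.source, hσ.target, dist_self]
      at hc
    rw [div_mul_eq_mul_div, one_mul, le_div_iff₀ hμ0] at hc
    linarith
  have hμs : μ * s = r₀ := div_mul_cancel₀ _ hs.ne'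
  have hinj : Function.Injective f := by
    intro y y' he
    have := hdist y y'
    rw [he, dist_self] at this
    have h2 : dist y y' ≤ 0 := by
      by_contra! hlt
      have := mul_pos hμ0 hlt
      linarith
    exact dist_le_zero.1 h2
  rw [← Finset.card_image_of_injective S hinj]
  refine h z _ ?_ ?_
  · intro w hw
    obtain ⟨y, hy, rfl⟩ := Finset.mem_image.1 (Finset.mem_coe.1 hw)
    have hy' : dist y z ≤ 3 * s := hS hy
    rw [mem_closedBall, dist_comm, hf1, dist_comm]
    calc μ * dist y z ≤ μ * (3 * s) := by gcongr
      _ = 3 * r₀ := by rw [← hμs]; ring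
  · intro a ha b hb hab
    obtain ⟨y, hy, rfl⟩ := Finset.mem_image.1 ha
    obtain ⟨y', hy', rfl⟩ := Finset.mem_image.1 hb
    have h1 := hsep y hy y' hy' fun he => hab (by rw [he])
    have h2 := mul_lt_mul_of_pos_left h1 hμ0
    have h3 := hdist y y'
    have h4 : μ * (2 * s) = 2 * r₀ := by rw [← hμs]; ring
    linarith

/-- Balls in a packed space are covered by boundedly many smaller balls. -/
theorem IsPacked.exists_cover {P₀ s : ℝ} (h : IsPacked X P₀ s) (z : X) :
    ∃ T : Finset X, T.card ≤ ⌊P₀⌋₊ ∧ ∀ y ∈ closedBall z (3 * s), ∃ t ∈ T, dist t y ≤ 2 * s := by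
  classical
  let good : ℕ → Prop := fun n => ∃ S : Finset X, ((↑S : Set X) ⊆ closedBall z (3 * s)) ∧
    (∀ a ∈ S, ∀ b ∈ S, a ≠ b → 2 * s < dist a b) ∧ S.card = n
  have hbd : ∀ n, good n → n ≤ ⌊P₀⌋₊ := by
    rintro n ⟨S, h1, h2, rfl⟩
    exact Nat.le_floor (h z S h1 h2)
  have h0 : good 0 := ⟨∅, by simp, by simp, rfl⟩
  obtain ⟨S, h1, h2, h3⟩ : good (Nat.findGreatest good ⌊P₀⌋₊) :=
    Nat.findGreatest_spec (Nat.zero_le _) h0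
  refine ⟨S, h3.le.trans (Nat.findGreatest_le _), fun y hy => ?_⟩
  by_contra! hcon
  by_cases hyS : y ∈ S
  · have h4 := hcon y hyS
    rw [dist_self] at h4
    have h5 : dist y z ≤ 3 * s := hy
    linarith [dist_nonneg (x := y) (y := z)]
  · have hgood : good (S.card + 1) := by
      refine ⟨insert y S, ?_, ?_, Finset.card_insert_of_notMem hyS⟩
      · rw [Finset.coe_insert]
        exact Set.insert_subset hy h1
      · intro a ha b hb hab
        rcases Finset.mem_insert.1 ha with rfl | ha' <;>
          rcases Finset.mem_insert.1 hb with rfl | hb'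
        · exact absurd rfl hab
        · rw [dist_comm]; exact hcon b hb'
        · exact hcon a ha'
        · exact h2 a ha' b hb' hab
    have := Nat.le_findGreatest (hbd _ hgood) hgood
    omega

/-- In a packed GCB-space, balls are covered by boundedly many balls of any smaller radius. -/
theorem IsPacked.exists_cover_pow {σ : X → X → ℝ → X} (hσ : IsGCB σ) {P₀ r₀ : ℝ} (hr₀ : 0 < r₀)
    (h : IsPacked X P₀ r₀) (z : X) (j : ℕ) : ∃ T : Finset X, T.card ≤ ⌊P₀⌋₊ ^ j ∧
      ∀ y ∈ closedBall z (3 * r₀), ∃ t ∈ T, dist t y ≤ 3 * (r₀ * (2 / 3) ^ j) := by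
  classical
  induction j with
  | zero =>
    refine ⟨{z}, by simp, fun y hy => ⟨z, by simp, ?_⟩⟩
    rw [mem_closedBall, dist_comm] at hy
    simpa using hy
  | succ j ih =>
    obtain ⟨T, hT, hcov⟩ := ih
    have hle : r₀ * (2 / 3) ^ j ≤ r₀ :=
      mul_le_of_le_one_right hr₀.le (pow_le_one₀ (by norm_num) (by norm_num))
    choose U hU1 hU2 using (h.of_le hσ (show 0 < r₀ * (2 / 3) ^ j by positivity) hle).exists_cover
    refine ⟨T.biUnion U, ?_, fun y hy => ?_⟩
    · refine (Finset.card_biUnion_le_card_mul T U _ fun t _ => hU1 t).trans ?_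
      rw [pow_succ]
      gcongr
    · obtain ⟨t, ht, hty⟩ := hcov y hy
      obtain ⟨t', ht', h'⟩ := hU2 t y (by rw [mem_closedBall, dist_comm]; exact hty)
      refine ⟨t', Finset.mem_biUnion.2 ⟨t, ht, ht'⟩, h'.trans_eq ?_⟩
      rw [pow_succ]; ring

/-- The rescaled displacement at `x`, as a length function on a group of isometries. -/
noncomputable def displacement (Γ : Subgroup (X ≃ᵢ X)) (x : X) (c : ℝ) (hc : 0 ≤ c) :
    GroupSeminorm Γ where
  toFun g := dist x (g.1 x) / c
  map_one' := by simp
  mul_le' g h := by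
    rw [← add_div]
    gcongr
    have h1 := dist_triangle x (g.1 x) (g.1 (h.1 x))
    rw [g.1.dist_eq] at h1
    exact h1
  inv' g := by
    have h1 := g.1.dist_eq x (g.1⁻¹ x)
    rw [IsometryEquiv.apply_inv_self] at h1
    show dist x (g.1⁻¹ x) / c = dist x (g.1 x) / c
    rw [← h1, dist_comm]

theorem displacement_apply (Γ : Subgroup (X ≃ᵢ X)) (x : X) (c : ℝ) (hc : 0 ≤ c) (g : Γ) :
    displacement Γ x c hc g = dist x (g.1 x) / c := rfl

/-- Displacement functions on packed GCB-spaces have uniformly coverable balls. -/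
theorem exists_isColored_displacement (P₀ r₀ : ℝ) (hr₀ : 0 < r₀) :
    ∃ C : ℝ → ℕ, ∀ (X : Type u) [MetricSpace X] (σ : X → X → ℝ → X), IsGCB σ → IsPacked X P₀ r₀ →
      ∀ (Γ : Subgroup (X ≃ᵢ X)) (x : X), IsColored (displacement Γ x (3 * r₀ / 20) (by positivity))
        (displacement Γ x (3 * r₀ / 20) (by positivity)) 20 C := by
  have hj : ∀ δ : ℝ, ∃ j : ℕ, 0 < δ → (2 / 3 : ℝ) ^ j < δ / 40 := by
    intro δ
    by_cases hδ : 0 < δ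
    · obtain ⟨j, hj⟩ := exists_pow_lt_of_lt_one (show 0 < δ / 40 by positivity)
        (show (2 / 3 : ℝ) < 1 by norm_num)
      exact ⟨j, fun _ => hj⟩
    · exact ⟨0, fun h => absurd h hδ⟩
  choose j hj using hj
  refine ⟨fun δ => ⌊P₀⌋₊ ^ j δ + 1, ?_⟩
  intro X _ σ hσ hP Γ x δ hδ
  classical
  obtain ⟨T, hT, hcov⟩ := hP.exists_cover_pow hσ hr₀ x (j δ)
  have hex : ∀ g : Γ, displacement Γ x (3 * r₀ / 20) (by positivity) g ≤ 20 →
      ∃ t : T, dist t.1 (g.1 x) ≤ 3 * (r₀ * (2 / 3) ^ j δ) := by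
    intro g hg
    rw [displacement_apply, div_le_iff₀ (by positivity)] at hg
    obtain ⟨t, ht, h⟩ := hcov (g.1 x) (by rw [mem_closedBall, dist_comm]; linarith)
    exact ⟨⟨t, ht⟩, h⟩
  refine ⟨fun g => if hg : displacement Γ x (3 * r₀ / 20) (by positivity) g ≤ 20 then
    Fin.castLE (hT.trans (Nat.le_succ _)) (T.equivFin (hex g hg).choose) else 0, ?_⟩
  intro g h hg hh he
  simp only [dif_pos hg, dif_pos hh] at he
  have he' : (hex g hg).choose = (hex h hh).choose :=
    T.equivFin.injective (Fin.castLE_injective _ he)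
  have h1 := (hex g hg).choose_spec
  have h2 := (hex h hh).choose_spec
  rw [he'] at h1
  rw [displacement_apply, div_le_iff₀ (by positivity)]
  have h3 : dist x ((g⁻¹ * h : Γ).1 x) = dist (g.1 x) (h.1 x) := by
    have := g.1.dist_eq x ((g⁻¹ * h : Γ).1 x)
    rw [← this]
    congr 1
    show g.1 (g.1⁻¹ (h.1 x)) = h.1 x
    rw [IsometryEquiv.apply_inv_self]
  rw [h3]
  have h4 := dist_triangle_left (g.1 x) (h.1 x) ((hex h hh).choose).1
  have h5 := mul_lt_mul_of_pos_left (hj δ hδ) hr₀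
  nlinarith

/-- The almost stabilizer is the image of a subgroup generated by short elements of `Γ`. -/
theorem almostStabilizer_eq_map (Γ : Subgroup (X ≃ᵢ X)) (x : X) {c : ℝ} (hc : 0 < c) (r : ℝ) :
    almostStabilizer Γ r x =
      (Subgroup.closure {g : Γ | displacement Γ x c hc.le g ≤ r / c}).map Γ.subtype := by
  rw [MonoidHom.map_closure, almostStabilizer]
  congr 1
  ext g
  simp only [Set.mem_ofPred_eq, Set.mem_image, displacement_apply, div_le_div_iff_of_pos_right hc,
    Subgroup.subtype_apply, Subtype.exists, exists_and_left, exists_prop, exists_eq_right_right]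
  tauto

end PackedSpaces

/-- **Corollary 2.7** (generalized Margulis lemma for packed GCB-spaces). -/
theorem generalized_margulis_lemma
    (P₀ r₀ : ℝ) (hP₀ : 0 < P₀) (hr₀ : 0 < r₀) :
    ∃ ε₀ : ℝ, 0 < ε₀ ∧
      ∀ (X : Type*) [MetricSpace X] [CompleteSpace X] (σ : X → X → ℝ → X),
        IsGCB σ → IsPacked X P₀ r₀ →
        ∀ Γ : Subgroup (X ≃ᵢ X), IsDiscreteSubgroup Γ →
          ∀ x : X, ∀ r : ℝ, 0 ≤ r → r < ε₀ →
            IsVirtuallyNilpotent ↥(almostStabilizer Γ r x) := by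
  obtain ⟨C, hC⟩ := exists_isColored_displacement P₀ r₀ hr₀
  obtain ⟨ε, hε, hmarg⟩ := exists_margulis_constant C
  have hc : 0 < 3 * r₀ / 20 := by positivity
  refine ⟨ε * (3 * r₀ / 20), by positivity, fun X _ _ σ hσ hP Γ hΓ x r hr0 hr => ?_⟩
  have hfin : ∀ R, {g | displacement Γ x (3 * r₀ / 20) hc.le g ≤ R}.Finite := by
    intro R
    refine Set.Finite.of_finite_image ((hΓ x (R * (3 * r₀ / 20))).subset ?_)
      (Subtype.val_injective.injOn (s := _))
    rintro _ ⟨g, hg, rfl⟩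
    exact ⟨g.2, (div_le_iff₀ hc).1 hg⟩
  have hvn := hmarg Γ (displacement Γ x (3 * r₀ / 20) hc.le) hfin (hC X σ hσ hP Γ x)
    (r / (3 * r₀ / 20)) (by positivity) ((div_lt_iff₀ hc).2 hr)
  rw [almostStabilizer_eq_map Γ x hc r]
  exact hvn.of_injective
    ((Subgroup.closure _).equivMapOfInjective Γ.subtype Γ.subtype_injective).symm.toMonoidHom
    (MulEquiv.injective _)
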